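/- arXiv:math/0010020 — 2 statements merged into one kernel-verified Lean document; each statement's English description precedes it below -/
import Mathlib

section
/- Every 3-vector of the rank-10 𝒪-lattice Λ = Λ′ ⊥ Λ″ ⊥ H_𝒪 is perpendicular to some primitive isotropic vector of Λ, and the group U(Λ) acts transitively on the set of pairs (r, n) where r is a 3-vector, n is a primitive isotropic vector, and ψ(r, n) = 0. In particular, U(Λ) acts transitively on the set of 3-vectors of Λ. -/
open Polynomial

noncomputable section

/-- The Eisenstein ring `𝒪 = ℤ[ω]`, where `ω = e^{2πi/6}` is a primitive sixth root of
unity (so `ω² - ω + 1 = 0`), presented as `ℤ[X]/(X² - X + 1)`. -/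
abbrev O : Type := AdjoinRoot (X ^ 2 - X + 1 : ℤ[X])

/-- `ω`, the distinguished primitive sixth root of unity in `𝒪`. -/
def ω : O := AdjoinRoot.root _

lemma ω_sq : ω ^ 2 - ω + 1 = 0 := by
  have h := AdjoinRoot.eval₂_root (X ^ 2 - X + 1 : ℤ[X])
  simpa [ω, eval₂_add, eval₂_sub, eval₂_pow, eval₂_X, eval₂_one] using h

/-- Complex conjugation on the Eisenstein ring: the ring involution with
`conj ω = 1 - ω = ω⁻¹`. -/
def conj : O →+* O :=
  AdjoinRoot.lift (algebraMap ℤ O) (1 - ω) (by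
    have h := ω_sq
    simp only [eval₂_add, eval₂_sub, eval₂_pow, eval₂_X, eval₂_one]
    ring_nf
    ring_nf at h
    linear_combination h)

/-- `θ := ω - ω⁻¹ = ω - conj ω = 2ω - 1`, a square root of `-3` in `𝒪`. -/
def θ : O := ω - conj ω

/-- The rank-10 𝒪-lattice `Λ = Λ′ ⊥ Λ″ ⊥ H_𝒪`, modelled on `Fin 10 → 𝒪`.  The basis is
`(r₁′, …, r₄′, r₁″, …, r₄″, e, f)` (coordinates `0–3`, `4–7`, `8`, `9`).  This is the Gram
matrix: on each copy of `Λ⁴` (coordinates `0–3` and `4–7`) we have `ψ(rᵢ,rᵢ) = 3`,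
`ψ(rᵢ,rᵢ₊₁) = θ`, `ψ(rᵢ,rⱼ) = 0` for `j > i+1`; the two copies and `H_𝒪` are mutually
orthogonal; and on `H_𝒪` we have `ψ(e,e) = ψ(f,f) = 0`, `ψ(e,f) = θ`, `ψ(f,e) = −θ`. -/
def gram10 : Fin 10 → Fin 10 → O := fun i j =>
  if (i : ℕ) < 8 ∧ (j : ℕ) < 8 then
    (if (i : ℕ) / 4 = (j : ℕ) / 4 then
      (if i = j then 3
       else if (i : ℕ) + 1 = (j : ℕ) then θ
       else if (j : ℕ) + 1 = (i : ℕ) then conj θ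
       else 0)
     else 0)
  else if (i : ℕ) = 8 ∧ (j : ℕ) = 9 then θ
  else if (i : ℕ) = 9 ∧ (j : ℕ) = 8 then -θ
  else 0

/-- The Hermitian form of `Λ`: 𝒪-linear in the first variable, conjugate-linear in the
second; it has hyperbolic signature `(9,1)`. -/
def psi10 (x y : Fin 10 → O) : O :=
  ∑ i : Fin 10, ∑ j : Fin 10, x i * conj (y j) * gram10 i j

/-- `g` belongs to the unitary group `U(Λ)`. -/
def IsUnitary10 (g : (Fin 10 → O) ≃ₗ[O] (Fin 10 → O)) : Prop :=
  ∀ x y, psi10 (g x) (g y) = psi10 x y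

/-- The `i`-th basis vector of `Λ` (so `b 0, …, b 3` are `r₁′, …, r₄′`;
`b 4, …, b 7` are `r₁″, …, r₄″`; `b 8 = e` and `b 9 = f`). -/
def b (i : Fin 10) : Fin 10 → O := Pi.single i 1

/-- `x ∈ Λ` is primitive: `x ∉ λΛ` for every non-unit `λ ∈ 𝒪`. -/
def IsPrimVec (x : Fin 10 → O) : Prop :=
  ∀ a : O, (∃ y : Fin 10 → O, x = a • y) → IsUnit a


/-! ### Coordinates on the Eisenstein ring -/

def toQ : O →+* QuadraticAlgebra ℤ (-1) 1 :=
  AdjoinRoot.lift (algebraMap ℤ _) (⟨0, 1⟩ : QuadraticAlgebra ℤ (-1) 1) (by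
    simp only [eval₂_add, eval₂_sub, eval₂_pow, eval₂_X, eval₂_one]
    ext
    · simp [pow_two, show QuadraticAlgebra.re (1 : QuadraticAlgebra ℤ (-1) 1) = 1 from rfl]
    · simp [pow_two, show QuadraticAlgebra.im (1 : QuadraticAlgebra ℤ (-1) 1) = 0 from rfl])

def cr (z : O) : ℤ := (toQ z).re
def ci (z : O) : ℤ := (toQ z).im

lemma toQ_ω : toQ ω = ⟨0, 1⟩ := by
  simp [toQ, ω]

lemma cr_add (x y : O) : cr (x + y) = cr x + cr y := by simp [cr]
lemma ci_add (x y : O) : ci (x + y) = ci x + ci y := by simp [ci]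
lemma cr_sub (x y : O) : cr (x - y) = cr x - cr y := by simp [cr]
lemma ci_sub (x y : O) : ci (x - y) = ci x - ci y := by simp [ci]
lemma cr_neg (x : O) : cr (-x) = - cr x := by simp [cr]
lemma ci_neg (x : O) : ci (-x) = - ci x := by simp [ci]
lemma cr_mul (x y : O) : cr (x * y) = cr x * cr y - ci x * ci y := by
  simp [cr, ci]; ring
lemma ci_mul (x y : O) : ci (x * y) = cr x * ci y + ci x * cr y + ci x * ci y := by
  simp [cr, ci]
lemma cr_zero : cr 0 = 0 := by simp [cr]
lemma ci_zero : ci 0 = 0 := by simp [ci]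
lemma cr_one : cr 1 = 1 := by rw [cr, map_one]; rfl
lemma ci_one : ci 1 = 0 := by rw [ci, map_one]; rfl
lemma cr_int (n : ℤ) : cr (n : O) = n := by simp [cr]
lemma ci_int (n : ℤ) : ci (n : O) = 0 := by simp [ci]
lemma cr_two : cr 2 = 2 := by simpa using cr_int 2
lemma ci_two : ci 2 = 0 := by simpa using ci_int 2
lemma cr_three : cr 3 = 3 := by simpa using cr_int 3
lemma ci_three : ci 3 = 0 := by simpa using ci_int 3
lemma cr_ω : cr ω = 0 := by simp [cr, toQ_ω]
lemma ci_ω : ci ω = 1 := by simp [ci, toQ_ω]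

lemma ω_mul_ω : ω * ω = ω - 1 := by linear_combination ω_sq

lemma conj_ω : conj ω = 1 - ω := by simp [conj, ω]

lemma θ_eq : θ = 2 * ω - 1 := by rw [θ, conj_ω]; ring

lemma θ_mul_θ : θ * θ = -3 := by rw [θ_eq]; linear_combination 4 * ω_sq

lemma conj_θ : conj θ = -θ := by
  rw [θ_eq]; simp only [map_sub, map_mul, conj_ω, map_one, map_ofNat]; ring

lemma exists_rep (z : O) : ∃ a c : ℤ, z = a + c * ω := by
  induction z using AdjoinRoot.induction_on with
  | ih p =>
    induction p using Polynomial.induction_on' with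
    | add p q hp hq =>
      obtain ⟨a, c, h⟩ := hp
      obtain ⟨a', c', h'⟩ := hq
      refine ⟨a + a', c + c', ?_⟩
      rw [map_add, h, h']; push_cast; ring
    | monomial n k =>
      have h1 : AdjoinRoot.mk (X ^ 2 - X + 1 : ℤ[X]) (monomial n k) = (k : O) * ω ^ n := by
        rw [← C_mul_X_pow_eq_monomial, map_mul, map_pow, AdjoinRoot.mk_X, AdjoinRoot.mk_C]
        simp [ω]
      rw [h1]
      have h2 : ∀ n : ℕ, ∃ a c : ℤ, ω ^ n = (a : O) + c * ω := by
        intro n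
        induction n with
        | zero => exact ⟨1, 0, by simp⟩
        | succ n ih =>
          obtain ⟨a, c, h⟩ := ih
          refine ⟨-c, a + c, ?_⟩
          rw [pow_succ, h]; push_cast
          linear_combination (c : O) * ω_mul_ω
      obtain ⟨a, c, h⟩ := h2 n
      refine ⟨k * a, k * c, ?_⟩
      rw [h]; push_cast; ring

lemma rep (z : O) : z = (cr z : O) + ci z * ω := by
  obtain ⟨a, c, h⟩ := exists_rep z
  have h1 : cr z = a := by
    rw [h, cr_add, cr_mul, cr_int, cr_int, ci_int, cr_ω]; ring
  have h2 : ci z = c := by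
    rw [h, ci_add, ci_mul, cr_int, ci_int, ci_int, cr_ω, ci_ω]; ring
  rw [h1, h2, h]

lemma O_ext {x y : O} (h1 : cr x = cr y) (h2 : ci x = ci y) : x = y := by
  rw [rep x, rep y, h1, h2]

lemma cr_conj (z : O) : cr (conj z) = cr z + ci z := by
  conv_lhs => rw [rep z]
  simp only [map_add, map_mul, map_intCast, conj_ω, cr_add, cr_mul, cr_sub, ci_sub, cr_int, ci_int,
    cr_ω, ci_ω, cr_one, ci_one]
  ring
lemma ci_conj (z : O) : ci (conj z) = - ci z := by
  conv_lhs => rw [rep z]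
  simp only [map_add, map_mul, map_intCast, conj_ω, ci_add, ci_mul, cr_sub, ci_sub, cr_int, ci_int,
    cr_ω, ci_ω, cr_one, ci_one]
  ring
lemma cr_θ : cr θ = -1 := by
  rw [θ_eq, cr_sub, cr_mul, cr_two, ci_two, cr_ω, ci_ω, cr_one]; norm_num
lemma ci_θ : ci θ = 2 := by
  rw [θ_eq, ci_sub, ci_mul, cr_two, ci_two, cr_ω, ci_ω, ci_one]; norm_num

lemma conj_conj (z : O) : conj (conj z) = z :=
  O_ext (by rw [cr_conj, cr_conj, ci_conj]; ring) (by rw [ci_conj, ci_conj]; ring)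

/-- The norm `z * conj z` of an Eisenstein integer. -/
def nm (z : O) : ℤ := cr z ^ 2 + cr z * ci z + ci z ^ 2

lemma mul_conj (z : O) : z * conj z = (nm z : O) := by
  apply O_ext
  · rw [cr_mul, cr_conj, ci_conj, cr_int, nm]; ring
  · rw [ci_mul, cr_conj, ci_conj, ci_int]; ring

lemma nm_nonneg (z : O) : 0 ≤ nm z := by
  unfold nm; nlinarith [sq_nonneg (cr z), sq_nonneg (ci z), sq_nonneg (cr z + ci z)]

lemma nm_eq_zero {z : O} (h : nm z = 0) : z = 0 := by
  unfold nm at h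
  have h1 : cr z = 0 := by
    nlinarith [sq_nonneg (cr z), sq_nonneg (ci z), sq_nonneg (cr z + ci z)]
  have h2 : ci z = 0 := by
    nlinarith [sq_nonneg (cr z), sq_nonneg (ci z), sq_nonneg (cr z + ci z)]
  exact O_ext (by rw [h1, cr_zero]) (by rw [h2, ci_zero])

lemma nm_zero : nm 0 = 0 := by simp [nm, cr_zero, ci_zero]

lemma nm_mul (x y : O) : nm (x * y) = nm x * nm y := by
  simp only [nm, cr_mul, ci_mul]; ring

lemma nm_conj (x : O) : nm (conj x) = nm x := by
  simp only [nm, cr_conj, ci_conj]; ring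

lemma nm_θ : nm θ = 3 := by simp [nm, cr_θ, ci_θ]
lemma nm_ω : nm ω = 1 := by simp [nm, cr_ω, ci_ω]
lemma nm_one : nm 1 = 1 := by simp [nm, cr_one, ci_one]
lemma nm_neg (x : O) : nm (-x) = nm x := by simp only [nm, cr_neg, ci_neg]; ring

lemma nm_pos {z : O} (h : z ≠ 0) : 0 < nm z :=
  lt_of_le_of_ne (nm_nonneg z) (fun h' => h (nm_eq_zero h'.symm))

lemma O_mul_eq_zero {x y : O} (h : x * y = 0) : x = 0 ∨ y = 0 := by
  have := congrArg nm h
  rw [nm_mul, nm_zero, mul_eq_zero] at this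
  exact this.imp nm_eq_zero nm_eq_zero

lemma O_cancel {a x y : O} (ha : a ≠ 0) (h : a * x = a * y) : x = y := by
  have : a * (x - y) = 0 := by rw [mul_sub, h, sub_self]
  rcases O_mul_eq_zero this with h | h
  · exact absurd h ha
  · exact sub_eq_zero.1 h

lemma θ_ne : θ ≠ 0 := fun h => by have := nm_θ; rw [h, nm_zero] at this; omega
lemma two_ne : (2 : O) ≠ 0 := fun h => by have := cr_two; rw [h, cr_zero] at this; omega
lemma three_ne : (3 : O) ≠ 0 := fun h => by have := cr_three; rw [h, cr_zero] at this; omega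
lemma one_ne : (1 : O) ≠ 0 := fun h => by have := cr_one; rw [h, cr_zero] at this; omega

lemma int_inj {a c : ℤ} (h : (a : O) = c) : a = c := by
  have := congrArg cr h; rwa [cr_int, cr_int] at this

lemma nm_isUnit {u : O} (h : IsUnit u) : nm u = 1 := by
  obtain ⟨v, hv⟩ := h.exists_right_inv
  have := congrArg nm hv
  rw [nm_mul, nm_one] at this
  exact Int.eq_one_or_neg_one_of_mul_eq_one this |>.resolve_right
    (fun h => by have := nm_nonneg u; omega)

lemma nm_ne_two (z : O) : nm z ≠ 2 := by
  intro h
  unfold nm at h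
  have h1 : cr z ≤ 1 := by nlinarith [sq_nonneg (cr z + 2 * ci z)]
  have h2 : -1 ≤ cr z := by nlinarith [sq_nonneg (cr z + 2 * ci z)]
  have h3 : ci z ≤ 1 := by nlinarith [sq_nonneg (2 * cr z + ci z)]
  have h4 : -1 ≤ ci z := by nlinarith [sq_nonneg (2 * cr z + ci z)]
  generalize cr z = p at *
  generalize ci z = q at *
  interval_cases p <;> interval_cases q <;> omega


/-! ### The covering radius of the E8 lattice -/

/-- The lattice `D8+` (all coordinates doubled). -/
def inD (w : Fin 8 → ℤ) : Prop := (∀ i, (2 : ℤ) ∣ w i - w 0) ∧ (4 : ℤ) ∣ ∑ i, w i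

lemma sq_expand (A w : Fin 8 → ℤ) (m : ℤ) :
    ∑ i, (A i - m * w i) ^ 2 = ∑ i, A i ^ 2 - 2 * m * ∑ i, A i * w i + m ^ 2 * ∑ i, w i ^ 2 := by
  rw [Finset.mul_sum, Finset.mul_sum, ← Finset.sum_sub_distrib, ← Finset.sum_add_distrib]
  exact Finset.sum_congr rfl (fun i _ => by ring)

lemma cover_aux (A : Fin 8 → ℤ) (m : ℤ) (hm : 0 < m)
    (h : ∀ w, inD w → ∑ i, A i ^ 2 ≤ ∑ i, (A i - m * w i) ^ 2) :
    ∀ w, inD w → 2 * ∑ i, A i * w i ≤ m * ∑ i, w i ^ 2 := by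
  intro w hw
  have h1 := h w hw
  rw [sq_expand] at h1
  have h2 : m * (2 * ∑ i, A i * w i) ≤ m * (m * ∑ i, w i ^ 2) := by linarith
  exact le_of_mul_le_mul_left h2 hm

/-- sign -/
def sg (x : ℤ) : ℤ := if x < 0 then -1 else 1

lemma mul_sg (x : ℤ) : x * sg x = |x| := by
  unfold sg; split_ifs with h
  · rw [abs_of_neg h]; ring
  · rw [abs_of_nonneg (not_lt.1 h)]; ring

lemma sg_sq (x : ℤ) : sg x ^ 2 = 1 := by unfold sg; split_ifs <;> norm_num

lemma sg_or (x : ℤ) : sg x = 1 ∨ sg x = -1 := by unfold sg; split_ifs <;> simp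

lemma cover_pair (A : Fin 8 → ℤ) (m : ℤ)
    (h : ∀ w, inD w → 2 * ∑ i, A i * w i ≤ m * ∑ i, w i ^ 2) (i j : Fin 8) (hij : i ≠ j) :
    |A i| + |A j| ≤ 2 * m := by
  have := h (fun k => (if k = i then 2 * sg (A i) else 0) + (if k = j then 2 * sg (A j) else 0)) ?_
  · have e1 : ∑ k, A k * ((if k = i then 2 * sg (A i) else 0) + (if k = j then 2 * sg (A j) else 0))
        = 2 * |A i| + 2 * |A j| := by
      simp only [mul_add, Finset.sum_add_distrib, mul_ite, mul_zero, Finset.sum_ite_eq',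
        Finset.mem_univ, if_true]
      rw [← mul_sg, ← mul_sg]; ring
    have e2 : ∑ k, ((if k = i then 2 * sg (A i) else 0) + (if k = j then 2 * sg (A j) else 0)) ^ 2
        = 8 := by
      have : ∀ k, ((if k = i then 2 * sg (A i) else 0) + (if k = j then 2 * sg (A j) else 0)) ^ 2
          = (if k = i then 4 else 0) + (if k = j then 4 else 0) := by
        intro k
        by_cases h1 : k = i
        · have h2 : k ≠ j := fun h => hij (h1.symm.trans h)
          simp only [h1, if_true, if_neg hij]
          linear_combination 4 * sg_sq (A i)
        · by_cases h2 : k = j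
          · simp only [h2, if_true, if_neg (Ne.symm hij)]
            linear_combination 4 * sg_sq (A j)
          · simp [h1, h2]
      simp only [this, Finset.sum_add_distrib, Finset.sum_ite_eq', Finset.mem_univ, if_true]
      norm_num
    rw [e1, e2] at this
    linarith
  · have hk : ∀ k, (2 : ℤ) ∣ (if k = i then 2 * sg (A i) else 0) + (if k = j then 2 * sg (A j) else 0) := by
      intro k
      apply dvd_add <;> split_ifs <;> simp
    refine ⟨fun k => dvd_sub (hk k) (hk 0), ?_⟩
    simp only [Finset.sum_add_distrib, Finset.sum_ite_eq', Finset.mem_univ, if_true]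
    rcases sg_or (A i) with h1 | h1 <;> rcases sg_or (A j) with h2 | h2 <;> rw [h1, h2] <;> norm_num

lemma sg_sum_even (A : Fin 8 → ℤ) : (2 : ℤ) ∣ ∑ i, sg (A i) := by
  have : ∀ x, (2 : ℤ) ∣ sg x - 1 := by
    intro x; rcases sg_or x with h | h <;> rw [h] <;> norm_num
  have h2 : (2 : ℤ) ∣ ∑ i, (sg (A i) - 1) := Finset.dvd_sum (fun i _ => this _)
  rw [Finset.sum_sub_distrib] at h2
  simp at h2
  omega

lemma sg_odd_sub (x y : ℤ) : (2 : ℤ) ∣ sg x - sg y := by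
  rcases sg_or x with h | h <;> rcases sg_or y with h' | h' <;> rw [h, h'] <;> norm_num

lemma cover_sum (A : Fin 8 → ℤ) (m : ℤ)
    (h : ∀ w, inD w → 2 * ∑ i, A i * w i ≤ m * ∑ i, w i ^ 2) :
    ((4 : ℤ) ∣ ∑ i, sg (A i) → ∑ i, |A i| ≤ 4 * m) ∧
    (¬ (4 : ℤ) ∣ ∑ i, sg (A i) → ∀ k, ∑ i, |A i| - 2 * |A k| ≤ 4 * m) := by
  constructor
  · intro h4
    have := h (fun i => sg (A i)) ⟨fun i => sg_odd_sub _ _, h4⟩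
    simp only [mul_sg, sg_sq] at this
    simp at this
    linarith
  · intro h4 k
    have := h (fun i => sg (A i) - (if i = k then 2 * sg (A k) else 0)) ⟨?_, ?_⟩
    · have e1 : ∀ i, A i * (sg (A i) - (if i = k then 2 * sg (A k) else 0))
          = |A i| - (if i = k then 2 * |A k| else 0) := by
        intro i
        by_cases h1 : i = k
        · simp only [h1, if_true]; rw [← mul_sg]; ring
        · simp only [h1, if_false, sub_zero]; exact mul_sg _
      have e2 : ∀ i, (sg (A i) - (if i = k then 2 * sg (A k) else 0)) ^ 2 = 1 := by
        intro i
        by_cases h1 : i = k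
        · simp only [h1, if_true]; linear_combination sg_sq (A k)
        · simp only [h1, if_false, sub_zero]; exact sg_sq _
      simp only [e1, e2, Finset.sum_sub_distrib, Finset.sum_ite_eq', Finset.mem_univ,
        if_true] at this
      simp at this
      linarith
    · intro i
      have h1 := sg_odd_sub (A i) (A 0)
      have h2 : (2 : ℤ) ∣ (if i = k then 2 * sg (A k) else 0) := by split_ifs <;> simp
      have h3 : (2 : ℤ) ∣ (if 0 = k then 2 * sg (A k) else 0) := by split_ifs <;> simp
      simp only
      omega
    · simp only [Finset.sum_sub_distrib, Finset.sum_ite_eq', Finset.mem_univ, if_true]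
      have := sg_sum_even A
      rcases sg_or (A k) with h1 | h1 <;> rw [h1] <;> omega

lemma cover (A : Fin 8 → ℤ) (m : ℤ) (hm : 0 < m)
    (h : ∀ w, inD w → ∑ i, A i ^ 2 ≤ ∑ i, (A i - m * w i) ^ 2) :
    ∑ i, A i ^ 2 ≤ 4 * m ^ 2 ∧
    (∑ i, A i ^ 2 = 4 * m ^ 2 → ∃ l, inD l ∧ ∀ i, 2 * A i = m * l i) := by
  have h0 := cover_aux A m hm h
  have hp := cover_pair A m h0
  obtain ⟨hs1, hs2⟩ := cover_sum A m h0
  obtain ⟨j, -, hj⟩ := Finset.exists_max_image Finset.univ (fun i => |A i|) ⟨0, Finset.mem_univ _⟩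
  obtain ⟨k, -, hk⟩ := Finset.exists_min_image Finset.univ (fun i => |A i|) ⟨0, Finset.mem_univ _⟩
  have hj' : ∀ i, |A i| ≤ |A j| := fun i => hj i (Finset.mem_univ _)
  have hk' : ∀ i, |A k| ≤ |A i| := fun i => hk i (Finset.mem_univ _)
  have hQ : ∑ i, A i ^ 2 = ∑ i, |A i| ^ 2 := Finset.sum_congr rfl (fun i _ => (sq_abs _).symm)
  have hs : ∑ i, |A i| ≤ 4 * m + 2 * |A k| := by
    have := abs_nonneg (A k)
    by_cases h4 : (4 : ℤ) ∣ ∑ i, sg (A i)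
    · linarith [hs1 h4]
    · linarith [hs2 h4 k]
  have key : ∀ M, (∀ i, i ≠ j → |A i| ≤ M) → 
      ∑ i, |A i| ^ 2 ≤ (M + |A k|) * ∑ i, |A i| - 8 * M * |A k| + (|A j| - |A k|) * (|A j| - M) ∧
      (∑ i, |A i| ^ 2 = (M + |A k|) * ∑ i, |A i| - 8 * M * |A k| + (|A j| - |A k|) * (|A j| - M) →
        ∀ i, i ≠ j → |A i| = |A k| ∨ |A i| = M) := by
    intro M hM
    have e : ∑ i ∈ Finset.univ.erase j, (|A i| - |A k|) * (M - |A i|) =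
        ((M + |A k|) * ∑ i, |A i| - 8 * M * |A k| + (|A j| - |A k|) * (|A j| - M)) 
          - ∑ i, |A i| ^ 2 := by
      have h1 := Finset.add_sum_erase Finset.univ (fun i => (|A i| - |A k|) * (M - |A i|))
        (Finset.mem_univ j)
      have h2 : ∑ i, (|A i| - |A k|) * (M - |A i|) =
          (M + |A k|) * ∑ i, |A i| - 8 * M * |A k| - ∑ i, |A i| ^ 2 := by
        simp only [Fin.sum_univ_eight]; ring
      linarith
    have hnn : ∀ i ∈ Finset.univ.erase j, 0 ≤ (|A i| - |A k|) * (M - |A i|) := by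
      intro i hi
      have := hM i (Finset.ne_of_mem_erase hi)
      exact mul_nonneg (by linarith [hk' i]) (by linarith)
    constructor
    · have := Finset.sum_nonneg hnn
      linarith
    · intro heq i hij
      have : ∑ i ∈ Finset.univ.erase j, (|A i| - |A k|) * (M - |A i|) = 0 := by rw [e]; linarith
      rw [Finset.sum_eq_zero_iff_of_nonneg hnn] at this
      rcases mul_eq_zero.1 (this i (Finset.mem_erase.2 ⟨hij, Finset.mem_univ _⟩)) with h | h
      · left; linarith
      · right; linarith
  rw [hQ]
  have hs0 := abs_nonneg (A k)
  have hsj := hk' j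
  rcases lt_or_ge (|A j|) m with hlt | hge
  · obtain ⟨h1, -⟩ := key |A j| (fun i _ => hj' i)
    have : ∑ i, |A i| ^ 2 < 4 * m ^ 2 := by
      generalize |A j| = t at *
      generalize |A k| = s at *
      generalize ∑ i, |A i| = S at *
      generalize ∑ i, |A i| ^ 2 = Q at *
      have h2 : (t + s) * S ≤ (t + s) * (4 * m + 2 * s) :=
        mul_le_mul_of_nonneg_left hs (by linarith)
      nlinarith [mul_nonneg hs0 (sub_nonneg.2 hsj), mul_nonneg hs0 (sub_nonneg.2 hlt.le),
        mul_pos (sub_pos.2 hlt) (sub_pos.2 hlt)]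
    exact ⟨this.le, fun h => absurd h this.ne⟩
  · obtain ⟨h1, h1'⟩ := key (2 * m - |A j|) (fun i hi => by linarith [hp i j hi])
    have hsM : |A k| ≤ 2 * m - |A j| := by
      by_cases hkj : k = j
      · obtain ⟨i, hi⟩ : ∃ i : Fin 8, i ≠ j := exists_ne j
        linarith [hp i j hi, hk' i]
      · linarith [hp k j hkj]
    have h2 : (2 * m - |A j| + |A k|) * ∑ i, |A i| ≤ (2 * m - |A j| + |A k|) * (4 * m + 2 * |A k|) :=
      mul_le_mul_of_nonneg_left hs (by linarith)
    have h3 : (2 * m - |A j| + |A k|) * (4 * m + 2 * |A k|) - 8 * (2 * m - |A j|) * |A k|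
        + (|A j| - |A k|) * (|A j| - (2 * m - |A j|)) = 4 * m ^ 2
          - 2 * ((2 * m - |A j| - |A k|) * (|A j| - m + |A k|)) := by
      ring
    have h4 : 0 ≤ (2 * m - |A j| - |A k|) * (|A j| - m + |A k|) :=
      mul_nonneg (by linarith) (by linarith)
    refine ⟨by linarith, fun heq => ?_⟩
    have h5 := h1' (by linarith)
    have h6 : (2 * m - |A j| + |A k|) * (∑ i, |A i| - (4 * m + 2 * |A k|)) = 0 := by linarith
    have h7 : (2 * m - |A j| - |A k|) * (|A j| - m + |A k|) = 0 := by linarith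
    have hS : ∑ i, |A i| = |A j| + ∑ i ∈ Finset.univ.erase j, |A i| :=
      (Finset.add_sum_erase Finset.univ (fun i => |A i|) (Finset.mem_univ j)).symm
    have hA : ∀ i, A i = sg (A i) * |A i| := fun i => by
      rw [← mul_sg]; linear_combination (-A i) * sg_sq (A i)
    rcases mul_eq_zero.1 h7 with h7 | h7
    · have h8 : ∀ i, i ≠ j → |A i| = |A k| := fun i hi => by
        rcases h5 i hi with h | h <;> linarith
      have h9 : ∑ i ∈ Finset.univ.erase j, |A i| = 7 * |A k| := by
        rw [Finset.sum_congr rfl (fun i hi => h8 i (Finset.ne_of_mem_erase hi))]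
        simp
      rcases mul_eq_zero.1 h6 with h6 | h6
      · refine ⟨fun i => if i = j then 4 * sg (A j) else 0, ⟨?_, ?_⟩, ?_⟩
        · intro i
          simp only
          apply dvd_sub <;> split_ifs <;> first | exact dvd_zero _ | (exact ⟨2 * sg (A j), by ring⟩)
        · simp
        · intro i
          by_cases hi : i = j
          · simp only [hi, if_true]
            have hj2 : |A j| = 2 * m := by linarith
            linear_combination 2 * hA j + 2 * sg (A j) * hj2
          · have : A i = 0 := abs_eq_zero.1 (by rw [h8 i hi]; linarith)
            simp [hi, this]
      · have hk2 : m = 2 * |A k| := by linarith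
        have hj3 : |A j| = 3 * |A k| := by linarith
        refine ⟨fun i => sg (A i) + if i = j then 2 * sg (A j) else 0, ⟨?_, ?_⟩, ?_⟩
        · intro i
          have h1 := sg_odd_sub (A i) (A 0)
          have h2 : (2 : ℤ) ∣ (if i = j then 2 * sg (A j) else 0) := by split_ifs <;> simp
          have h3 : (2 : ℤ) ∣ (if 0 = j then 2 * sg (A j) else 0) := by split_ifs <;> simp
          simp only
          omega
        · have hn : ¬ (4 : ℤ) ∣ ∑ i, sg (A i) := fun h => by
            have := hs1 h
            linarith
          simp only [Finset.sum_add_distrib, Finset.sum_ite_eq', Finset.mem_univ, if_true]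
          have := sg_sum_even A
          rcases sg_or (A j) with h1 | h1 <;> rw [h1] <;> omega
        · intro i
          by_cases hi : i = j
          · simp only [hi, if_true]
            linear_combination 2 * hA j + 2 * sg (A j) * hj3 - 3 * sg (A j) * hk2
          · simp only [hi, if_false]
            linear_combination 2 * hA i + 2 * sg (A i) * h8 i hi - sg (A i) * hk2
    · have hk0 : |A k| = 0 := by linarith
      have hjm : |A j| = m := by linarith
      have hS4 : ∑ i, |A i| = 4 * m := by
        rcases mul_eq_zero.1 h6 with h | h <;> linarith
      have h8 : ∀ i, |A i| = m * (if A i = 0 then 0 else 1) := by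
        intro i
        by_cases hi : i = j
        · have : A j ≠ 0 := fun h => by rw [h] at hjm; simp at hjm; omega
          rw [hi, if_neg this, hjm, mul_one]
        · split_ifs with h0
          · rw [h0]; simp
          · rcases h5 i hi with h | h
            · rw [hk0] at h; exact absurd (abs_eq_zero.1 h) h0
            · linarith
      have h9 : ∑ i, (if A i = 0 then (0 : ℤ) else 1) = 4 := by
        have : m * ∑ i, (if A i = 0 then (0 : ℤ) else 1) = m * 4 := by
          rw [Finset.mul_sum, ← Finset.sum_congr rfl (fun i _ => h8 i)]; linarith
        exact mul_left_cancel₀ hm.ne' this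
      refine ⟨fun i => 2 * (sg (A i) * (if A i = 0 then 0 else 1)), ⟨?_, ?_⟩, ?_⟩
      · intro i
        exact dvd_sub (dvd_mul_right _ _) (dvd_mul_right _ _)
      · have h10 : (2 : ℤ) ∣ ∑ i, (sg (A i) * (if A i = 0 then 0 else 1)
            - (if A i = 0 then (0 : ℤ) else 1)) := by
          apply Finset.dvd_sum
          intro i _
          rcases sg_or (A i) with h | h <;> rw [h] <;> split_ifs <;> norm_num
        rw [Finset.sum_sub_distrib, h9] at h10
        rw [← Finset.mul_sum]
        omega
      · intro i
        linear_combination 2 * hA i + 2 * sg (A i) * h8 i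


/-! ### The rank 4 lattice -/

def h4 (x y : Fin 4 → O) : O :=
  3 * (x 0 * conj (y 0) + x 1 * conj (y 1) + x 2 * conj (y 2) + x 3 * conj (y 3))
  + θ * (x 0 * conj (y 1) + x 1 * conj (y 2) + x 2 * conj (y 3)
    - x 1 * conj (y 0) - x 2 * conj (y 1) - x 3 * conj (y 2))

def t0 (y : Fin 4 → O) : O := θ * y 0 + y 1
def t1 (y : Fin 4 → O) : O := y 1 - θ * y 2 - y 3
def t2 (y : Fin 4 → O) : O := y 1 + y 3
def t3 (y : Fin 4 → O) : O := y 3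

def n4 (x : Fin 4 → O) : ℤ := nm (t0 x) + nm (t1 x) + nm (t2 x) + nm (t3 x)

lemma h4_tau (x y : Fin 4 → O) : h4 x y = t0 x * conj (t0 y) + t1 x * conj (t1 y)
    + t2 x * conj (t2 y) + t3 x * conj (t3 y) := by
  simp only [h4, t0, t1, t2, t3, map_add, map_sub, map_mul, conj_θ]
  linear_combination (x 0 * conj (y 0) + x 2 * conj (y 2)) * θ_mul_θ

lemma h4_self (x : Fin 4 → O) : h4 x x = (n4 x : O) := by
  rw [h4_tau, n4]; simp only [mul_conj]; push_cast; ring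

lemma n4_smul (c : O) (x : Fin 4 → O) : n4 (c • x) = nm c * n4 x := by
  have e0 : t0 (c • x) = c * t0 x := by simp only [t0, Pi.smul_apply, smul_eq_mul]; ring
  have e1 : t1 (c • x) = c * t1 x := by simp only [t1, Pi.smul_apply, smul_eq_mul]; ring
  have e2 : t2 (c • x) = c * t2 x := by simp only [t2, Pi.smul_apply, smul_eq_mul]; ring
  have e3 : t3 (c • x) = c * t3 x := by simp only [t3, Pi.smul_apply, smul_eq_mul]
  simp only [n4, e0, e1, e2, e3, nm_mul]; ring

lemma n4_nonneg (x : Fin 4 → O) : 0 ≤ n4 x := by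
  have := nm_nonneg (t0 x); have := nm_nonneg (t1 x); have := nm_nonneg (t2 x)
  have := nm_nonneg (t3 x); unfold n4; linarith

lemma n4_eq_zero {x : Fin 4 → O} (h : n4 x = 0) : x = 0 := by
  have h0 := nm_nonneg (t0 x); have h1 := nm_nonneg (t1 x); have h2 := nm_nonneg (t2 x)
  have h3 := nm_nonneg (t3 x); unfold n4 at h
  have e0 := nm_eq_zero (show nm (t0 x) = 0 by linarith)
  have e1 := nm_eq_zero (show nm (t1 x) = 0 by linarith)
  have e2 := nm_eq_zero (show nm (t2 x) = 0 by linarith)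
  have e3 := nm_eq_zero (show nm (t3 x) = 0 by linarith)
  simp only [t0, t1, t2, t3] at e0 e1 e2 e3
  have x1 : x 1 = 0 := by linear_combination e2 - e3
  have x0 : x 0 = 0 := O_cancel θ_ne (by linear_combination e0 - x1)
  have x2 : x 2 = 0 := O_cancel θ_ne (by linear_combination -e1 + x1 - e3)
  funext i; fin_cases i <;> assumption

/-! ### Integer coordinates -/

def Phi (y : Fin 4 → O) : Fin 8 → ℤ :=
  ![cr (y 1) + 2 * cr (y 2) + 2 * ci (y 2) + 2 * ci (y 3),
    - cr (y 1),
    - cr (y 1) - 2 * ci (y 2) + 2 * cr (y 3) + 2 * ci (y 3),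
    cr (y 1) + 2 * cr (y 3),
    2 * cr (y 0) + cr (y 1) + 2 * ci (y 1),
    2 * ci (y 0) - cr (y 1),
    2 * cr (y 0) + 2 * ci (y 0) - cr (y 1),
    cr (y 1) + 2 * ci (y 1) - 2 * cr (y 2)]

lemma Phi_sq (x : Fin 4 → O) : 8 * n4 x = 3 * ∑ i, Phi x i ^ 2 := by
  simp only [n4, nm, t0, t1, t2, t3, Fin.sum_univ_eight, Phi, cr_add, ci_add, cr_sub, ci_sub,
    cr_mul, ci_mul, cr_θ, ci_θ]
  simp
  ring

lemma Phi_sub (x y : Fin 4 → O) (m k : ℤ) (i : Fin 8) :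
    Phi ((k : O) • x - (m : O) • y) i = k * Phi x i - m * Phi y i := by
  fin_cases i <;> simp [Phi, cr_sub, ci_sub, cr_mul, ci_mul, cr_int, ci_int] <;> ring

lemma Phi_surj (w : Fin 8 → ℤ) (h : inD w) : ∃ x, Phi x = w := by
  obtain ⟨h1, q, hq⟩ := h
  rw [Fin.sum_univ_eight] at hq
  obtain ⟨d1, e1⟩ := h1 1
  obtain ⟨d2, e2⟩ := h1 2
  obtain ⟨d3, e3⟩ := h1 3
  obtain ⟨d4, e4⟩ := h1 4
  obtain ⟨d5, e5⟩ := h1 5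
  obtain ⟨d6, e6⟩ := h1 6
  set s := w 0 with hs
  have mk : ∀ a c : ℤ, cr ((a : O) + (c : O) * ω) = a ∧ ci ((a : O) + (c : O) * ω) = c := by
    intro a c
    simp [cr_add, ci_add, cr_mul, ci_mul, cr_int, ci_int, cr_ω, ci_ω]
  refine ⟨![((-d5+d6 : ℤ) : O) + ((-d1+d5 : ℤ) : O) * ω,
    ((-s-2*d1 : ℤ) : O) + ((s+d1+d4+d5-d6 : ℤ) : O) * ω,
    ((4*s+d1+d2+d3+2*d4+2*d5-2*q : ℤ) : O) + ((-s+d1-d2-d4-d5+q : ℤ) : O) * ω,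
    ((s+d1+d3 : ℤ) : O) + ((-2*s-d1-d3-d4-d5+q : ℤ) : O) * ω], ?_⟩
  funext i
  fin_cases i <;> simp only [Phi, Matrix.cons_val, mk, Fin.mk_one, Fin.zero_eta, Fin.reduceFinMk] <;> linarith


def tau (i : Fin 4) (x : Fin 4 → O) : O := ![t0 x, t1 x, t2 x, t3 x] i

def tv (i : Fin 4) : Fin 4 → O :=
  ![![1, 0, 0, 0], ![0, 0, -1, 0], ![-1, θ, 1, 0], ![1, -θ, -2, θ]] i

lemma tau_add (i : Fin 4) (x y : Fin 4 → O) : tau i (x + y) = tau i x + tau i y := by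
  fin_cases i <;> simp [tau, t0, t1, t2, t3] <;> ring

lemma tau_smul (i : Fin 4) (c : O) (x : Fin 4 → O) : tau i (c • x) = c * tau i x := by
  fin_cases i <;> simp [tau, t0, t1, t2, t3] <;> ring

lemma tau_tv (i j : Fin 4) : tau i (tv j) = if i = j then θ else 0 := by
  fin_cases i <;> fin_cases j <;> simp [tau, tv, t0, t1, t2, t3] <;> ring

lemma n4_tau (x : Fin 4 → O) : n4 x = ∑ i, nm (tau i x) := by
  rw [Fin.sum_univ_four]; rfl

lemma h4_tau' (x y : Fin 4 → O) : h4 x y = ∑ i, tau i x * conj (tau i y) := by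
  rw [Fin.sum_univ_four, h4_tau]; rfl

lemma nm_three {z : O} (h : nm z = 3) : ∃ u, z = θ * u ∧ nm u = 1 := by
  have h1 : (3 : ℤ) ∣ (cr z - ci z) ^ 2 := ⟨1 - cr z * ci z, by unfold nm at h; linarith⟩
  obtain ⟨k, hk⟩ := Int.Prime.dvd_pow' (p := 3) (by norm_num) h1
  have hz := rep z
  push_cast at hk
  have e : z = θ * (((k + ci z : ℤ) : O) + ((-ci z - 2 * k : ℤ) : O) * ω) := by
    apply O_ext <;> simp only [cr_mul, ci_mul, cr_add, ci_add, cr_int, ci_int, cr_ω, ci_ω, cr_θ,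
      ci_θ] <;> linarith
  refine ⟨_, e, ?_⟩
  rw [e, nm_mul, nm_θ] at h
  linarith

lemma nm_even {z : O} (h : (2 : ℤ) ∣ nm z) : ∃ u, z = 2 * u := by
  unfold nm at h
  obtain ⟨k, hk⟩ : ∃ k, cr z = 2 * k := by
    rcases Int.even_or_odd' (cr z) with ⟨k, hk | hk⟩
    · exact ⟨k, hk⟩
    · exfalso
      rcases Int.even_or_odd' (ci z) with ⟨l, hl | hl⟩ <;> rw [hk, hl] at h <;> ring_nf at h <;> omega
  obtain ⟨l, hl⟩ : ∃ l, ci z = 2 * l := by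
    rcases Int.even_or_odd' (ci z) with ⟨l, hl | hl⟩
    · exact ⟨l, hl⟩
    · exfalso
      rw [hk, hl] at h
      ring_nf at h
      omega
  refine ⟨(k : O) + (l : O) * ω, ?_⟩
  apply O_ext <;> simp only [cr_mul, ci_mul, cr_add, ci_add, cr_int, ci_int, cr_ω, ci_ω, cr_two,
      ci_two] <;> linarith

lemma nm_two_O : nm (2 : O) = 4 := by simp [nm, cr_two, ci_two]

lemma nm_le_six {z : O} (h : nm z ≤ 6) : nm z = 0 ∨ nm z = 1 ∨ nm z = 3 ∨ nm z = 4 := by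
  have h0 := nm_nonneg z
  have h1 : nm z % 2 = 0 → nm z % 4 = 0 := by
    intro h2
    obtain ⟨u, hu⟩ := nm_even (Int.dvd_of_emod_eq_zero h2)
    rw [hu, nm_mul, nm_two_O]; omega
  have h2 : nm z % 3 ≠ 2 := by
    have : nm z = (cr z - ci z) ^ 2 + 3 * (cr z * ci z) := by unfold nm; ring
    rw [this, Int.add_mul_emod_self_left, pow_two, Int.mul_emod]
    have h3 : (cr z - ci z) % 3 = 0 ∨ (cr z - ci z) % 3 = 1 ∨ (cr z - ci z) % 3 = 2 := by omega
    rcases h3 with h3 | h3 | h3 <;> rw [h3] <;> decide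
  omega

lemma fin4_univ : ∀ i j k l : Fin 4, i ≠ j → i ≠ k → i ≠ l → j ≠ k → j ≠ l → k ≠ l →
    (Finset.univ : Finset (Fin 4)) = {i, j, k, l} := by decide

lemma sum_perm {M : Type*} [AddCommMonoid M] (f : Fin 4 → M) (i j k l : Fin 4) (h1 : i ≠ j)
    (h2 : i ≠ k) (h3 : i ≠ l) (h4 : j ≠ k) (h5 : j ≠ l) (h6 : k ≠ l) :
    ∑ a, f a = f i + (f j + (f k + f l)) := by
  rw [fin4_univ i j k l h1 h2 h3 h4 h5 h6, Finset.sum_insert (by simp [*]),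
    Finset.sum_insert (by simp [*]), Finset.sum_insert (by simp [*]), Finset.sum_singleton]

lemma unit_conj {u : O} (h : nm u = 1) : u * conj u = 1 := by rw [mul_conj, h]; simp

lemma lam_aux (y : Fin 4 → O) (i j k l : Fin 4) (hij : i ≠ j)
    (hik : i ≠ k) (hil : i ≠ l) (hjk : j ≠ k) (hjl : j ≠ l) (hkl : k ≠ l)
    (hi : nm (tau i y) = 4) (hj : nm (tau j y) = 1) (hk : nm (tau k y) = 1)
    (hl : nm (tau l y) = 0) : ∃ x, n4 x = 3 ∧ h4 y x = 3 := by
  obtain ⟨u, hu⟩ := nm_even (z := tau i y) (by rw [hi]; norm_num)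
  have hu1 : nm u = 1 := by rw [hu, nm_mul, nm_two_O] at hi; linarith
  have hl0 := nm_eq_zero hl
  set v := tau j y with hv
  set w := tau k y with hw
  set x := (-1 : O) • y + ((-θ * u) • tv i + ((1 - ω) * v) • tv j + (-(ω * w)) • tv k) with hx
  have xi : tau i x = u := by
    simp only [hx, tau_add, tau_smul, tau_tv, hij, hik, if_true, if_false]
    rw [hu]; linear_combination - u * θ_mul_θ
  have xj : tau j x = ω * v := by
    simp only [hx, tau_add, tau_smul, tau_tv, hij.symm, hjk, if_true, if_false]
    rw [← hv, θ_eq]; linear_combination -2 * v * ω_mul_ω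
  have xk : tau k x = (1 - ω) * w := by
    simp only [hx, tau_add, tau_smul, tau_tv, hik.symm, hjk.symm, if_true, if_false]
    rw [← hw, θ_eq]; linear_combination -2 * w * ω_mul_ω
  have xl : tau l x = 0 := by
    simp only [hx, tau_add, tau_smul, tau_tv, hil.symm, hjl.symm, hkl.symm, if_false]
    rw [hl0]; ring
  refine ⟨x, ?_, ?_⟩
  · rw [n4_tau, sum_perm _ i j k l hij hik hil hjk hjl hkl, xi, xj, xk, xl, ← conj_ω]
    simp only [nm_mul, nm_conj, nm_ω, hu1, hj, hk, nm_zero]; norm_num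
  · rw [h4_tau', sum_perm _ i j k l hij hik hil hjk hjl hkl, xi, xj, xk, xl, hu, hl0, ← hv, ← hw]
    simp only [map_mul, map_sub, map_one, conj_ω]
    linear_combination 2 * unit_conj hu1 + (1 - ω) * unit_conj hj + ω * unit_conj hk

lemma lam_three (y : Fin 4 → O) (i : Fin 4) (hi : nm (tau i y) = 3) :
    ∃ x, n4 x = 3 ∧ h4 y x = 3 := by
  obtain ⟨u, hu, hu1⟩ := nm_three hi
  refine ⟨u • tv i, ?_, ?_⟩
  · rw [n4_smul, hu1, n4_tau]
    simp only [tau_tv]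
    rw [Finset.sum_eq_single i (fun b _ hb => by simp [hb, nm_zero]) (by simp)]
    simp [nm_θ]
  · rw [h4_tau']
    simp only [tau_smul, tau_tv]
    rw [Finset.sum_eq_single i (fun b _ hb => by simp [hb]) (by simp)]
    simp only [if_true, hu, map_mul, conj_θ]
    linear_combination -(u * conj u) * θ_mul_θ + 3 * unit_conj hu1

lemma lam_comb (f : Fin 4 → ℤ) (q : ∀ i, f i = 0 ∨ f i = 1 ∨ f i = 4)
    (h : f 0 + f 1 + f 2 + f 3 = 6) :
    ∃ i j k l : Fin 4, (i ≠ j ∧ i ≠ k ∧ i ≠ l ∧ j ≠ k ∧ j ≠ l ∧ k ≠ l) ∧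
      f i = 4 ∧ f j = 1 ∧ f k = 1 ∧ f l = 0 := by
  have p0 := q 0; have p1 := q 1; have p2 := q 2; have p3 := q 3
  rcases p0 with a0 | a0 | a0 <;> rcases p1 with a1 | a1 | a1 <;>
  rcases p2 with a2 | a2 | a2 <;> rcases p3 with a3 | a3 | a3 <;>
  first
  | omega
  | exact ⟨0, 1, 2, 3, by decide, by assumption, by assumption, by assumption, by assumption⟩
  | exact ⟨0, 1, 3, 2, by decide, by assumption, by assumption, by assumption, by assumption⟩
  | exact ⟨0, 2, 3, 1, by decide, by assumption, by assumption, by assumption, by assumption⟩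
  | exact ⟨1, 0, 2, 3, by decide, by assumption, by assumption, by assumption, by assumption⟩
  | exact ⟨1, 0, 3, 2, by decide, by assumption, by assumption, by assumption, by assumption⟩
  | exact ⟨1, 2, 3, 0, by decide, by assumption, by assumption, by assumption, by assumption⟩
  | exact ⟨2, 0, 1, 3, by decide, by assumption, by assumption, by assumption, by assumption⟩
  | exact ⟨2, 0, 3, 1, by decide, by assumption, by assumption, by assumption, by assumption⟩
  | exact ⟨2, 1, 3, 0, by decide, by assumption, by assumption, by assumption, by assumption⟩
  | exact ⟨3, 0, 1, 2, by decide, by assumption, by assumption, by assumption, by assumption⟩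
  | exact ⟨3, 0, 2, 1, by decide, by assumption, by assumption, by assumption, by assumption⟩
  | exact ⟨3, 1, 2, 0, by decide, by assumption, by assumption, by assumption, by assumption⟩

lemma lam (y : Fin 4 → O) (h : n4 y = 6) : ∃ x, n4 x = 3 ∧ h4 y x = 3 := by
  by_cases h3 : ∃ i, nm (tau i y) = 3
  · obtain ⟨i, hi⟩ := h3
    exact lam_three y i hi
  push Not at h3
  rw [n4_tau, Fin.sum_univ_four] at h
  have p : ∀ i, 0 ≤ nm (tau i y) := fun i => nm_nonneg _
  have q : ∀ i, nm (tau i y) = 0 ∨ nm (tau i y) = 1 ∨ nm (tau i y) = 4 := by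
    intro i
    have : nm (tau i y) ≤ 6 := by
      have := p 0; have := p 1; have := p 2; have := p 3
      fin_cases i <;> simp only [Fin.mk_one, Fin.zero_eta, Fin.reduceFinMk] <;> linarith
    have := nm_le_six this
    have := h3 i
    omega
  obtain ⟨i, j, k, l, ⟨d1, d2, d3, d4, d5, d6⟩, e1, e2, e3, e4⟩ := lam_comb _ q h
  exact lam_aux y i j k l d1 d2 d3 d4 d5 d6 e1 e2 e3 e4

lemma h4_smul_left (c : O) (x y : Fin 4 → O) : h4 (c • x) y = c * h4 x y := by
  simp only [h4, Pi.smul_apply, smul_eq_mul]; ring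

lemma cover4 (y : Fin 4 → O) (c : O) (hc : c ≠ 0) (h : ∀ x, n4 y ≤ n4 (y - c • x)) :
    2 * n4 y ≤ 3 * nm c ∧ (2 * n4 y = 3 * nm c → ∃ x, n4 x = 3 ∧ 2 * h4 y x = 3 * c) := by
  have hm : 0 < nm c := nm_pos hc
  set m := nm c with hmdef
  set Y := conj c • y with hY
  have nY : n4 Y = m * n4 y := by rw [hY, n4_smul, nm_conj]
  have sY := Phi_sq Y
  obtain ⟨c1, c2⟩ := cover (Phi Y) m hm (by
    intro w hw
    obtain ⟨x, rfl⟩ := Phi_surj w hw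
    have e : ((1 : ℤ) : O) • Y - (m : O) • x = conj c • (y - c • x) := by
      rw [hY, smul_sub, smul_smul (conj c) c, mul_comm (conj c) c, mul_conj]; simp [hmdef]
    have e2 := Phi_sq (((1 : ℤ) : O) • Y - (m : O) • x)
    simp only [Phi_sub, one_mul] at e2
    rw [e, n4_smul, nm_conj] at e2
    have := mul_le_mul_of_nonneg_left (h x) hm.le
    linarith)
  constructor
  · have : m * (2 * n4 y) ≤ m * (3 * m) := by nlinarith
    exact le_of_mul_le_mul_left this hm
  · intro heq
    obtain ⟨l, hl, h2⟩ := c2 (by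
      have : m * (2 * n4 y) = m * (3 * m) := by rw [heq]
      nlinarith)
    obtain ⟨z, rfl⟩ := Phi_surj l hl
    have e : ((2 : ℤ) : O) • Y - (m : O) • z = 0 := by
      apply n4_eq_zero
      have e2 := Phi_sq (((2 : ℤ) : O) • Y - (m : O) • z)
      simp only [Phi_sub, h2, sub_self] at e2
      simp at e2; simpa using e2
    have e3 : (2 : O) • y = c • z := by
      funext i
      have := congrFun e i
      simp only [hY, Pi.sub_apply, Pi.smul_apply, smul_eq_mul, Pi.zero_apply, hmdef, ← mul_conj] at this
      push_cast at this
      have hcc : conj c ≠ 0 := fun h0 => hc (by rw [← conj_conj c, h0, map_zero])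
      have h5 : 2 * y i - c * z i = 0 := O_cancel hcc (by linear_combination this)
      simp only [Pi.smul_apply, smul_eq_mul]
      linear_combination h5
    have e4 := congrArg n4 e3
    rw [n4_smul, n4_smul, nm_two_O, ← hmdef] at e4
    have hz : n4 z = 6 := mul_left_cancel₀ hm.ne' (by linarith)
    obtain ⟨x, hx1, hx2⟩ := lam z hz
    refine ⟨x, hx1, ?_⟩
    rw [← h4_smul_left, e3, h4_smul_left, hx2]; ring

set_option linter.unusedSimpArgs false

/-! ### The rank 10 form -/

def pP (v : Fin 10 → O) : Fin 4 → O := ![v 0, v 1, v 2, v 3]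
def pQ (v : Fin 10 → O) : Fin 4 → O := ![v 4, v 5, v 6, v 7]

def q4 (x y : Fin 4 → O) : O :=
  -θ * (x 0 * conj (y 0) + x 1 * conj (y 1) + x 2 * conj (y 2) + x 3 * conj (y 3))
  + (x 0 * conj (y 1) + x 1 * conj (y 2) + x 2 * conj (y 3)
    - x 1 * conj (y 0) - x 2 * conj (y 1) - x 3 * conj (y 2))

lemma h4_q4 (x y : Fin 4 → O) : h4 x y = θ * q4 x y := by
  unfold h4 q4
  linear_combination (x 0 * conj (y 0) + x 1 * conj (y 1) + x 2 * conj (y 2)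
    + x 3 * conj (y 3)) * θ_mul_θ

def qf (v w : Fin 10 → O) : O :=
  q4 (pP v) (pP w) + q4 (pQ v) (pQ w) + (v 8 * conj (w 9) - v 9 * conj (w 8))

lemma psi_eq (v w : Fin 10 → O) : psi10 v w = h4 (pP v) (pP w) + h4 (pQ v) (pQ w)
    + θ * (v 8 * conj (w 9) - v 9 * conj (w 8)) := by
  simp only [psi10, Fin.sum_univ_succ, gram10, h4, pP, pQ]
  simp [Fin.ext_iff, conj_θ]
  ring

lemma psi_qf (v w : Fin 10 → O) : psi10 v w = θ * qf v w := by
  rw [psi_eq, h4_q4, h4_q4, qf]; ring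

lemma qf_add_left (u v w : Fin 10 → O) : qf (u + v) w = qf u w + qf v w := by
  simp [qf, q4, pP, pQ]; ring

lemma qf_smul_left (c : O) (v w : Fin 10 → O) : qf (c • v) w = c * qf v w := by
  simp [qf, q4, pP, pQ]; ring

lemma qf_symm (v w : Fin 10 → O) : qf w v = - conj (qf v w) := by
  simp [qf, q4, pP, pQ, conj_θ, conj_conj]; ring

lemma qf_add_right (u v w : Fin 10 → O) : qf u (v + w) = qf u v + qf u w := by
  rw [qf_symm (v + w) u, qf_add_left, map_add, qf_symm v u, qf_symm w u]; ring

lemma qf_smul_right (c : O) (v w : Fin 10 → O) : qf v (c • w) = conj c * qf v w := by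
  rw [qf_symm (c • w) v, qf_smul_left, map_mul, qf_symm w v]; ring

lemma qf_sub_left (u v w : Fin 10 → O) : qf (u - v) w = qf u w - qf v w := by
  have := qf_add_left (u - v) v w
  rw [sub_add_cancel] at this; rw [this]; ring

lemma qf_sub_right (u v w : Fin 10 → O) : qf u (v - w) = qf u v - qf u w := by
  have := qf_add_right u (v - w) w
  rw [sub_add_cancel] at this; rw [this]; ring

lemma psi_self (v : Fin 10 → O) :
    psi10 v v = ((n4 (pP v) + n4 (pQ v) - 3 * ci (v 8 * conj (v 9)) : ℤ) : O) := by
  rw [psi_eq, h4_self, h4_self]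
  apply O_ext <;> push_cast <;> simp only [cr_add, ci_add, cr_sub, ci_sub, cr_mul, ci_mul, cr_int,
    ci_int, cr_θ, ci_θ, cr_conj, ci_conj, cr_three, ci_three] <;> ring

/-! ### Unitary maps -/

lemma mkU (f : (Fin 10 → O) → (Fin 10 → O)) (ha : ∀ v w, f (v + w) = f v + f w)
    (hs : ∀ (c : O) v, f (c • v) = c • f v) (hq : ∀ v w, qf (f v) (f w) = qf v w)
    (hr : ∀ w, ∃ v, f v = w) :
    ∃ g : (Fin 10 → O) ≃ₗ[O] (Fin 10 → O), IsUnitary10 g ∧ ∀ v, g v = f v := by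
  let F : (Fin 10 → O) →ₗ[O] (Fin 10 → O) := ⟨⟨f, ha⟩, hs⟩
  have hsur : Function.Surjective F := hr
  have hinj : Function.Injective F := OrzechProperty.injective_of_surjective_endomorphism F hsur
  refine ⟨LinearEquiv.ofBijective F ⟨hinj, hsur⟩, ?_, fun v => rfl⟩
  intro v w
  rw [psi_qf, psi_qf]
  exact congrArg (θ * ·) (hq v w)

def U (g : (Fin 10 → O) ≃ₗ[O] (Fin 10 → O)) : Prop := IsUnitary10 g

lemma U_trans {g h : (Fin 10 → O) ≃ₗ[O] (Fin 10 → O)} (hg : IsUnitary10 g) (hh : IsUnitary10 h) :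
    IsUnitary10 (g.trans h) := fun x y => by
  rw [LinearEquiv.trans_apply, LinearEquiv.trans_apply, hh, hg]

lemma U_symm {g : (Fin 10 → O) ≃ₗ[O] (Fin 10 → O)} (hg : IsUnitary10 g) :
    IsUnitary10 g.symm := fun x y => by
  rw [← hg, LinearEquiv.apply_symm_apply, LinearEquiv.apply_symm_apply]

lemma qf_e_right (v : Fin 10 → O) : qf v (b 8) = - v 9 := by
  simp [qf, q4, pP, pQ, b, Pi.single_apply]

lemma qf_e_left (v : Fin 10 → O) : qf (b 8) v = conj (v 9) := by
  rw [qf_symm v, qf_e_right]; simp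

lemma trans_U (x : Fin 10 → O) (z : O) (hx9 : x 9 = 0)
    (hz : qf x x = conj z - z) :
    ∃ g : (Fin 10 → O) ≃ₗ[O] (Fin 10 → O), IsUnitary10 g ∧
      ∀ v, g v = v - v 9 • x + (qf v x + z * v 9) • b 8 := by
  have he9 : (b 8 : Fin 10 → O) 9 = 0 := by simp [b, Pi.single_apply]
  apply mkU
  · intro v w
    rw [qf_add_left, Pi.add_apply]; module
  · intro c v
    rw [qf_smul_left, Pi.smul_apply, smul_eq_mul]; module
  · intro v w
    simp only [qf_add_left, qf_add_right, qf_sub_left, qf_sub_right, qf_smul_left, qf_smul_right,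
      qf_e_right, qf_e_left, Pi.sub_apply, Pi.smul_apply, Pi.add_apply, he9, hx9, map_add, map_sub,
      map_mul, map_zero, smul_eq_mul, mul_zero, sub_zero, hz, add_zero]
    rw [qf_symm w x]
    ring
  · intro w
    refine ⟨w + w 9 • x + (- qf w x - conj z * w 9) • b 8, ?_⟩
    simp only [Pi.add_apply, Pi.smul_apply, smul_eq_mul, hx9, he9, mul_zero, add_zero, qf_add_left,
      qf_smul_left, qf_e_left, map_zero, hz]
    module

def ofPQ (p q : Fin 4 → O) : Fin 10 → O := ![p 0, p 1, p 2, p 3, q 0, q 1, q 2, q 3, 0, 0]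

lemma pP_of (p q : Fin 4 → O) : pP (ofPQ p q) = p := by
  funext i; fin_cases i <;> rfl
lemma pQ_of (p q : Fin 4 → O) : pQ (ofPQ p q) = q := by
  funext i; fin_cases i <;> rfl

lemma transl (v : Fin 10 → O) (p q : Fin 4 → O) (z : O) (hz : n4 p + n4 q = 3 * ci z) :
    ∃ g : (Fin 10 → O) ≃ₗ[O] (Fin 10 → O), IsUnitary10 g ∧
      pP (g v) = pP v - v 9 • p ∧ pQ (g v) = pQ v - v 9 • q ∧
      (g v) 8 = v 8 + (q4 (pP v) p + q4 (pQ v) q + z * v 9) ∧ (g v) 9 = v 9 := by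
  have h8 : (ofPQ p q) 8 = 0 := rfl
  have h9 : (ofPQ p q) 9 = 0 := rfl
  have hself := psi_self (ofPQ p q)
  rw [psi_qf, pP_of, pQ_of, h8, hz] at hself
  obtain ⟨g, hg, hv⟩ := trans_U (ofPQ p q) z h9 (by
    apply O_cancel θ_ne
    rw [hself]
    apply O_ext <;> simp only [cr_int, ci_int, cr_mul, ci_mul, cr_sub, ci_sub, cr_θ, ci_θ, cr_conj,
      ci_conj, zero_mul, ci_zero] <;> ring)
  have hqf : qf v (ofPQ p q) = q4 (pP v) p + q4 (pQ v) q := by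
    rw [qf, pP_of, pQ_of, h8, h9]; simp
  refine ⟨g, hg, ?_, ?_, ?_, ?_⟩
  · rw [hv]; funext i; fin_cases i <;> simp [pP, b, ofPQ] <;> rfl
  · rw [hv]; funext i; fin_cases i <;> simp [pQ, b, ofPQ] <;> rfl
  · rw [hv, hqf]; simp [b, Pi.single_apply, h8]
  · rw [hv]; simp [b, Pi.single_apply, h9]

lemma swap_U (v : Fin 10 → O) : ∃ g : (Fin 10 → O) ≃ₗ[O] (Fin 10 → O), IsUnitary10 g ∧
    (g v) 9 = v 8 := by
  obtain ⟨g, hg, hv⟩ := mkU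
    (fun v => ![v 0, v 1, v 2, v 3, v 4, v 5, v 6, v 7, - v 9, v 8])
    (by intro v w; funext i; fin_cases i <;> simp; ring)
    (by intro v w; funext i; fin_cases i <;> simp)
    (by intro v w; simp [qf, pP, pQ]; ring)
    (by
      intro w
      refine ⟨![w 0, w 1, w 2, w 3, w 4, w 5, w 6, w 7, w 9, - w 8], ?_⟩
      funext i; fin_cases i <;> simp)
  exact ⟨g, hg, by rw [hv]; rfl⟩

lemma block_U : ∃ g : (Fin 10 → O) ≃ₗ[O] (Fin 10 → O), IsUnitary10 g ∧
    g (b 8) = b 8 ∧ g (b 4) = b 0 := by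
  obtain ⟨g, hg, hv⟩ := mkU
    (fun v => ![v 4, v 5, v 6, v 7, v 0, v 1, v 2, v 3, v 8, v 9])
    (by intro v w; funext i; fin_cases i <;> simp)
    (by intro v w; funext i; fin_cases i <;> simp)
    (by intro v w; simp [qf, pP, pQ]; ring)
    (by
      intro w
      refine ⟨![w 4, w 5, w 6, w 7, w 0, w 1, w 2, w 3, w 8, w 9], ?_⟩
      funext i; fin_cases i <;> simp)
  refine ⟨g, hg, ?_, ?_⟩ <;> rw [hv] <;> funext i <;> fin_cases i <;> simp [b, Pi.single_apply]

lemma unitK_U (u : O) (hu : nm u = 1) : ∃ g : (Fin 10 → O) ≃ₗ[O] (Fin 10 → O), IsUnitary10 g ∧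
    g (b 8) = b 8 ∧ g (u • b 0) = b 0 := by
  have huu := unit_conj hu
  set t := conj u with ht
  have htc : conj t = u := conj_conj u
  obtain ⟨g, hg, hv⟩ := mkU
    (fun v => ![t * v 0, t * v 1, t * v 2, t * v 3, t * v 4, t * v 5, t * v 6, t * v 7, v 8, v 9])
    (by intro v w; funext i; fin_cases i <;> simp <;> ring)
    (by intro v w; funext i; fin_cases i <;> simp <;> ring)
    (by
      intro v w
      have e : ∀ x y : Fin 4 → O, q4 (t • x) (t • y) = q4 x y := by
        intro x y
        have e0 : q4 (t • x) (t • y) = (u * t) * q4 x y := by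
          simp only [q4, Pi.smul_apply, smul_eq_mul, map_mul, htc]; ring
        rw [e0, huu, one_mul]
      have e1 : ∀ x : Fin 10 → O, pP ![t * x 0, t * x 1, t * x 2, t * x 3, t * x 4, t * x 5,
          t * x 6, t * x 7, x 8, x 9] = t • pP x := by
        intro x; funext i; fin_cases i <;> simp [pP]
      have e2 : ∀ x : Fin 10 → O, pQ ![t * x 0, t * x 1, t * x 2, t * x 3, t * x 4, t * x 5,
          t * x 6, t * x 7, x 8, x 9] = t • pQ x := by
        intro x; funext i; fin_cases i <;> simp [pQ]
      simp only [qf, e1, e2, e]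
      simp)
    (by
      intro w
      refine ⟨![u * w 0, u * w 1, u * w 2, u * w 3, u * w 4, u * w 5, u * w 6, u * w 7, w 8, w 9],
        ?_⟩
      have e : ∀ y, t * (u * y) = y := fun y => by linear_combination y * huu
      funext i; fin_cases i <;> simp [e])
  refine ⟨g, hg, ?_, ?_⟩
  · rw [hv]; funext i; fin_cases i <;> simp [b, Pi.single_apply]
  · rw [hv]; funext i; fin_cases i <;> simp [b, Pi.single_apply, mul_comm t u, huu]

lemma scal_U (u : O) (hu : nm u = 1) : ∃ g : (Fin 10 → O) ≃ₗ[O] (Fin 10 → O), IsUnitary10 g ∧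
    ∀ v, g v = u • v := by
  have huu := unit_conj hu
  apply mkU
  · intro v w; exact smul_add _ _ _
  · intro c v; exact smul_comm _ _ _
  · intro v w
    rw [qf_smul_left, qf_smul_right]; linear_combination (qf v w) * huu
  · intro w; exact ⟨conj u • w, by rw [smul_smul, huu, one_smul]⟩

lemma refl_U (r : Fin 10 → O) (hr : psi10 r r = 3) : 
    ∃ g : (Fin 10 → O) ≃ₗ[O] (Fin 10 → O), IsUnitary10 g ∧
    ∀ v, g v = v - (ω * qf v r) • r := by
  have hq : qf r r = -θ := O_cancel θ_ne (by rw [← psi_qf, hr]; linear_combination θ_mul_θ)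
  apply mkU
  · intro v w; rw [qf_add_left]; module
  · intro c v; rw [qf_smul_left]; module
  · intro v w
    simp only [qf_sub_left, qf_sub_right, qf_smul_left, qf_smul_right, hq, map_mul, conj_ω]
    rw [qf_symm w r, θ_eq]
    linear_combination (2 * ω - 1) * (qf v r) * conj (qf w r) * ω_mul_ω
  · intro w
    refine ⟨w + ((1 - ω) * qf w r) • r, ?_⟩
    rw [qf_add_left, qf_smul_left, hq, θ_eq, add_sub_assoc, ← sub_smul]
    have : (1 - ω) * qf w r - ω * (qf w r + (1 - ω) * qf w r * -(2 * ω - 1)) = 0 := by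
      linear_combination (-2 * ω + 1) * qf w r * ω_mul_ω
    rw [this, zero_smul, add_zero]


/-! ### Descent -/

lemma n4_dvd (x : Fin 4 → O) : (3 : ℤ) ∣ n4 x := by
  have := Phi_sq x
  omega

lemma exists_min4 (y : Fin 4 → O) (c : O) : ∃ p, ∀ x, n4 (y - c • p) ≤ n4 (y - c • p - c • x) := by
  let f : (Fin 4 → O) → ℕ := fun p => (n4 (y - c • p)).toNat
  refine ⟨Function.argmin f, fun x => ?_⟩
  have h := Function.argmin_le f (Function.argmin f + x)
  have e : y - c • Function.argmin f - c • x = y - c • (Function.argmin f + x) := by module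
  rw [e]
  have h1 := n4_nonneg (y - c • Function.argmin f)
  have h2 := n4_nonneg (y - c • (Function.argmin f + x))
  change (n4 (y - c • Function.argmin f)).toNat ≤ (n4 (y - c • (Function.argmin f + x))).toNat at h
  omega

lemma step_min (v : Fin 10 → O) : ∃ g : (Fin 10 → O) ≃ₗ[O] (Fin 10 → O), IsUnitary10 g ∧
    (∀ x, n4 (pP (g v)) ≤ n4 (pP (g v) - v 9 • x)) ∧
    (∀ x, n4 (pQ (g v)) ≤ n4 (pQ (g v) - v 9 • x)) ∧ (g v) 9 = v 9 := by
  obtain ⟨p, hp⟩ := exists_min4 (pP v) (v 9)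
  obtain ⟨q, hq⟩ := exists_min4 (pQ v) (v 9)
  obtain ⟨k, hk⟩ := n4_dvd p
  obtain ⟨l, hl⟩ := n4_dvd q
  obtain ⟨g, hg, h1, h2, -, h4⟩ := transl v p q (((k + l : ℤ) : O) * ω) (by
    rw [ci_mul]; simp only [cr_int, ci_int, cr_ω, ci_ω]; rw [hk, hl]; ring)
  refine ⟨g, hg, ?_, ?_, h4⟩
  · rw [h1]; exact hp
  · rw [h2]; exact hq

lemma exists_shift (s m : ℤ) (hm : 0 < m) : ∃ k : ℤ, -m ≤ s + 2 * m * k ∧ s + 2 * m * k ≤ m := by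
  refine ⟨-((s + m) / (2 * m)), ?_, ?_⟩
  · have := Int.emod_nonneg (s + m) (show 2 * m ≠ 0 by omega)
    have h2 := Int.emod_add_mul_ediv (s + m) (2 * m)
    linarith
  · have := Int.emod_lt_of_pos (s + m) (show 0 < 2 * m by omega)
    have h2 := Int.emod_add_mul_ediv (s + m) (2 * m)
    linarith

lemma n4_zero : n4 0 = 0 := by simp [n4, t0, t1, t2, t3, nm_zero]

lemma q4_zero (x : Fin 4 → O) : q4 x 0 = 0 := by simp [q4]

lemma step_shift (v : Fin 10 → O) (hc : v 9 ≠ 0) :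
    ∃ g : (Fin 10 → O) ≃ₗ[O] (Fin 10 → O), IsUnitary10 g ∧
    pP (g v) = pP v ∧ pQ (g v) = pQ v ∧ (g v) 9 = v 9 ∧
    -(nm (v 9)) ≤ 2 * cr ((g v) 8 * conj (v 9)) + ci ((g v) 8 * conj (v 9)) ∧
    2 * cr ((g v) 8 * conj (v 9)) + ci ((g v) 8 * conj (v 9)) ≤ nm (v 9) := by
  obtain ⟨k, hk1, hk2⟩ := exists_shift
    (2 * cr (v 8 * conj (v 9)) + ci (v 8 * conj (v 9))) (nm (v 9)) (nm_pos hc)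
  obtain ⟨g, hg, h1, h2, h3, h4⟩ := transl v 0 0 (k : O) (by rw [n4_zero, ci_int]; ring)
  rw [q4_zero, q4_zero, zero_add, zero_add] at h3
  have e : (g v) 8 * conj (v 9) = v 8 * conj (v 9) + ((k * nm (v 9) : ℤ) : O) := by
    rw [h3]; push_cast; rw [← mul_conj]; ring
  refine ⟨g, hg, by rw [h1]; simp, by rw [h2]; simp, h4, ?_, ?_⟩ <;>
  · rw [e, cr_add, ci_add, cr_int, ci_int]; linarith

lemma four_nm (a c : O) : 4 * (nm a * nm c) =
    (2 * cr (a * conj c) + ci (a * conj c)) ^ 2 + 3 * ci (a * conj c) ^ 2 := by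
  rw [← nm_conj c, ← nm_mul, nm]; ring

lemma psi_self_int {v : Fin 10 → O} {t : ℤ} (h : psi10 v v = (t : O)) :
    n4 (pP v) + n4 (pQ v) - 3 * ci (v 8 * conj (v 9)) = t := by
  rw [psi_self] at h
  exact int_inj h

lemma arith_desc (A m s w : ℤ) (hm : 0 < m) (h : 4 * (A * m) = s ^ 2 + 3 * w ^ 2)
    (h1 : -m ≤ s) (h2 : s ≤ m) (h3 : -m ≤ w) (h4 : w ≤ m)
    (h5 : (-m < s ∧ s < m) ∨ (-m < w ∧ w < m)) : A < m := by
  have e1 : s ^ 2 ≤ m ^ 2 := by nlinarith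
  have e2 : w ^ 2 ≤ m ^ 2 := by nlinarith
  have e3 : s ^ 2 < m ^ 2 ∨ w ^ 2 < m ^ 2 := by
    rcases h5 with h5 | h5
    · left; nlinarith
    · right; nlinarith
  have : m * A < m * m := by rcases e3 with e3 | e3 <;> nlinarith
  exact lt_of_mul_lt_mul_left this hm.le

/-- decrease the first hyperbolic coordinate below the second one -/
lemma desc_main (v : Fin 10 → O) (hc : v 9 ≠ 0) (hv : psi10 v v = 0 ∨ psi10 v v = 3) :
    ∃ g : (Fin 10 → O) ≃ₗ[O] (Fin 10 → O), IsUnitary10 g ∧ nm ((g v) 8) < nm (v 9) := by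
  obtain ⟨g1, hg1, hP, hQ, h9⟩ := step_min v
  obtain ⟨g2, hg2, eP, eQ, e9, b1, b2⟩ := step_shift (g1 v) (by rw [h9]; exact hc)
  rw [← eP] at hP
  rw [← eQ] at hQ
  rw [h9] at e9 b1 b2
  have hgU := U_trans hg1 hg2
  have hgv : (g1.trans g2) v = g2 (g1 v) := rfl
  set g := g1.trans g2 with hgdef
  rw [← hgv] at eP eQ e9 hP hQ b1 b2
  set y := g v with hy
  set c := v 9 with hcdef
  have hm := nm_pos hc
  obtain ⟨mP, mP'⟩ := cover4 (pP y) c hc hP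
  obtain ⟨mQ, -⟩ := cover4 (pQ y) c hc hQ
  have p0 := n4_nonneg (pP y)
  have q0 := n4_nonneg (pQ y)
  have hself : psi10 y y = psi10 v v := hgU v v
  have hfour := four_nm (y 8) c
  rcases hv with hv | hv
  · have hn := psi_self_int (v := y) (t := 0) (by rw [hself, hv]; simp)
    rw [e9] at hn
    by_cases hs : nm (y 8) < nm c
    · exact ⟨g, hgU, hs⟩
    have hw : ci (y 8 * conj c) = nm c := by
      by_contra hne
      apply hs
      apply arith_desc _ _ _ _ hm hfour b1 b2 (by linarith) (by linarith)
      right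
      constructor
      · linarith
      · exact lt_of_le_of_ne (by linarith) hne
    have hss : 2 * cr (y 8 * conj c) + ci (y 8 * conj c) = nm c ∨
        2 * cr (y 8 * conj c) + ci (y 8 * conj c) = -nm c := by
      by_contra hne
      push Not at hne
      apply hs
      apply arith_desc _ _ _ _ hm hfour b1 b2 (by linarith) (by linarith)
      left
      exact ⟨lt_of_le_of_ne b1 (Ne.symm hne.2), lt_of_le_of_ne b2 hne.1⟩
    obtain ⟨x, hx1, hx2⟩ := mP' (by linarith)
    have hcc : conj c ≠ 0 := fun h0 => hc (by rw [← conj_conj c, h0, map_zero])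
    obtain ⟨z, hz1, hz2⟩ : ∃ z : O, ci z = 1 ∧ y 8 + z * c = θ * c := by
      rcases hss with hss | hss
      · refine ⟨ω - 1, by simp [ci_sub, ci_ω, ci_one], ?_⟩
        have : y 8 = ω * c := by
          apply O_cancel hcc
          apply O_ext
          · rw [mul_comm, mul_comm (conj c), mul_assoc, mul_conj]
            rw [cr_mul ω, cr_ω, ci_ω, cr_int, ci_int]; linarith
          · rw [mul_comm, mul_comm (conj c), mul_assoc, mul_conj]
            rw [ci_mul ω, cr_ω, ci_ω, cr_int, ci_int]; linarith
        rw [this, θ_eq]; ring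
      · refine ⟨ω, ci_ω, ?_⟩
        have : y 8 = (ω - 1) * c := by
          apply O_cancel hcc
          apply O_ext
          · rw [mul_comm, mul_comm (conj c), mul_assoc, mul_conj]
            rw [cr_mul (ω - 1), cr_sub, ci_sub, cr_one, ci_one, cr_ω, ci_ω, cr_int, ci_int]; linarith
          · rw [mul_comm, mul_comm (conj c), mul_assoc, mul_conj]
            rw [ci_mul (ω - 1), cr_sub, ci_sub, cr_one, ci_one, cr_ω, ci_ω, cr_int, ci_int]; linarith
        rw [this, θ_eq]; ring
    obtain ⟨g3, hg3, -, -, h8, -⟩ := transl y x 0 z (by rw [hx1, n4_zero, hz1]; norm_num)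
    rw [q4_zero, add_zero, e9] at h8
    refine ⟨g.trans g3, U_trans hgU hg3, ?_⟩
    have h2a : 2 * (g3 y) 8 = θ * c := by
      apply O_cancel θ_ne
      rw [h8]
      rw [h4_q4] at hx2
      linear_combination 2 * θ * hz2 + hx2 + c * θ_mul_θ
    have := congrArg nm h2a
    rw [nm_mul, nm_mul, nm_two_O, nm_θ] at this
    show nm ((g3 y) 8) < nm c
    linarith
  · have hn := psi_self_int (v := y) (t := 3) (by rw [hself, hv]; simp)
    rw [e9] at hn
    by_cases hw : -nm c < ci (y 8 * conj c)
    · refine ⟨g, hgU, ?_⟩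
      apply arith_desc _ _ _ _ hm hfour b1 b2 (by linarith) (by linarith)
      right
      exact ⟨hw, by linarith⟩
    · have hm1 : nm c = 1 := by linarith
      have hw1 : ci (y 8 * conj c) = -1 := by linarith
      have zP : pP y = 0 := n4_eq_zero (by linarith)
      have zQ : pQ y = 0 := n4_eq_zero (by linarith)
      have ht : n4 (tv 0) = 3 := by simp [n4, t0, t1, t2, t3, tv, nm_θ, nm_zero]
      obtain ⟨g3, hg3, iP, iQ, -, i9⟩ := transl y (tv 0) 0 ω (by rw [ht, n4_zero, ci_ω]; norm_num)
      obtain ⟨g4, hg4, jP, jQ, j9, k1, k2⟩ := step_shift (g3 y) (by rw [i9, e9]; exact hc)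
      rw [i9, e9] at j9 k1 k2
      have hU := U_trans (U_trans hgU hg3) hg4
      refine ⟨_, hU, ?_⟩
      show nm (g4 (g3 y) 8) < nm c
      have hself2 : psi10 (g4 (g3 y)) (g4 (g3 y)) = psi10 v v := hU v v
      have hn2 := psi_self_int (v := g4 (g3 y)) (t := 3) (by rw [hself2, hv]; simp)
      have hfour2 := four_nm (g4 (g3 y) 8) c
      rw [jP, jQ, iP, iQ, zP, zQ, e9, j9] at hn2
      have n1 : n4 (0 - c • tv 0) = 3 := by
        rw [show 0 - c • tv 0 = (-c) • tv 0 by module, n4_smul, nm_neg, hm1, ht]; norm_num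
      have n2 : n4 (0 - c • (0 : Fin 4 → O)) = 0 := by
        rw [show 0 - c • (0 : Fin 4 → O) = 0 by module, n4_zero]
      rw [n1, n2] at hn2
      apply arith_desc _ _ _ _ hm hfour2 k1 k2 (by linarith) (by linarith)
      right
      constructor <;> linarith

lemma desc (n : ℕ) : ∀ v : Fin 10 → O, nm (v 9) ≤ n → (psi10 v v = 0 ∨ psi10 v v = 3) →
    ∃ g : (Fin 10 → O) ≃ₗ[O] (Fin 10 → O), IsUnitary10 g ∧ (g v) 9 = 0 := by
  induction n with
  | zero =>
    intro v hn hv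
    exact ⟨LinearEquiv.refl O _, fun _ _ => rfl,
      nm_eq_zero (le_antisymm (by simpa using hn) (nm_nonneg _))⟩
  | succ n ih =>
    intro v hn hv
    by_cases hc : v 9 = 0
    · exact ⟨LinearEquiv.refl O _, fun _ _ => rfl, hc⟩
    obtain ⟨g, hg, hlt⟩ := desc_main v hc hv
    obtain ⟨g2, hg2, h9⟩ := swap_U (g v)
    have hU := U_trans hg hg2
    obtain ⟨g3, hg3, h0⟩ := ih ((g.trans g2) v) (by
      show nm ((g2 (g v)) 9) ≤ n
      rw [h9]; push_cast at hn; linarith) (by rw [hU]; exact hv)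
    exact ⟨_, U_trans hU hg3, h0⟩

lemma desc' (v : Fin 10 → O) (hv : psi10 v v = 0 ∨ psi10 v v = 3) :
    ∃ g : (Fin 10 → O) ≃ₗ[O] (Fin 10 → O), IsUnitary10 g ∧ (g v) 9 = 0 :=
  desc (nm (v 9)).toNat v (by rw [Int.toNat_of_nonneg (nm_nonneg _)]) hv


/-! ### End of the proof -/

lemma ext10 {v w : Fin 10 → O} (hP : pP v = pP w) (hQ : pQ v = pQ w) (h8 : v 8 = w 8)
    (h9 : v 9 = w 9) : v = w := by
  funext i
  fin_cases i
  · exact congrFun hP 0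
  · exact congrFun hP 1
  · exact congrFun hP 2
  · exact congrFun hP 3
  · exact congrFun hQ 0
  · exact congrFun hQ 1
  · exact congrFun hQ 2
  · exact congrFun hQ 3
  · exact h8
  · exact h9

lemma pP_e (a : O) : pP (a • b 8) = 0 := by
  funext i; fin_cases i <;> simp [pP, b]
lemma pQ_e (a : O) : pQ (a • b 8) = 0 := by
  funext i; fin_cases i <;> simp [pQ, b]

lemma null_eq {v : Fin 10 → O} (h0 : psi10 v v = 0) (h9 : v 9 = 0) : v = v 8 • b 8 := by
  have h := psi_self_int (v := v) (t := 0) (by rw [h0]; simp)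
  rw [h9, map_zero, mul_zero, ci_zero] at h
  have := n4_nonneg (pP v)
  have := n4_nonneg (pQ v)
  apply ext10
  · rw [pP_e]; exact n4_eq_zero (by linarith)
  · rw [pQ_e]; exact n4_eq_zero (by linarith)
  · simp [b]
  · simp [b, h9]

lemma to_e (n : Fin 10 → O) (hp : IsPrimVec n) (h0 : psi10 n n = 0) :
    ∃ g : (Fin 10 → O) ≃ₗ[O] (Fin 10 → O), IsUnitary10 g ∧ g n = b 8 := by
  obtain ⟨g, hg, h9⟩ := desc' n (Or.inl h0)
  have e := null_eq (v := g n) (by rw [hg]; exact h0) h9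
  set a := (g n) 8
  have hu : IsUnit a := hp a ⟨g.symm (b 8), by
    rw [← map_smul, ← e, LinearEquiv.symm_apply_apply]⟩
  have hn := nm_isUnit hu
  obtain ⟨g2, hg2, h2⟩ := scal_U (conj a) (by rw [nm_conj]; exact hn)
  refine ⟨_, U_trans hg hg2, ?_⟩
  rw [LinearEquiv.trans_apply, h2, e, smul_smul, mul_comm, unit_conj hn, one_smul]

def EU (x y : Fin 10 → O) : Prop :=
  ∃ g : (Fin 10 → O) ≃ₗ[O] (Fin 10 → O), IsUnitary10 g ∧ g (b 8) = b 8 ∧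
    ∃ u, nm u = 1 ∧ g x = u • y

lemma EU.trans {x y z : Fin 10 → O} (h1 : EU x y) (h2 : EU y z) : EU x z := by
  obtain ⟨g, hg, he, u, hu, hx⟩ := h1
  obtain ⟨g', hg', he', u', hu', hx'⟩ := h2
  refine ⟨_, U_trans hg hg', ?_, u * u', by rw [nm_mul, hu, hu']; norm_num, ?_⟩
  · rw [LinearEquiv.trans_apply, he, he']
  · rw [LinearEquiv.trans_apply, hx, map_smul, hx', smul_smul]

lemma EU_of {r s : Fin 10 → O} (hr : psi10 r r = 3) (hs : psi10 s s = 3) (hr9 : r 9 = 0)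
    (hs9 : s 9 = 0) (h : nm (qf r s) = 1) : EU r s := by
  obtain ⟨g, hg, hgv⟩ := refl_U s hs
  obtain ⟨g', hg', hgv'⟩ := refl_U r hr
  have hq : qf r r = -θ := O_cancel θ_ne (by rw [← psi_qf, hr]; linear_combination θ_mul_θ)
  refine ⟨_, U_trans hg hg', ?_, -(ω * qf r s), ?_, ?_⟩
  · rw [LinearEquiv.trans_apply, hgv, qf_e_left, hs9]
    simp only [map_zero, mul_zero, zero_smul, sub_zero]
    rw [hgv', qf_e_left, hr9]
    simp
  · rw [nm_neg, nm_mul, nm_ω, h]; norm_num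
  · have huu := unit_conj h
    have e : qf (r - (ω * qf r s) • s) r = 1 - ω := by
      rw [qf_sub_left, qf_smul_left, hq, qf_symm r s, θ_eq]
      linear_combination ω * huu
    rw [LinearEquiv.trans_apply, hgv, hgv', e]
    have e2 : ω * (1 - ω) = 1 := by linear_combination -ω_mul_ω
    rw [e2]; module

lemma b_nine (i : Fin 10) (hi : i.val < 8) : (b i : Fin 10 → O) 9 = 0 := by
  have : (9 : Fin 10) ≠ i := by intro h; rw [← h] at hi; simp at hi
  simp [b, Pi.single_apply, this]

lemma b_eight (i : Fin 10) (hi : i.val < 8) : (b i : Fin 10 → O) 8 = 0 := by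
  have : (8 : Fin 10) ≠ i := by intro h; rw [← h] at hi; simp at hi
  simp [b, Pi.single_apply, this]

lemma qf_b (i j : Fin 10) : θ * qf (b i) (b j) = gram10 i j := by
  rw [← psi_qf]; simp [psi10, b, Pi.single_apply]

lemma psi_b (i : Fin 10) (hi : i.val < 8) : psi10 (b i) (b i) = 3 := by
  rw [psi_qf, qf_b]; simp [gram10, hi]

lemma nm_qf_b (i j : Fin 10) (h : nm (gram10 i j) = 3) : nm (qf (b i) (b j)) = 1 := by
  rw [← qf_b, nm_mul, nm_θ] at h; linarith

lemma neighbor : ∀ i : Fin 10, i.val < 8 → ∃ j : Fin 10, j.val < 8 ∧ nm (qf (b i) (b j)) = 1 := by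
  have key : ∀ i : Fin 10, i.val < 8 → ∃ j : Fin 10, j.val < 8 ∧ (i : ℕ) / 4 = (j : ℕ) / 4 ∧ i ≠ j ∧
      (i.val + 1 = j.val ∨ ((j : ℕ) + 1 = i ∧ ¬ i.val + 1 = j.val)) := by decide
  intro i hi
  obtain ⟨j, hj, h1, h2, h3⟩ := key i hi
  refine ⟨j, hj, nm_qf_b i j ?_⟩
  rcases h3 with h3 | ⟨h3, h4⟩
  · simp only [gram10, hi, hj, h1, h2, h3, and_self, if_true, if_false, nm_θ]
  · simp only [gram10, hi, hj, h1, h2, h3, h4, and_self, if_true, if_false, nm_conj, nm_θ]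

lemma EU_step (i j : Fin 10) (hi : i.val < 8) (hj : j.val < 8) (h : (i : ℕ) / 4 = (j : ℕ) / 4)
    (h1 : (j : ℕ) + 1 = i) : EU (b i) (b j) := by
  apply EU_of (psi_b i hi) (psi_b j hj) (b_nine i hi) (b_nine j hj)
  apply nm_qf_b
  have h2 : i ≠ j := by intro h2; rw [h2] at h1; omega
  have h3 : ¬ i.val + 1 = j.val := by omega
  simp only [gram10, hi, hj, h1, h2, h, h3, and_self, if_true, if_false, nm_conj, nm_θ]

lemma EU_zero (i : Fin 10) (hi : i.val < 8) : EU (b i) (b 0) := by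
  have s10 := EU_step 1 0 (by decide) (by decide) (by decide) (by decide)
  have s21 := EU_step 2 1 (by decide) (by decide) (by decide) (by decide)
  have s32 := EU_step 3 2 (by decide) (by decide) (by decide) (by decide)
  have s54 := EU_step 5 4 (by decide) (by decide) (by decide) (by decide)
  have s65 := EU_step 6 5 (by decide) (by decide) (by decide) (by decide)
  have s76 := EU_step 7 6 (by decide) (by decide) (by decide) (by decide)
  have s00 : EU (b 0) (b 0) := ⟨LinearEquiv.refl O _, fun _ _ => rfl, rfl, 1, nm_one, by simp⟩
  have s40 : EU (b 4) (b 0) := by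
    obtain ⟨g, hg, h8, h4⟩ := block_U
    exact ⟨g, hg, h8, 1, nm_one, by rw [h4, one_smul]⟩
  fin_cases i
  · exact s00
  · exact s10
  · exact s21.trans s10
  · exact (s32.trans s21).trans s10
  · exact s40
  · exact s54.trans s40
  · exact (s65.trans s54).trans s40
  · exact ((s76.trans s65).trans s54).trans s40
  · simp at hi
  · simp at hi

lemma exists_ne_zero (x : Fin 10 → O) (h : psi10 x x = 3) (h9 : x 9 = 0) :
    ∃ i : Fin 10, i.val < 8 ∧ qf x (b i) ≠ 0 := by
  by_contra hne
  push Not at hne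
  have e : qf x x = conj (x 0) * qf x (b 0) + conj (x 1) * qf x (b 1) + conj (x 2) * qf x (b 2)
      + conj (x 3) * qf x (b 3) + conj (x 4) * qf x (b 4) + conj (x 5) * qf x (b 5)
      + conj (x 6) * qf x (b 6) + conj (x 7) * qf x (b 7) := by
    simp [qf, q4, pP, pQ, b, h9]; ring
  rw [psi_qf, e, hne 0 (by decide), hne 1 (by decide), hne 2 (by decide), hne 3 (by decide),
    hne 4 (by decide), hne 5 (by decide), hne 6 (by decide), hne 7 (by decide)] at h
  simp at h
  exact three_ne h.symm

lemma cs (x : Fin 10 → O) (h : psi10 x x = 3) (h9 : x 9 = 0) (i : Fin 10) (hi : i.val < 8) :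
    nm (qf x (b i)) ≤ 3 ∧ (nm (qf x (b i)) = 3 →
      ∃ k : O, (3 : O) • x = (θ * qf x (b i)) • b i + k • b 8) := by
  set q := qf x (b i) with hq
  set w := (3 : O) • x - (θ * q) • b i with hw
  have hw9 : w 9 = 0 := by simp [hw, h9, b_nine i hi]
  have hxx : qf x x = -θ := O_cancel θ_ne (by rw [← psi_qf, h]; linear_combination θ_mul_θ)
  have hbb : qf (b i) (b i) = -θ :=
    O_cancel θ_ne (by rw [← psi_qf, psi_b i hi]; linear_combination θ_mul_θ)
  have hww : psi10 w w = ((27 - 9 * nm q : ℤ) : O) := by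
    rw [psi_qf, hw]
    simp only [qf_sub_left, qf_sub_right, qf_smul_left, qf_smul_right, hxx, hbb, map_mul, conj_θ,
      map_ofNat]
    rw [qf_symm x (b i), ← hq]
    push_cast
    rw [← mul_conj]
    linear_combination (-9 + 3 * q * conj q + q * conj q * θ * θ) * θ_mul_θ
  have h1 := psi_self_int hww
  rw [hw9, map_zero, mul_zero, ci_zero] at h1
  have p0 := n4_nonneg (pP w)
  have q0 := n4_nonneg (pQ w)
  refine ⟨by linarith, fun h3 => ⟨w 8, ?_⟩⟩
  have := null_eq (v := w) (by rw [hww, h3]; norm_num) hw9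
  rw [← this, hw]; module

lemma exists_root (x : Fin 10 → O) (h : psi10 x x = 3) (h9 : x 9 = 0) :
    ∃ i : Fin 10, i.val < 8 ∧ nm (qf x (b i)) = 1 := by
  obtain ⟨i, hi, hne⟩ := exists_ne_zero x h h9
  obtain ⟨c1, c2⟩ := cs x h h9 i hi
  have hp := nm_pos hne
  have h2 := nm_ne_two (qf x (b i))
  by_cases h1 : nm (qf x (b i)) = 1
  · exact ⟨i, hi, h1⟩
  have h3 : nm (qf x (b i)) = 3 := by omega
  obtain ⟨k, hk⟩ := c2 h3
  obtain ⟨j, hj, hij⟩ := neighbor i hi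
  refine ⟨j, hj, ?_⟩
  have e := congrArg (fun v => nm (qf v (b j))) hk
  simp only [qf_add_left, qf_smul_left, qf_e_left, b_nine j hj, map_zero, mul_zero, add_zero, nm_mul,
    nm_θ, h3, hij] at e
  have : nm (3 : O) = 9 := by simp [nm, cr_three, ci_three]
  rw [this] at e
  linarith

lemma to_b0 (x : Fin 10 → O) (h : psi10 x x = 3) (h9 : x 9 = 0) :
    ∃ g : (Fin 10 → O) ≃ₗ[O] (Fin 10 → O), IsUnitary10 g ∧ g (b 8) = b 8 ∧ g x = b 0 := by
  obtain ⟨i, hi, h1⟩ := exists_root x h h9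
  obtain ⟨g, hg, he, u, hu, hx⟩ := (EU_of h (psi_b i hi) h9 (b_nine i hi) h1).trans (EU_zero i hi)
  obtain ⟨g', hg', he', hx'⟩ := unitK_U u hu
  refine ⟨_, U_trans hg hg', ?_, ?_⟩
  · rw [LinearEquiv.trans_apply, he, he']
  · rw [LinearEquiv.trans_apply, hx, hx']

lemma psi_e (v : Fin 10 → O) : psi10 v (b 8) = - (θ * v 9) := by
  rw [psi_qf, qf_e_right]; ring

lemma to_std (x n : Fin 10 → O) (h : psi10 x x = 3) (hp : IsPrimVec n) (h0 : psi10 n n = 0)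
    (hxn : psi10 x n = 0) :
    ∃ g : (Fin 10 → O) ≃ₗ[O] (Fin 10 → O), IsUnitary10 g ∧ g x = b 0 ∧ g n = b 8 := by
  obtain ⟨g, hg, hn⟩ := to_e n hp h0
  have h9 : (g x) 9 = 0 := by
    rw [← hg, hn, psi_e] at hxn
    exact (O_mul_eq_zero (neg_eq_zero.1 hxn)).resolve_left θ_ne
  obtain ⟨g', hg', he, hx⟩ := to_b0 (g x) (by rw [hg]; exact h) h9
  exact ⟨_, U_trans hg hg', hx, by rw [LinearEquiv.trans_apply, hn, he]⟩

lemma part1 (x : Fin 10 → O) (h : psi10 x x = 3) :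
    ∃ n : Fin 10 → O, IsPrimVec n ∧ psi10 n n = 0 ∧ psi10 x n = 0 := by
  obtain ⟨g, hg, h9⟩ := desc' x (Or.inr h)
  refine ⟨g.symm (b 8), ?_, ?_, ?_⟩
  · rintro a ⟨y, hy⟩
    have e : b 8 = a • g y := by rw [← map_smul, ← hy, LinearEquiv.apply_symm_apply]
    have e8 := congrFun e 8
    simp only [b, Pi.single_eq_same, Pi.smul_apply, smul_eq_mul] at e8
    exact IsUnit.of_mul_eq_one _ e8.symm
  · rw [← hg, LinearEquiv.apply_symm_apply, psi_e, b]; simp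
  · rw [← hg, LinearEquiv.apply_symm_apply, psi_e, h9]; simp

lemma part2 (x n x' n' : Fin 10 → O)
    (h1 : psi10 x x = 3) (h2 : IsPrimVec n) (h3 : psi10 n n = 0) (h4 : psi10 x n = 0)
    (h1' : psi10 x' x' = 3) (h2' : IsPrimVec n') (h3' : psi10 n' n' = 0) (h4' : psi10 x' n' = 0) :
    ∃ g : (Fin 10 → O) ≃ₗ[O] (Fin 10 → O), IsUnitary10 g ∧ g x = x' ∧ g n = n' := by
  obtain ⟨g, hg, hx, hn⟩ := to_std x n h1 h2 h3 h4
  obtain ⟨g', hg', hx', hn'⟩ := to_std x' n' h1' h2' h3' h4'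
  refine ⟨_, U_trans hg (U_symm hg'), ?_, ?_⟩
  · rw [LinearEquiv.trans_apply, hx, ← hx', LinearEquiv.symm_apply_apply]
  · rw [LinearEquiv.trans_apply, hn, ← hn', LinearEquiv.symm_apply_apply]


/-- Every 3-vector of `Λ` is perpendicular to some primitive isotropic
vector, and `U(Λ)` acts transitively on the pairs `(r, n)` of a 3-vector `r` and a
primitive isotropic vector `n` with `ψ(r,n) = 0`.  In particular `U(Λ)` acts
transitively on the 3-vectors of `Λ`. -/
theorem statement7 :
    (∀ x : Fin 10 → O, psi10 x x = 3 →
      ∃ n : Fin 10 → O, IsPrimVec n ∧ psi10 n n = 0 ∧ psi10 x n = 0) ∧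
    (∀ x n x' n' : Fin 10 → O,
      psi10 x x = 3 → IsPrimVec n → psi10 n n = 0 → psi10 x n = 0 →
      psi10 x' x' = 3 → IsPrimVec n' → psi10 n' n' = 0 → psi10 x' n' = 0 →
      ∃ g : (Fin 10 → O) ≃ₗ[O] (Fin 10 → O), IsUnitary10 g ∧ g x = x' ∧ g n = n') ∧
    (∀ x x' : Fin 10 → O, psi10 x x = 3 → psi10 x' x' = 3 →
      ∃ g : (Fin 10 → O) ≃ₗ[O] (Fin 10 → O), IsUnitary10 g ∧ g x = x') := by
  refine ⟨part1, part2, ?_⟩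
  intro x x' h h'
  obtain ⟨n, a1, a2, a3⟩ := part1 x h
  obtain ⟨n', a1', a2', a3'⟩ := part1 x' h'
  obtain ⟨g, hg, hx, -⟩ := part2 x n x' n' h a1 a2 a3 h' a1' a2' a3'
  exact ⟨g, hg, hx⟩

end
end

section
/- Every 6-vector of the rank-10 𝒪-lattice Λ = Λ′ ⊥ Λ″ ⊥ H_𝒪 is perpendicular to some primitive isotropic vector of Λ, and the group U(Λ) acts transitively on the set of 6-vectors of Λ. The U(Λ)-action on the set of pairs (z, n), where z is a 6-vector, n is a primitive isotropic vector and ψ(z, n) = 0, has exactly two orbits: every such pair is U(Λ)-equivalent to exactly one of (r₁′ + r₂′, e) (type (θ)) and (r₁′ + r₁″, e) (type (0)). -/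
open Polynomial

noncomputable section

namespace S8
-- conj, coordinates
abbrev QE : Type := QuadraticAlgebra ℤ (-1) 1

def toQ : O →+* QE :=
  AdjoinRoot.lift (algebraMap ℤ QE) (⟨0, 1⟩ : QE) (by
    simp only [eval₂_add, eval₂_sub, eval₂_pow, eval₂_X, eval₂_one]
    ext <;> simp [pow_two] <;> rfl)

/-- first coordinate -/
def re (z : O) : ℤ := (toQ z).re
/-- coordinate of `ω` -/
def im (z : O) : ℤ := (toQ z).im

lemma toQ_ω : toQ ω = ⟨0, 1⟩ := by simp [toQ, ω]

@[simp] lemma re_ω : re ω = 0 := by simp [re, toQ_ω]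
@[simp] lemma im_ω : im ω = 1 := by simp [im, toQ_ω]
@[simp] lemma re_add (x y : O) : re (x + y) = re x + re y := by simp [re]
@[simp] lemma im_add (x y : O) : im (x + y) = im x + im y := by simp [im]
@[simp] lemma re_sub (x y : O) : re (x - y) = re x - re y := by simp [re]
@[simp] lemma im_sub (x y : O) : im (x - y) = im x - im y := by simp [im]
@[simp] lemma re_neg (x : O) : re (-x) = - re x := by simp [re]
@[simp] lemma im_neg (x : O) : im (-x) = - im x := by simp [im]
@[simp] lemma re_zero : re 0 = 0 := by simp [re]
@[simp] lemma im_zero : im 0 = 0 := by simp [im]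
@[simp] lemma re_one : re 1 = 1 := by simp [re]; rfl
@[simp] lemma im_one : im 1 = 0 := by simp [im]; rfl
@[simp] lemma re_intCast (n : ℤ) : re (n : O) = n := by simp [re]
@[simp] lemma im_intCast (n : ℤ) : im (n : O) = 0 := by simp [im]
@[simp] lemma re_two : re (2 : O) = 2 := by
  have h := re_intCast 2; norm_num at h; exact h
@[simp] lemma im_two : im (2 : O) = 0 := by
  have h := im_intCast 2; norm_num at h; exact h
@[simp] lemma re_three : re (3 : O) = 3 := by
  have h := re_intCast 3; norm_num at h; exact h
@[simp] lemma im_three : im (3 : O) = 0 := by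
  have h := im_intCast 3; norm_num at h; exact h
@[simp] lemma re_four : re (4 : O) = 4 := by
  have h := re_intCast 4; norm_num at h; exact h
@[simp] lemma im_four : im (4 : O) = 0 := by
  have h := im_intCast 4; norm_num at h; exact h
@[simp] lemma re_six : re (6 : O) = 6 := by
  have h := re_intCast 6; norm_num at h; exact h
@[simp] lemma im_six : im (6 : O) = 0 := by
  have h := im_intCast 6; norm_num at h; exact h
@[simp] lemma re_twelve : re (12 : O) = 12 := by
  have h := re_intCast 12; norm_num at h; exact h
@[simp] lemma im_twelve : im (12 : O) = 0 := by
  have h := im_intCast 12; norm_num at h; exact h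
@[simp] lemma re_mul (x y : O) : re (x * y) = re x * re y - im x * im y := by
  simp [re, im]; ring
@[simp] lemma im_mul (x y : O) : im (x * y) = re x * im y + im x * re y + im x * im y := by
  simp [re, im]

lemma O_rep (z : O) : ∃ m n : ℤ, z = m + n * ω := by
  induction z using AdjoinRoot.induction_on with
  | ih q =>
    induction q using Polynomial.induction_on' with
    | add p q hp hq =>
      obtain ⟨a, c, h⟩ := hp
      obtain ⟨d, e, h'⟩ := hq
      exact ⟨a + d, c + e, by rw [map_add, h, h']; push_cast; ring⟩
    | monomial n a =>
      induction n with
      | zero => exact ⟨a, 0, by simp⟩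
      | succ n ih =>
        obtain ⟨c, d, h⟩ := ih
        refine ⟨-d, c + d, ?_⟩
        have h2 : (monomial (n+1) a : ℤ[X]) = monomial n a * X := by
          rw [monomial_mul_X]
        rw [h2, map_mul, h]
        have h3 : (AdjoinRoot.mk (X ^ 2 - X + 1 : ℤ[X])) X = ω := rfl
        rw [h3]; push_cast
        linear_combination (d : O) * ω_sq

lemma O_eq (z : O) : z = re z + im z * ω := by
  obtain ⟨m, n, rfl⟩ := O_rep z
  simp

lemma O_ext {x y : O} (h : re x = re y) (h' : im x = im y) : x = y := by
  rw [O_eq x, O_eq y, h, h']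

lemma conj_ω : conj ω = 1 - ω := by simp [conj, ω]
@[simp] lemma re_conj (x : O) : re (conj x) = re x + im x := by
  rw [O_eq x]; simp [conj_ω]
@[simp] lemma im_conj (x : O) : im (conj x) = - im x := by
  rw [O_eq x]; simp [conj_ω]
@[simp] lemma conj_conj (x : O) : conj (conj x) = x := by
  apply O_ext <;> simp
@[simp] lemma re_θ : re θ = -1 := by simp [θ]
@[simp] lemma im_θ : im θ = 2 := by simp [θ]
lemma conj_θ : conj θ = -θ := by apply O_ext <;> simp
lemma θ_mul : θ * θ = -3 := by apply O_ext <;> simp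

/-- the norm -/
def nm (x : O) : ℤ := re x ^ 2 + re x * im x + im x ^ 2
lemma mul_conj (x : O) : x * conj x = (nm x : O) := by
  apply O_ext
  · rw [re_intCast]; simp [nm]; ring
  · rw [im_intCast]; simp; ring
lemma conj_mul' (x : O) : conj x * x = (nm x : O) := by rw [mul_comm, mul_conj]
lemma nm_mul (x y : O) : nm (x * y) = nm x * nm y := by simp [nm]; ring
lemma nm_conj (x : O) : nm (conj x) = nm x := by simp [nm]; ring
lemma nm_nonneg (x : O) : 0 ≤ nm x := by
  simp only [nm]; nlinarith [sq_nonneg (re x + im x), sq_nonneg (re x), sq_nonneg (im x)]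
lemma nm_eq_zero {x : O} (h : nm x = 0) : x = 0 := by
  simp only [nm] at h
  have h1 : im x ^ 2 = 0 := by
    nlinarith [sq_nonneg (2 * re x + im x), sq_nonneg (im x)]
  have h1 := pow_eq_zero_iff (two_ne_zero) |>.1 h1
  rw [h1] at h
  have h2 : re x = 0 := by nlinarith
  apply O_ext <;> simp [h1, h2]
lemma nm_pos {x : O} (h : x ≠ 0) : 0 < nm x :=
  lt_of_le_of_ne (nm_nonneg x) fun h' => h (nm_eq_zero h'.symm)
@[simp] lemma nm_zero : nm 0 = 0 := by simp [nm]
@[simp] lemma nm_one : nm 1 = 1 := by simp [nm]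
@[simp] lemma nm_θ : nm θ = 3 := by simp [nm]
instance : NoZeroDivisors O where
  eq_zero_or_eq_zero_of_mul_eq_zero := by
    intro x y h
    have : nm x * nm y = 0 := by rw [← nm_mul, h, nm_zero]
    rcases mul_eq_zero.1 this with h | h
    · exact Or.inl (nm_eq_zero h)
    · exact Or.inr (nm_eq_zero h)
instance : Nontrivial O := ⟨0, 1, fun h => by simpa using congrArg re h⟩
instance : IsDomain O := NoZeroDivisors.to_isDomain O
lemma θ_ne : θ ≠ 0 := fun h => by simpa using congrArg re h
lemma isUnit_of_nm {x : O} (h : nm x = 1) : IsUnit x :=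
  IsUnit.of_mul_eq_one (conj x) (by rw [mul_conj, h]; simp)
lemma nm_of_isUnit {x : O} (h : IsUnit x) : nm x = 1 := by
  obtain ⟨y, hy⟩ := h.exists_right_inv
  have : nm x * nm y = 1 := by rw [← nm_mul, hy, nm_one]
  nlinarith [Int.eq_one_or_neg_one_of_mul_eq_one this, nm_nonneg x,
    show nm x = 1 from by
      rcases Int.eq_one_or_neg_one_of_mul_eq_one this with h | h
      · exact h
      · have := nm_nonneg x; omega]
lemma int_of_sub_conj (m : ℤ) : ((m : O) * ω) - conj ((m : O) * ω) = (m : O) * θ := by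
  apply O_ext <;> simp <;> ring
/-- skew-hermitian forms -/
structure Form (V : Type) [AddCommGroup V] [Module O V] where
  p : V → V → O
  add_left : ∀ x y z, p (x + y) z = p x z + p y z
  smul_left : ∀ (c : O) x z, p (c • x) z = c * p x z
  skew : ∀ x y, p y x = - conj (p x y)

namespace Form
variable {V : Type} [AddCommGroup V] [Module O V] (F : Form V)

lemma add_right (x y z : V) : F.p z (x + y) = F.p z x + F.p z y := by
  rw [F.skew (x + y) z, F.skew x z, F.skew y z, F.add_left]; simp; ring
lemma smul_right (c : O) (x z : V) : F.p z (c • x) = conj c * F.p z x := by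
  rw [F.skew (c • x) z, F.skew x z, F.smul_left]; simp
lemma zero_left (x : V) : F.p 0 x = 0 := by
  have := F.smul_left 0 0 x; simpa using this
lemma zero_right (x : V) : F.p x 0 = 0 := by
  have := F.smul_right 0 0 x; simpa using this
lemma neg_left (x y : V) : F.p (-x) y = - F.p x y := by
  have := F.smul_left (-1) x y; simpa using this
lemma neg_right (x y : V) : F.p x (-y) = - F.p x y := by
  have := F.smul_right (-1) y x; simpa using this
lemma sub_left (x y z : V) : F.p (x - y) z = F.p x z - F.p y z := by
  rw [sub_eq_add_neg, F.add_left, F.neg_left]; ring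
lemma sub_right (x y z : V) : F.p z (x - y) = F.p z x - F.p z y := by
  rw [sub_eq_add_neg, F.add_right, F.neg_right]; ring

/-- the unitary group -/
def U : Subgroup (V ≃ₗ[O] V) where
  carrier := {g | ∀ x y, F.p (g x) (g y) = F.p x y}
  mul_mem' := by
    intro g h hg hh x y
    simp only [Set.mem_ofPred_eq] at *
    rw [LinearEquiv.mul_apply, LinearEquiv.mul_apply, hg, hh]
  one_mem' := by intro x y; rfl
  inv_mem' := by
    intro g hg x y
    simp only [Set.mem_ofPred_eq] at *
    rw [← hg]
    change F.p (g (g.symm x)) (g (g.symm y)) = _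
    simp

lemma mem_U {g : V ≃ₗ[O] V} : g ∈ F.U ↔ ∀ x y, F.p (g x) (g y) = F.p x y := Iff.rfl

/-- real bilinear form -/
def B (x y : V) : ℤ := - im (F.p x y)
lemma B_comm (x y : V) : F.B x y = F.B y x := by
  simp only [B]; rw [F.skew x y]; simp
lemma B_add_left (x y z : V) : F.B (x + y) z = F.B x z + F.B y z := by
  simp only [B, F.add_left, im_add]; ring
lemma B_sub_left (x y z : V) : F.B (x - y) z = F.B x z - F.B y z := by
  simp only [B, F.sub_left, im_sub]; ring
lemma B_zsmul_left (c : ℤ) (x z : V) : F.B ((c : O) • x) z = c * F.B x z := by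
  simp [B, F.smul_left]
lemma B_add_right (x y z : V) : F.B z (x + y) = F.B z x + F.B z y := by
  rw [B_comm, B_add_left, B_comm, F.B_comm y]
lemma B_sub_right (x y z : V) : F.B z (x - y) = F.B z x - F.B z y := by
  rw [B_comm, B_sub_left, B_comm, F.B_comm y]
lemma B_zsmul_right (c : ℤ) (x z : V) : F.B z ((c : O) • x) = c * F.B z x := by
  rw [B_comm, B_zsmul_left, B_comm]
/-- `p x x` is determined by `B x x = 2k` -/
lemma exists_self (x : V) : ∃ k : ℤ, F.B x x = 2 * k ∧ F.p x x = - ((k : O) * θ) := by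
  have h := F.skew x x
  have h1 := congrArg re h
  simp at h1
  refine ⟨re (F.p x x), by simp only [B]; omega, ?_⟩
  apply O_ext <;> simp
  omega
lemma self_of_B {x : V} {k : ℤ} (h : F.B x x = 2 * k) : F.p x x = - ((k : O) * θ) := by
  obtain ⟨m, h1, h2⟩ := F.exists_self x
  rw [h2, show m = k by omega]
lemma B_of_self {x : V} {k : ℤ} (h : F.p x x = - ((k : O) * θ)) : F.B x x = 2 * k := by
  simp [B, h]; ring
lemma B_smul_smul (c : O) (x : V) : F.B (c • x) (c • x) = nm c * F.B x x := by
  simp only [B, F.smul_left, F.smul_right]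
  rw [← mul_assoc, mul_conj]; simp
lemma B_U {g : V ≃ₗ[O] V} (hg : g ∈ F.U) (x y : V) : F.B (g x) (g y) = F.B x y := by
  simp only [B, F.mem_U.1 hg]

/-- triflection -/
def triMap (η : O) (r : V) : V →ₗ[O] V where
  toFun x := x + (η * F.p x r) • r
  map_add' x y := by simp only [F.add_left]; module
  map_smul' c x := by simp only [F.smul_left, RingHom.id_apply]; module
lemma triMap_apply (η : O) (r x : V) : F.triMap η r x = x + (η * F.p x r) • r := rfl
lemma triMap_comp (η η' : O) (r : V) (hr : F.p r r = -θ) (h : η + η' = η * η' * θ) (x : V) :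
    F.triMap η r (F.triMap η' r x) = x := by
  simp only [triMap_apply, F.add_left, F.smul_left, hr]
  have : η' * F.p x r + η * (F.p x r + η' * F.p x r * -θ) = 0 := by
    linear_combination F.p x r * h
  rw [add_assoc, ← add_smul, this]; simp
def tri (η η' : O) (r : V) (hr : F.p r r = -θ) (h : η + η' = η * η' * θ) : V ≃ₗ[O] V :=
  LinearEquiv.ofLinearMap (F.triMap η r) (F.triMap η' r)
    (by ext x; exact F.triMap_comp η η' r hr h x)
    (by ext x; exact F.triMap_comp η' η r hr (by rw [add_comm, h]; ring) x)
lemma tri_mem (η η' : O) (r : V) (hr : F.p r r = -θ) (h : η + η' = η * η' * θ)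
    (h2 : conj η - η = η * conj η * θ) : F.tri η η' r hr h ∈ F.U := by
  intro x y
  change F.p (x + (η * F.p x r) • r) (y + (η * F.p y r) • r) = _
  simp only [F.add_left, F.smul_left, F.add_right, F.smul_right, hr, F.skew y r, map_mul]
  simp only [F.skew r y]
  simp
  linear_combination (- F.p x r * F.p r y) * h2
def tr (ε : Bool) (r : V) (hr : F.p r r = -θ) : V ≃ₗ[O] V :=
  if ε then F.tri (-ω) (1 - ω) r hr (by apply O_ext <;> simp)
  else F.tri (1 - ω) (-ω) r hr (by apply O_ext <;> simp)
lemma tr_mem (ε : Bool) (r : V) (hr : F.p r r = -θ) : F.tr ε r hr ∈ F.U := by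
  cases ε
  · exact F.tri_mem _ _ r hr (by apply O_ext <;> simp) (by apply O_ext <;> simp)
  · exact F.tri_mem _ _ r hr (by apply O_ext <;> simp) (by apply O_ext <;> simp)
lemma tr_true (r : V) (hr : F.p r r = -θ) (x : V) :
    F.tr true r hr x = x + (-ω * F.p x r) • r := rfl
lemma tr_false (r : V) (hr : F.p r r = -θ) (x : V) :
    F.tr false r hr x = x + ((1 - ω) * F.p x r) • r := rfl

/-- unit scalars -/
def sca (u : O) (hu : nm u = 1) : V ≃ₗ[O] V :=
  LinearEquiv.ofLinearMap (u • LinearMap.id) (conj u • LinearMap.id)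
    (by ext x; simp [smul_smul, mul_conj, hu]) (by ext x; simp [smul_smul, conj_mul', hu])
lemma sca_apply (u : O) (hu : nm u = 1) (x : V) : sca u hu x = u • x := rfl
lemma sca_mem (u : O) (hu : nm u = 1) : sca u hu ∈ F.U := by
  intro x y
  rw [sca_apply, sca_apply, F.smul_left, F.smul_right, ← mul_assoc, mul_conj, hu]; simp

/-- translations -/
def trnMap (e w : V) (c : O) : V →ₗ[O] V where
  toFun x := x + F.p x e • w + (F.p x w + F.p x e * c) • e
  map_add' x y := by simp only [F.add_left]; module
  map_smul' c x := by simp only [F.smul_left, RingHom.id_apply]; module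
lemma trnMap_apply (e w : V) (c : O) (x : V) :
  F.trnMap e w c x = x + F.p x e • w + (F.p x w + F.p x e * c) • e := rfl
lemma trnMap_comp (e w : V) (c : O) (he : F.p e e = 0) (hw : F.p e w = 0)
    (hc : c - conj c = F.p w w) (x : V) :
    F.trnMap e (-w) (- conj c) (F.trnMap e w c x) = x := by
  have hw' : F.p w e = 0 := by rw [F.skew e w, hw]; simp
  simp only [trnMap_apply, F.add_left, F.smul_left, F.neg_right, he, hw, hw', ← hc]
  module
def trn (e w : V) (c : O) (he : F.p e e = 0) (hw : F.p e w = 0)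
    (hc : c - conj c = F.p w w) : V ≃ₗ[O] V :=
  LinearEquiv.ofLinearMap (F.trnMap e w c) (F.trnMap e (-w) (- conj c))
    (by
      ext x
      have := F.trnMap_comp e (-w) (-conj c) he (by rw [F.neg_right, hw]; simp)
        (by rw [F.neg_right, F.neg_left]; simp; rw [← hc]; ring) x
      simpa using this)
    (by ext x; exact F.trnMap_comp e w c he hw hc x)
lemma trn_apply (e w : V) (c : O) (he : F.p e e = 0) (hw : F.p e w = 0)
    (hc : c - conj c = F.p w w) (x : V) :
    F.trn e w c he hw hc x = x + F.p x e • w + (F.p x w + F.p x e * c) • e := rfl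
lemma trn_mem (e w : V) (c : O) (he : F.p e e = 0) (hw : F.p e w = 0)
    (hc : c - conj c = F.p w w) : F.trn e w c he hw hc ∈ F.U := by
  intro x y
  have hw' : F.p w e = 0 := by rw [F.skew e w, hw]; simp
  rw [trn_apply, trn_apply]
  simp only [F.add_left, F.smul_left, F.add_right, F.smul_right, he, hw, hw', ← hc]
  rw [F.skew y e, F.skew y w]
  simp
  ring
end Form
def E (m n : ℤ) : O := m + n * ω
@[simp] lemma re_E (m n : ℤ) : re (E m n) = m := by simp [E]
@[simp] lemma im_E (m n : ℤ) : im (E m n) = n := by simp [E]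
/-- the lattice `Λ⁴` -/
abbrev M : Type := O × O × O × O

def pM (x y : M) : O :=
  -θ * (x.1 * conj y.1 + x.2.1 * conj y.2.1 + x.2.2.1 * conj y.2.2.1 + x.2.2.2 * conj y.2.2.2)
  + (x.1 * conj y.2.1 - x.2.1 * conj y.1) + (x.2.1 * conj y.2.2.1 - x.2.2.1 * conj y.2.1)
  + (x.2.2.1 * conj y.2.2.2 - x.2.2.2 * conj y.2.2.1)

def FM : Form M where
  p := pM
  add_left x y z := by simp only [pM, Prod.fst_add, Prod.snd_add]; ring
  smul_left c x z := by simp only [pM, Prod.smul_fst, Prod.smul_snd, smul_eq_mul]; ring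
  skew x y := by
    simp only [pM, map_add, map_sub, map_mul, map_neg, conj_conj, conj_θ]; ring

lemma FM_p (x y : M) : FM.p x y = pM x y := rfl

lemma M_ext {x y : M} (h1 : x.1 = y.1) (h2 : x.2.1 = y.2.1) (h3 : x.2.2.1 = y.2.2.1)
    (h4 : x.2.2.2 = y.2.2.2) : x = y :=
  Prod.ext h1 (Prod.ext h2 (Prod.ext h3 h4))

lemma FM_sq (x : M) : 9 * FM.B x x = 2 * nm (3 * x.1 - θ * x.2.1) + 3 * nm (2 * x.2.1 - θ * x.2.2.1)
    + nm (3 * x.2.2.1 - 2 * θ * x.2.2.2) + 6 * nm x.2.2.2 := by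
  simp [Form.B, FM_p, pM, nm]; ring

lemma FM_nonneg (x : M) : 0 ≤ FM.B x x := by
  have h := FM_sq x
  have h1 := nm_nonneg (3 * x.1 - θ * x.2.1)
  have h2 := nm_nonneg (2 * x.2.1 - θ * x.2.2.1)
  have h3 := nm_nonneg (3 * x.2.2.1 - 2 * θ * x.2.2.2)
  have h4 := nm_nonneg x.2.2.2
  omega
lemma FM_eq_zero {x : M} (h0 : FM.B x x = 0) : x = 0 := by
  have h := FM_sq x
  have h1 := nm_nonneg (3 * x.1 - θ * x.2.1)
  have h2 := nm_nonneg (2 * x.2.1 - θ * x.2.2.1)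
  have h3 := nm_nonneg (3 * x.2.2.1 - 2 * θ * x.2.2.2)
  have h4 := nm_nonneg x.2.2.2
  have t2 : (2 : O) ≠ 0 := fun h => by simpa using congrArg re h
  have t3 : (3 : O) ≠ 0 := fun h => by simpa using congrArg re h
  have e4 := nm_eq_zero (x := x.2.2.2) (by omega)
  have e3 := nm_eq_zero (x := 3 * x.2.2.1 - 2 * θ * x.2.2.2) (by omega)
  have e2 := nm_eq_zero (x := 2 * x.2.1 - θ * x.2.2.1) (by omega)
  have e1 := nm_eq_zero (x := 3 * x.1 - θ * x.2.1) (by omega)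
  rw [e4] at e3
  have e3 : x.2.2.1 = 0 := by simpa [t3] using e3
  rw [e3] at e2
  have e2 : x.2.1 = 0 := by simpa [t2] using e2
  rw [e2] at e1
  have e1 : x.1 = 0 := by simpa [t3] using e1
  exact M_ext e1 e2 e3 e4

-- covering radius of E8
def al1 : M := (E (0) (0), E (-1) (1), E (0) (0), E (0) (0))
def al2 : M := (E (0) (0), E (0) (0), E (0) (0), E (0) (-1))
def al3 : M := (E (1) (-1), E (0) (0), E (0) (0), E (0) (0))
def al4 : M := (E (0) (0), E (0) (0), E (1) (-1), E (-1) (0))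
def al5 : M := (E (0) (0), E (1) (-1), E (0) (-1), E (0) (0))
def al6 : M := (E (0) (1), E (1) (0), E (0) (0), E (0) (0))
def al7 : M := (E (-1) (0), E (-1) (1), E (0) (1), E (0) (0))
def al8 : M := (E (0) (0), E (-1) (0), E (0) (1), E (1) (0))
def rho : M := (E (-26) (7), E (-9) (43), E (46) (-14), E (11) (-29))
def al0 : M := (E (-1) (0), E (-1) (2), E (2) (0), E (1) (-2))
def om4 : M := (E (-2) (1), E (0) (3), E (4) (-2), E (0) (-2))

lemma B_rep (x : M) (c0 c1 c2 c3 c4 c5 c6 c7 : ℤ) (h0 : FM.B x al1 = c0) (h1 : FM.B x al2 = c1) (h2 : FM.B x al3 = c2) (h3 : FM.B x al4 = c3) (h4 : FM.B x al5 = c4) (h5 : FM.B x al6 = c5) (h6 : FM.B x al7 = c6) (h7 : FM.B x al8 = c7) :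
    FM.B x al0 = 3 * c0 + 2 * c1 + 4 * c2 + 2 * c3 + 6 * c4 + 4 * c5 + 5 * c6 + 3 * c7 ∧
    FM.B x x = 8 * c0 ^ 2 + 6 * c0 * c1 + 18 * c0 * c2 + 10 * c0 * c3 + 30 * c0 * c4 + 20 * c0 * c5 + 24 * c0 * c6 + 12 * c0 * c7 + 2 * c1 ^ 2 + 8 * c1 * c2 + 4 * c1 * c3 + 12 * c1 * c4 + 8 * c1 * c5 + 10 * c1 * c6 + 6 * c1 * c7 + 12 * c2 ^ 2 + 12 * c2 * c3 + 36 * c2 * c4 + 24 * c2 * c5 + 30 * c2 * c6 + 16 * c2 * c7 + 4 * c3 ^ 2 + 20 * c3 * c4 + 14 * c3 * c5 + 16 * c3 * c6 + 8 * c3 * c7 + 30 * c4 ^ 2 + 40 * c4 * c5 + 48 * c4 * c6 + 24 * c4 * c7 + 14 * c5 ^ 2 + 32 * c5 * c6 + 16 * c5 * c7 + 20 * c6 ^ 2 + 20 * c6 * c7 + 6 * c7 ^ 2 := by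
  subst h0 h1 h2 h3 h4 h5 h6 h7
  constructor <;>
  simp only [Form.B, FM_p, pM, al1, al2, al3, al4, al5, al6, al7, al8, al0, re_add, re_neg, re_mul, re_conj, im_add, im_sub, im_neg,
    im_mul, im_conj, re_E, im_E, re_θ, im_θ] <;> ring
lemma om4_rep (x : M) (N : ℤ) (h0 : FM.B x al1 = 0) (h1 : FM.B x al2 = 0) (h2 : FM.B x al3 = 0) (h4 : FM.B x al5 = 0) (h5 : FM.B x al6 = 0) (h6 : FM.B x al7 = 0) (h7 : FM.B x al8 = 0) (h3 : 2 * FM.B x al4 = N) :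
    (2 : O) • x = (N : O) • om4 := by
  simp only [Form.B, FM_p, pM, al1, al2, al3, al4, al5, al6, al7, al8, re_add, re_neg, re_mul, re_conj, im_add, im_sub, im_neg,
    im_mul, im_conj, re_E, im_E, re_θ, im_θ] at h0 h1 h2 h3 h4 h5 h6 h7
  apply M_ext <;> apply O_ext <;> simp [om4] <;> linarith

def Cov (N : ℤ) (x : M) : Prop := ∃ L : M, FM.B (x - (N : O) • L) (x - (N : O) • L) ≤ N ^ 2 ∧
  (FM.B (x - (N : O) • L) (x - (N : O) • L) = N ^ 2 → ∃ z : M, (2 : O) • (x - (N : O) • L) = (N : O) • z)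

def rf (r x : M) : M := x - ((FM.B x r : ℤ) : O) • r
lemma rf_sub (r x y : M) : rf r (x - y) = rf r x - rf r y := by
  simp only [rf, FM.B_sub_left]; push_cast; module
lemma rf_smul (r x : M) (n : ℤ) : rf r ((n : O) • x) = (n : O) • rf r x := by
  simp only [rf, FM.B_zsmul_left]; push_cast; module
lemma rf_rf (r x : M) (hr : FM.B r r = 2) : rf r (rf r x) = x := by
  simp only [rf, FM.B_sub_left, FM.B_zsmul_left, hr]; push_cast; module
lemma rf_B (r x : M) (hr : FM.B r r = 2) : FM.B (rf r x) (rf r x) = FM.B x x := by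
  simp only [rf, FM.B_sub_left, FM.B_zsmul_left, FM.B_sub_right, FM.B_zsmul_right, hr, FM.B_comm r x]
  ring
lemma Cov.shift {N : ℤ} {x y : M} (h : Cov N (x + (N : O) • y)) : Cov N x := by
  obtain ⟨L, h1, h2⟩ := h
  refine ⟨L - y, ?_⟩
  have : x - (N : O) • (L - y) = x + (N : O) • y - (N : O) • L := by module
  rw [this]; exact ⟨h1, h2⟩
lemma Cov.refl {N : ℤ} {x r : M} (hr : FM.B r r = 2) (h : Cov N (rf r x)) : Cov N x := by
  obtain ⟨L, h1, h2⟩ := h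
  refine ⟨rf r L, ?_⟩
  have : x - (N : O) • rf r L = rf r (rf r x - (N : O) • L) := by
    rw [rf_sub, rf_rf r x hr, rf_smul]
  rw [this, rf_B _ _ hr]
  refine ⟨h1, fun h => ?_⟩
  obtain ⟨z, hz⟩ := h2 h
  refine ⟨rf r z, ?_⟩
  have e : (2 : O) = ((2 : ℤ) : O) := by norm_num
  rw [e] at hz ⊢
  rw [← rf_smul, hz, rf_smul]

def mu (N : ℤ) (x : M) : ℤ := 900 * FM.B x x - 60 * N * FM.B x rho + N ^ 2 * 620
lemma mu_nonneg (N : ℤ) (x : M) : 0 ≤ mu N x := by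
  have h := FM_nonneg (((30 : ℤ) : O) • x - (N : O) • rho)
  have e : FM.B rho rho = 620 := by simp [Form.B, FM_p, pM, rho]
  simp only [FM.B_sub_left, FM.B_zsmul_left, FM.B_sub_right, FM.B_zsmul_right, FM.B_comm rho x, e] at h
  unfold mu; linarith
lemma mu_lt {N : ℤ} (hN : 0 < N) {x r : M} (hr : FM.B r r = 2) (hr2 : FM.B r rho = 1) (h : FM.B x r < 0) :
    mu N (rf r x) < mu N x := by
  unfold mu
  rw [rf_B _ _ hr]
  simp only [rf, FM.B_sub_left, FM.B_zsmul_left, hr2]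
  nlinarith
lemma mu_lt0 {N : ℤ} (hN : 0 < N) {x : M} (h : N < FM.B x al0) :
    mu N (rf al0 x + (N : O) • al0) < mu N x := by
  have hr : FM.B al0 al0 = 2 := by simp [Form.B, FM_p, pM, al0]
  have hr2 : FM.B al0 rho = 29 := by simp [Form.B, FM_p, pM, al0, rho]
  have e : rf al0 x + (N : O) • al0 = x - ((FM.B x al0 - N : ℤ) : O) • al0 := by
    simp only [rf]; push_cast; module
  rw [e]
  unfold mu
  simp only [FM.B_sub_left, FM.B_zsmul_left, FM.B_sub_right, FM.B_zsmul_right, FM.B_comm al0 x, hr, hr2]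
  nlinarith

lemma alc_arith {m N S D q : ℤ} (hD : 0 ≤ D) (hq : 0 ≤ q) (hm : 0 ≤ m) (h : m ≤ N)
    (hE : m ^ 2 - S = D + q) : S ≤ N ^ 2 ∧ (S = N ^ 2 → q = 0 ∧ m = N) := by
  have h2 : m ^ 2 ≤ N ^ 2 := by gcongr
  refine ⟨by linarith, fun hh => ⟨by linarith, ?_⟩⟩
  have : N ^ 2 ≤ m ^ 2 := by linarith
  exact le_antisymm h (by nlinarith)
lemma sum7 {c0 c1 c2 c4 c5 c6 c7 : ℤ} (h : c0 ^ 2 + c1 ^ 2 + c2 ^ 2 + c4 ^ 2 + c5 ^ 2 + c6 ^ 2 + c7 ^ 2 = 0) :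
    c0 = 0 ∧ c1 = 0 ∧ c2 = 0 ∧ c4 = 0 ∧ c5 = 0 ∧ c6 = 0 ∧ c7 = 0 := by
  have := sq_nonneg c0
  have := sq_nonneg c1
  have := sq_nonneg c2
  have := sq_nonneg c4
  have := sq_nonneg c5
  have := sq_nonneg c6
  have := sq_nonneg c7
  refine ⟨?_, ?_, ?_, ?_, ?_, ?_, ?_⟩ <;> apply pow_eq_zero_iff (two_ne_zero) |>.1 <;> linarith
lemma alcove {N c0 c1 c2 c3 c4 c5 c6 c7 : ℤ} (h0 : 0 ≤ c0) (h1 : 0 ≤ c1) (h2 : 0 ≤ c2) (h3 : 0 ≤ c3) (h4 : 0 ≤ c4) (h5 : 0 ≤ c5) (h6 : 0 ≤ c6) (h7 : 0 ≤ c7)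
    (h : 3 * c0 + 2 * c1 + 4 * c2 + 2 * c3 + 6 * c4 + 4 * c5 + 5 * c6 + 3 * c7 ≤ N) (S : ℤ) (hS : S = 8 * c0 ^ 2 + 6 * c0 * c1 + 18 * c0 * c2 + 10 * c0 * c3 + 30 * c0 * c4 + 20 * c0 * c5 + 24 * c0 * c6 + 12 * c0 * c7 + 2 * c1 ^ 2 + 8 * c1 * c2 + 4 * c1 * c3 + 12 * c1 * c4 + 8 * c1 * c5 + 10 * c1 * c6 + 6 * c1 * c7 + 12 * c2 ^ 2 + 12 * c2 * c3 + 36 * c2 * c4 + 24 * c2 * c5 + 30 * c2 * c6 + 16 * c2 * c7 + 4 * c3 ^ 2 + 20 * c3 * c4 + 14 * c3 * c5 + 16 * c3 * c6 + 8 * c3 * c7 + 30 * c4 ^ 2 + 40 * c4 * c5 + 48 * c4 * c6 + 24 * c4 * c7 + 14 * c5 ^ 2 + 32 * c5 * c6 + 16 * c5 * c7 + 20 * c6 ^ 2 + 20 * c6 * c7 + 6 * c7 ^ 2) :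
    S ≤ N ^ 2 ∧ (S = N ^ 2 → (c0 = 0 ∧ c1 = 0 ∧ c2 = 0 ∧ c4 = 0 ∧ c5 = 0 ∧ c6 = 0 ∧ c7 = 0) ∧ 2 * c3 = N) := by
  obtain ⟨a1, a2⟩ := alc_arith (S := S) (D := 6 * (c0 * c1) + 6 * (c0 * c2) + 2 * (c0 * c3) + 6 * (c0 * c4) + 4 * (c0 * c5) + 6 * (c0 * c6) + 6 * (c0 * c7) + 1 * (c1 * c1) + 8 * (c1 * c2) + 4 * (c1 * c3) + 12 * (c1 * c4) + 8 * (c1 * c5) + 10 * (c1 * c6) + 6 * (c1 * c7) + 3 * (c2 * c2) + 4 * (c2 * c3) + 12 * (c2 * c4) + 8 * (c2 * c5) + 10 * (c2 * c6) + 8 * (c2 * c7) + 4 * (c3 * c4) + 2 * (c3 * c5) + 4 * (c3 * c6) + 4 * (c3 * c7) + 5 * (c4 * c4) + 8 * (c4 * c5) + 12 * (c4 * c6) + 12 * (c4 * c7) + 1 * (c5 * c5) + 8 * (c5 * c6) + 8 * (c5 * c7) + 4 * (c6 * c6) + 10 * (c6 * c7) + 2 * (c7 * c7)) (q := c0 ^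 2 + c1 ^ 2 + c2 ^ 2 + c4 ^ 2 + c5 ^ 2 + c6 ^ 2 + c7 ^ 2)
    (by positivity) (by positivity) (by positivity) h (by rw [hS]; ring)
  refine ⟨a1, fun hh => ?_⟩
  obtain ⟨b1, b2⟩ := a2 hh
  have z := sum7 b1
  refine ⟨z, ?_⟩
  obtain ⟨z0, z1, z2, z4, z5, z6, z7⟩ := z
  rw [z0, z1, z2, z4, z5, z6, z7] at b2
  linarith

lemma cover {N : ℤ} (hN : 0 < N) (x : M) : Cov N x := by
  induction hm : (mu N x).toNat using Nat.strong_induction_on generalizing x with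
  | _ m ih =>
    have key : ∀ y, mu N y < mu N x → Cov N y := fun y hy => ih _ (by
      have := mu_nonneg N y; omega) y rfl
    have key2 : ∀ r, FM.B r r = 2 → FM.B r rho = 1 → FM.B x r < 0 → Cov N x := fun r h1 h2 h3 =>
      (key _ (mu_lt hN h1 h2 h3)).refl h1
    by_cases h : N < FM.B x al0
    · exact (key _ (mu_lt0 hN h)).shift.refl (by simp [Form.B, FM_p, pM, al0])
    by_cases h_al1 : FM.B x al1 < 0
    · exact key2 al1 (by simp [Form.B, FM_p, pM, al1]) (by simp [Form.B, FM_p, pM, al1, rho]) h_al1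
    by_cases h_al2 : FM.B x al2 < 0
    · exact key2 al2 (by simp [Form.B, FM_p, pM, al2]) (by simp [Form.B, FM_p, pM, al2, rho]) h_al2
    by_cases h_al3 : FM.B x al3 < 0
    · exact key2 al3 (by simp [Form.B, FM_p, pM, al3]) (by simp [Form.B, FM_p, pM, al3, rho]) h_al3
    by_cases h_al4 : FM.B x al4 < 0
    · exact key2 al4 (by simp [Form.B, FM_p, pM, al4]) (by simp [Form.B, FM_p, pM, al4, rho]) h_al4
    by_cases h_al5 : FM.B x al5 < 0
    · exact key2 al5 (by simp [Form.B, FM_p, pM, al5]) (by simp [Form.B, FM_p, pM, al5, rho]) h_al5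
    by_cases h_al6 : FM.B x al6 < 0
    · exact key2 al6 (by simp [Form.B, FM_p, pM, al6]) (by simp [Form.B, FM_p, pM, al6, rho]) h_al6
    by_cases h_al7 : FM.B x al7 < 0
    · exact key2 al7 (by simp [Form.B, FM_p, pM, al7]) (by simp [Form.B, FM_p, pM, al7, rho]) h_al7
    by_cases h_al8 : FM.B x al8 < 0
    · exact key2 al8 (by simp [Form.B, FM_p, pM, al8]) (by simp [Form.B, FM_p, pM, al8, rho]) h_al8
    push Not at *
    obtain ⟨e1, e2⟩ := B_rep x _ _ _ _ _ _ _ _ rfl rfl rfl rfl rfl rfl rfl rfl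
    rw [e1] at h
    obtain ⟨a1, a2⟩ := alcove h_al1 h_al2 h_al3 h_al4 h_al5 h_al6 h_al7 h_al8 h _ e2
    refine ⟨0, ?_⟩
    rw [smul_zero, sub_zero]
    refine ⟨a1, fun hh => ?_⟩
    obtain ⟨⟨z0, z1, z2, z4, z5, z6, z7⟩, z3⟩ := a2 hh
    exact ⟨om4, om4_rep x N z0 z1 z2 z4 z5 z6 z7 z3⟩
lemma Form.conn {V : Type} [AddCommGroup V] [Module O V] (F : Form V) {x r : V} (hx : F.p x x = -θ)
    (hr : F.p r r = -θ) (h : nm (F.p x r) = 1) : ∃ g ∈ F.U, g x = r := by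
  have hu : nm (conj (-ω * F.p x r)) = 1 := by
    rw [nm_conj, nm_mul, h]; simp [nm]
  refine ⟨Form.sca _ hu * (F.tr true x hx * F.tr true r hr), mul_mem (F.sca_mem _ hu)
    (mul_mem (F.tr_mem _ _ _) (F.tr_mem _ _ _)), ?_⟩
  simp only [LinearEquiv.mul_apply, F.tr_true, Form.sca_apply]
  have e1 : F.p r x = - conj (F.p x r) := F.skew x r
  have e2 : F.p x r * conj (F.p x r) = 1 := by rw [mul_conj, h]; simp
  have e3 : x + (-ω * F.p x r) • r + (-ω * F.p (x + (-ω * F.p x r) • r) x) • x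
      = (-ω * F.p x r) • r := by
    rw [F.add_left, F.smul_left, hx, e1]
    have e4 : (1 : O) + (-ω * (-θ + -ω * F.p x r * -conj (F.p x r))) = 0 := by
      have : (1 : O) + (-ω * (-θ + ω * (F.p x r * conj (F.p x r)))) = 0 := by
        rw [e2]; apply O_ext <;> simp
      linear_combination this
    have : ∀ (k : O) (y : V), 1 + k = 0 → x + y + k • x = y := by
      intro k y hk
      have : x + y + k • x = (1 + k) • x + y := by module
      rw [this, hk]; simp
    exact this _ _ e4
  rw [e3, smul_smul, conj_mul', nm_mul, h]; simp [nm]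

lemma nm_small {p : O} (h : nm p ≤ 3) : p = 0 ∨ nm p = 1 ∨ nm p = 3 ∧ ∃ u, nm u = 1 ∧ p = θ * u := by
  have key : ∀ m n : ℤ, m ^ 2 + m * n + n ^ 2 ≤ 3 → m = 0 ∧ n = 0 ∨ m ^ 2 + m * n + n ^ 2 = 1 ∨
      m ^ 2 + m * n + n ^ 2 = 3 ∧ ∃ a c : ℤ, a ^ 2 + a * c + c ^ 2 = 1 ∧ m = - a - 2 * c ∧ n = 2 * a + c := by
    intro m n h
    have h1 : m ≤ 2 := by nlinarith [sq_nonneg (m + 2 * n)]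
    have h2 : -2 ≤ m := by nlinarith [sq_nonneg (m + 2 * n)]
    have h3 : n ≤ 2 := by nlinarith [sq_nonneg (n + 2 * m)]
    have h4 : -2 ≤ n := by nlinarith [sq_nonneg (n + 2 * m)]
    have : m ^ 2 + m * n + n ^ 2 = 3 → ∃ a c : ℤ, a ^ 2 + a * c + c ^ 2 = 1 ∧ m = - a - 2 * c ∧ n = 2 * a + c := by
      intro h
      refine ⟨(m + 2 * n) / 3, -(2 * m + n) / 3, ?_⟩
      interval_cases m <;> interval_cases n <;> simp_all
    interval_cases m <;> interval_cases n <;> simp_all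
  rcases key _ _ h with ⟨h1, h2⟩ | h1 | ⟨h3, a, c, h1, h2, h4⟩
  · left; apply O_ext <;> simp [h1, h2]
  · right; left; exact h1
  · right; right
    refine ⟨h3, E a c, by simp [nm, h1], ?_⟩
    apply O_ext <;> simp [h2, h4] <;> ring

lemma cs (x : M) {r : M} (hr : FM.p r r = -θ) : 2 * nm (FM.p x r) ≤ 3 * FM.B x x ∧
    (2 * nm (FM.p x r) = 3 * FM.B x x → (3 : O) • x = (θ * FM.p x r) • r) := by
  have e : 3 * FM.B ((3 : O) • x - (θ * FM.p x r) • r) ((3 : O) • x - (θ * FM.p x r) • r)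
      = 9 * (3 * FM.B x x - 2 * nm (FM.p x r)) := by
    have h : FM.p ((3 : O) • x - (θ * FM.p x r) • r) ((3 : O) • x - (θ * FM.p x r) • r)
      = 3 * 3 * FM.p x x + 3 * θ * ((nm (FM.p x r) : ℤ) : O) := by
      simp only [FM.sub_left, FM.sub_right, FM.smul_left, FM.smul_right, hr, FM.skew x r, map_mul, conj_θ,
        ← mul_conj]
      rw [show conj 3 = (3 : O) from map_ofNat conj 3]
      linear_combination (θ * FM.p x r * conj (FM.p x r)) * θ_mul
    rw [Form.B, h]
    simp [Form.B]
    ring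
  refine ⟨?_, fun h => ?_⟩
  · have := FM_nonneg ((3 : O) • x - (θ * FM.p x r) • r)
    omega
  · exact sub_eq_zero.1 (FM_eq_zero (by omega))

lemma root_p {x : M} (h : FM.B x x = 2) : FM.p x x = -θ := by
  have := FM.self_of_B (k := 1) (x := x) (by omega)
  simpa using this
lemma p_root {x : M} (h : FM.p x x = -θ) : FM.B x x = 2 := by simp [Form.B, h]

lemma root_conn {x r : M} (hx : FM.p x x = -θ) (hr : FM.p r r = -θ) (h : FM.p x r ≠ 0) :
    ∃ g ∈ FM.U, g x = r := by
  obtain ⟨h1, h2⟩ := cs x hr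
  rw [p_root hx] at h1 h2
  rcases nm_small (p := FM.p x r) (by omega) with h3 | h3 | ⟨h3, u, hu, h4⟩
  · exact absurd h3 h
  · exact FM.conn hx hr h3
  · have h5 := h2 (by omega)
    have hu2 : nm (-conj u) = 1 := by rw [show -conj u = (-1) * conj u by ring, nm_mul, nm_conj, hu]; simp [nm]
    refine ⟨Form.sca _ hu2, FM.sca_mem _ hu2, ?_⟩
    rw [Form.sca_apply]
    have t3 : (3 : O) ≠ 0 := fun h => by simpa using congrArg re h
    have h6 : x = (-u) • r := by
      apply smul_right_injective M t3
      simp only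
      rw [h5, h4, ← mul_assoc, θ_mul, smul_smul]; congr 1; ring
    rw [h6, smul_smul, neg_mul_neg, conj_mul', hu]; simp

def R1 : M := (1, 0, 0, 0)
def R2 : M := (0, 1, 0, 0)
def R3 : M := (0, 0, 1, 0)
def R4 : M := (0, 0, 0, 1)
lemma R1_root : FM.p R1 R1 = -θ := by simp [FM_p, pM, R1]
lemma R2_root : FM.p R2 R2 = -θ := by simp [FM_p, pM, R2]
lemma R3_root : FM.p R3 R3 = -θ := by simp [FM_p, pM, R3]
lemma R4_root : FM.p R4 R4 = -θ := by simp [FM_p, pM, R4]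
lemma trans_U {V : Type} [AddCommGroup V] [Module O V] {F : Form V} {x y z : V} (h : ∃ g ∈ F.U, g x = y) (h' : ∃ g ∈ F.U, g y = z) :
    ∃ g ∈ F.U, g x = z := by
  obtain ⟨g, hg, rfl⟩ := h
  obtain ⟨g', hg', rfl⟩ := h'
  exact ⟨g' * g, mul_mem hg' hg, rfl⟩

lemma root_trans {x : M} (hx : FM.p x x = -θ) : ∃ g ∈ FM.U, g x = R1 := by
  have e21 : ∃ g ∈ FM.U, g R2 = R1 := root_conn R2_root R1_root (by simp [FM_p, pM, R1, R2])
  have e32 : ∃ g ∈ FM.U, g R3 = R2 := root_conn R3_root R2_root (by simp [FM_p, pM, R3, R2])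
  have e43 : ∃ g ∈ FM.U, g R4 = R3 := root_conn R4_root R3_root (by simp [FM_p, pM, R3, R4])
  by_cases h1 : FM.p x R1 = 0
  · by_cases h2 : FM.p x R2 = 0
    · by_cases h3 : FM.p x R3 = 0
      · by_cases h4 : FM.p x R4 = 0
        · exfalso
          have : FM.p x x = conj x.1 * FM.p x R1 + conj x.2.1 * FM.p x R2 + conj x.2.2.1 * FM.p x R3 +
              conj x.2.2.2 * FM.p x R4 := by
            simp [FM_p, pM, R1, R2, R3, R4]; ring
          rw [h1, h2, h3, h4, hx] at this
          simpa using congrArg re this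
        · exact trans_U (root_conn hx R4_root h4) (trans_U e43 (trans_U e32 e21))
      · exact trans_U (root_conn hx R3_root h3) (trans_U e32 e21)
    · exact trans_U (root_conn hx R2_root h2) e21
  · exact root_conn hx R1_root h1

-- six vectors
def tab : List (List ℤ) := [
  [-1,0,0,0,0,0,0,0], [0,0,-1,0,0,0,0,0], [0,0,0,0,-1,0,0,0], [0,0,0,0,0,0,-1,0],
  [-1,0,-1,1,0,0,0,0], [-1,0,0,1,0,0,0,0], [0,0,-1,0,-1,1,0,0], [0,0,-1,0,0,1,0,0],
  [0,0,0,0,-1,0,-1,1], [0,0,0,0,-1,0,0,1], [-1,0,-1,1,0,1,0,0], [-1,0,-1,1,1,0,0,0],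
  [-1,0,0,1,1,-1,0,0], [-1,0,0,1,1,0,0,0], [0,0,-1,0,-1,1,0,1], [0,0,-1,0,-1,1,1,0],
  [0,0,-1,0,0,1,1,-1], [0,0,-1,0,0,1,1,0], [-1,0,-1,1,0,1,1,-1], [-1,0,-1,1,0,1,1,0],
  [-1,0,-1,1,1,0,0,-1], [-1,0,-1,1,1,0,1,-1], [-1,0,0,1,1,-1,-1,0], [-1,0,0,1,1,-1,0,-1],
  [-1,0,0,1,1,0,0,-1], [-1,0,0,1,1,0,1,-1], [-1,0,-1,2,1,0,0,0], [0,0,-1,0,-1,2,1,0],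
  [-1,0,-1,1,1,1,1,-1], [-1,0,-1,2,1,0,0,-1], [-1,0,-1,2,1,0,1,-1], [-1,0,0,1,2,-1,0,-1],
  [-1,0,-1,2,1,1,1,-1], [-1,0,-1,2,2,-1,0,-1], [-1,0,-2,2,1,1,1,-1], [-1,0,-1,2,2,0,0,-1],
  [-1,0,-1,2,2,0,1,-1], [-1,0,0,2,2,-1,0,-1], [-2,1,0,2,2,-1,0,-1], [-1,0,-1,2,2,0,1,-2]]
def mkM (l : List ℤ) : M := (E (l.getD 0 0) (l.getD 1 0), E (l.getD 2 0) (l.getD 3 0), E (l.getD 4 0) (l.getD 5 0),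
  E (l.getD 6 0) (l.getD 7 0))
def tabOK (k0 k1 k2 k3 : Fin 3) (l : List ℤ) (s : ℤ) : Bool :=
  (s * (l.getD 0 0 - l.getD 1 0) - (k0 : ℕ)) % 3 == 0 && (s * (l.getD 2 0 - l.getD 3 0) - (k1 : ℕ)) % 3 == 0 &&
  (s * (l.getD 4 0 - l.getD 5 0) - (k2 : ℕ)) % 3 == 0 && (s * (l.getD 6 0 - l.getD 7 0) - (k3 : ℕ)) % 3 == 0
lemma tab_roots : ∀ l ∈ tab, FM.B (mkM l) (mkM l) = 2 := by
  have e : ∀ l, FM.B (mkM l) (mkM l) = 2 * ((l.getD 0 0) ^ 2 + (l.getD 0 0) * (l.getD 1 0) + (l.getD 1 0) ^ 2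
    + (l.getD 2 0) ^ 2 + (l.getD 2 0) * (l.getD 3 0) + (l.getD 3 0) ^ 2
    + (l.getD 4 0) ^ 2 + (l.getD 4 0) * (l.getD 5 0) + (l.getD 5 0) ^ 2
    + (l.getD 6 0) ^ 2 + (l.getD 6 0) * (l.getD 7 0) + (l.getD 7 0) ^ 2
    + (l.getD 0 0) * (l.getD 3 0) - (l.getD 1 0) * (l.getD 2 0)
    + (l.getD 2 0) * (l.getD 5 0) - (l.getD 3 0) * (l.getD 4 0)
    + (l.getD 4 0) * (l.getD 7 0) - (l.getD 5 0) * (l.getD 6 0)) := by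
    intro l
    simp only [Form.B, FM_p, pM, mkM, re_add, re_neg, re_mul, re_conj, im_add, im_sub, im_neg,
      im_mul, im_conj, re_E, im_E, re_θ, im_θ]
    ring
  simp only [e]
  decide
set_option maxRecDepth 100000 in
lemma tab_ok : ∀ k0 k1 k2 k3 : Fin 3, (k0 = 0 ∧ k1 = 0 ∧ k2 = 0 ∧ k3 = 0) ∨
    ∃ l ∈ tab, tabOK k0 k1 k2 k3 l 1 = true ∨ tabOK k0 k1 k2 k3 l (-1) = true := by
  decide +kernel

lemma dvd_θ (z : O) (h : (re z - im z) % 3 = 0) : ∃ w, z = θ * w := by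
  refine ⟨E ((re z + 2 * im z) / 3) (-(2 * re z + im z) / 3), ?_⟩
  apply O_ext <;> simp <;> omega
lemma dvd_θM (z : M) (h1 : (re z.1 - im z.1) % 3 = 0) (h2 : (re z.2.1 - im z.2.1) % 3 = 0)
   (h3 : (re z.2.2.1 - im z.2.2.1) % 3 = 0) (h4 : (re z.2.2.2 - im z.2.2.2) % 3 = 0) : ∃ w : M, z = θ • w := by
  obtain ⟨w1, e1⟩ := dvd_θ _ h1
  obtain ⟨w2, e2⟩ := dvd_θ _ h2
  obtain ⟨w3, e3⟩ := dvd_θ _ h3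
  obtain ⟨w4, e4⟩ := dvd_θ _ h4
  exact ⟨(w1, w2, w3, w4), M_ext e1 e2 e3 e4⟩
lemma exists_root (x : M) : (∃ w : M, x = θ • w) ∨ ∃ a : M, FM.B a a = 2 ∧ ∃ w : M, x - a = θ • w := by
  have key : ∀ z : ℤ, ∃ k : Fin 3, (z - (k : ℕ)) % 3 = 0 := by
    intro z
    refine ⟨⟨(z % 3).toNat, by omega⟩, ?_⟩
    simp; omega
  obtain ⟨k0, h0⟩ := key (re x.1 - im x.1)
  obtain ⟨k1, h1⟩ := key (re x.2.1 - im x.2.1)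
  obtain ⟨k2, h2⟩ := key (re x.2.2.1 - im x.2.2.1)
  obtain ⟨k3, h3⟩ := key (re x.2.2.2 - im x.2.2.2)
  rcases tab_ok k0 k1 k2 k3 with ⟨rfl, rfl, rfl, rfl⟩ | ⟨l, hl, h | h⟩
  · left
    simp at h0 h1 h2 h3
    apply dvd_θM <;> omega
  · right
    refine ⟨mkM l, tab_roots l hl, ?_⟩
    simp [tabOK] at h
    apply dvd_θM <;> simp [mkM] <;> omega
  · right
    refine ⟨(-1 : O) • mkM l, by rw [FM.B_smul_smul, tab_roots l hl]; simp [nm], ?_⟩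
    simp [tabOK] at h
    apply dvd_θM <;> simp [mkM] <;> omega
lemma six_root {x : M} (hx : FM.B x x = 4) :
    ∃ a : M, FM.B a a = 2 ∧ (∃ w : M, x - a = θ • w) ∧ 0 ≤ FM.B x a := by
  rcases exists_root x with ⟨w, h⟩ | ⟨a, ha, w, hw⟩
  · rw [h, FM.B_smul_smul, nm_θ] at hx; omega
  · have hs : FM.B x a + FM.B x ((ω - 1) • a) + FM.B x ((-ω) • a) = 0 := by
      rw [← FM.B_add_right, ← FM.B_add_right]
      have : a + (ω - 1) • a + (-ω) • a = 0 := by module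
      rw [this, Form.B, FM.zero_right]; simp
    by_cases h1 : 0 ≤ FM.B x a
    · exact ⟨a, ha, ⟨w, hw⟩, h1⟩
    by_cases h2 : 0 ≤ FM.B x ((ω - 1) • a)
    · refine ⟨_, by rw [FM.B_smul_smul, ha]; simp [nm], ⟨w + (-ω) • a, ?_⟩, h2⟩
      have : (2 - ω : O) = θ * (-ω) := by apply O_ext <;> simp
      rw [smul_add, smul_smul, ← this, ← hw]; module
    · refine ⟨_, by rw [FM.B_smul_smul, ha]; simp [nm], ⟨w + (1-ω) • a, ?_⟩,
        (by omega : 0 ≤ FM.B x ((-ω) • a))⟩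
      have : (1 + ω : O) = θ * (1 - ω) := by apply O_ext <;> simp
      rw [smul_add, smul_smul, ← this, ← hw]; module

lemma six_split {x : M} (hx : FM.B x x = 4) :
    ∃ a c : M, FM.p a a = -θ ∧ FM.p c c = -θ ∧ FM.p a c = 1 ∧ x = a + c := by
  obtain ⟨a, ha, ⟨y, hy⟩, h0⟩ := six_root hx
  have h1 : FM.B (x - a) (x - a) = 3 * FM.B y y := by rw [hy, FM.B_smul_smul, nm_θ]
  rw [FM.B_sub_left, FM.B_sub_right, FM.B_sub_right, FM.B_comm a x, hx, ha] at h1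
  have h2 := FM_nonneg y
  obtain ⟨k, hk, -⟩ := FM.exists_self y
  have h3 : FM.B y y ≠ 0 := by
    intro h
    have := FM_eq_zero h
    rw [this, smul_zero] at hy
    rw [sub_eq_zero.1 hy] at hx
    omega
  have hyy : FM.B y y = 2 := by omega
  have hxa : FM.B x a = 0 := by omega
  have hpx : FM.p x x = -(2 * θ) := by
    have := FM.self_of_B (k := 2) (x := x) (by omega); simpa using this
  have hpy := root_p hyy
  have h4 : FM.p x (x - a) = - θ * FM.p x y := by rw [hy, FM.smul_right, conj_θ]
  rw [FM.sub_right, hpx] at h4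
  obtain ⟨h5, -⟩ := cs x hpy
  have hpim : im (FM.p x a) = 0 := by simp [Form.B] at hxa; exact hxa
  have h6 : re (FM.p x a) = 0 := by
    have e1 := congrArg re h4
    have e2 := congrArg im h4
    simp [hpim] at e1 e2
    simp only [nm] at h5
    rw [hx] at h5
    generalize re (FM.p x y) = m at *
    generalize im (FM.p x y) = n at *
    have h7 : n = 4 - 2 * m := by omega
    subst h7
    have h8 : 2 ≤ m := by nlinarith
    have h9 : m ≤ 2 := by nlinarith
    omega
  have h7 : FM.p x a = 0 := O_ext (by simpa using h6) (by simpa using hpim)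
  have h8 : FM.p x y = 2 := by
    rw [h7] at h4
    apply mul_left_cancel₀ θ_ne
    linear_combination h4
  have hc2 : conj 2 = (2 : O) := map_ofNat conj 2
  have h9 : FM.p y x = -2 := by
    rw [FM.skew x y, h8, hc2]
  refine ⟨(ω - 1) • y, x - (ω - 1) • y, ?_, ?_, ?_, by module⟩
  · simp only [FM.smul_left, FM.smul_right, hpy]
    apply O_ext <;> simp
  · simp only [FM.smul_left, FM.smul_right, FM.sub_left, FM.sub_right, hpy, h8, h9, hpx]
    apply O_ext <;> simp
  · simp only [FM.smul_left, FM.smul_right, FM.sub_left, FM.sub_right, hpy, h8, h9, hpx]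
    apply O_ext <;> simp

lemma adj {r c d : M} (hc : FM.p c c = -θ) (hd : FM.p d d = -θ) (h1 : FM.p r c = 1)
    (h2 : FM.p r d = 1) (h : FM.B c d = 1) : ∃ g ∈ FM.U, g r = r ∧ g c = d := by
  obtain ⟨h3, h4⟩ := cs c hd
  rw [p_root hc] at h3 h4
  have him : im (FM.p c d) = -1 := by simp [Form.B] at h; omega
  have hn3 : nm (FM.p c d) ≠ 3 := by
    intro hn
    have h5 := congrArg (FM.p r) (h4 (by omega))
    rw [FM.smul_right, FM.smul_right, h1, h2] at h5
    have e1 := congrArg re h5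
    simp [him] at e1
    have e2 := congrArg im h5
    simp [him] at e2
    omega
  have hm : re (FM.p c d) = 0 ∨ re (FM.p c d) = 1 := by
    simp only [nm, him] at h3 hn3
    generalize re (FM.p c d) = m at *
    have h8 : -1 ≤ m := by nlinarith
    have h9 : m ≤ 2 := by nlinarith
    interval_cases m <;> simp_all
  have hdc : FM.p d c = - conj (FM.p c d) := FM.skew c d
  have hs : FM.p (c - d) (c - d) = -θ := by
    simp only [FM.sub_left, FM.sub_right, hc, hd, hdc]
    apply O_ext <;> simp [him]
  have hrs : FM.p r (c - d) = 0 := by rw [FM.sub_right, h1, h2]; simp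
  rcases hm with hm | hm
  · refine ⟨FM.tr true _ hs, FM.tr_mem _ _ _, by rw [FM.tr_true, hrs]; simp, ?_⟩
    rw [FM.tr_true]
    have : -ω * FM.p c (c - d) = -1 := by
      rw [FM.sub_right, hc]; apply O_ext <;> simp [hm, him]
    rw [this]; module
  · refine ⟨FM.tr false _ hs, FM.tr_mem _ _ _, by rw [FM.tr_false, hrs]; simp, ?_⟩
    rw [FM.tr_false]
    have : (1-ω) * FM.p c (c - d) = -1 := by
      rw [FM.sub_right, hc]; apply O_ext <;> simp [hm, him]
    rw [this]; module

lemma adj' {r c d : M} (hc : FM.p c c = -θ) (hd : FM.p d d = -θ) (h1 : FM.p r c = 1)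
    (h2 : FM.p r d = 1) (h : 1 ≤ FM.B c d) : ∃ g ∈ FM.U, g r = r ∧ g c = d := by
  have h3 := FM_nonneg (c - d)
  rw [FM.B_sub_left, FM.B_sub_right, FM.B_sub_right, FM.B_comm d c, p_root hc, p_root hd] at h3
  by_cases h4 : FM.B c d = 1
  · exact adj hc hd h1 h2 h4
  · have : FM.B (c - d) (c - d) = 0 := by
      rw [FM.B_sub_left, FM.B_sub_right, FM.B_sub_right, FM.B_comm d c, p_root hc, p_root hd]
      omega
    have := sub_eq_zero.1 (FM_eq_zero this)
    exact ⟨1, one_mem _, rfl, this⟩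

lemma trans_U2 {r x y z : M} (h : ∃ g ∈ FM.U, g r = r ∧ g x = y) (h' : ∃ g ∈ FM.U, g r = r ∧ g y = z) :
    ∃ g ∈ FM.U, g r = r ∧ g x = z := by
  obtain ⟨g, hg, h1, rfl⟩ := h
  obtain ⟨g', hg', h2, rfl⟩ := h'
  exact ⟨g' * g, mul_mem hg' hg, by rw [LinearEquiv.mul_apply, h1, h2], rfl⟩

def c2 : M := (-ω, ω - 1, 0, 0)
def c3 : M := (1 - ω, -ω, 0, 0)
def d2 : M := (0, 1, -ω, 0)
def d3 : M := (0, 1, 1 - ω, 0)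

lemma R2_trans {c : M} (hc : FM.p c c = -θ) (h1 : FM.p R1 c = 1) : ∃ g ∈ FM.U, g R1 = R1 ∧ g c = R2 := by
  have hsum : FM.B c R2 + FM.B c c2 + FM.B c c3 = 2 := by
    rw [← FM.B_add_right, ← FM.B_add_right]
    have : R2 + c2 + c3 = (-θ) • R1 := by
      apply M_ext <;> simp [R2, R1, c2, c3] <;> apply O_ext <;> simp
    rw [this, Form.B, FM.smul_right, FM.skew R1 c, h1]; simp
  have q2 : FM.p c2 c2 = -θ := by simp [FM_p, pM, c2]; apply O_ext <;> simp
  have q3 : FM.p c3 c3 = -θ := by simp [FM_p, pM, c3]; apply O_ext <;> simp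
  have q4 : FM.p d2 d2 = -θ := by simp [FM_p, pM, d2]; apply O_ext <;> simp
  have q5 : FM.p d3 d3 = -θ := by simp [FM_p, pM, d3]; apply O_ext <;> simp
  have s1 : FM.p R1 R2 = 1 := by simp [FM_p, pM, R1, R2]
  have s2 : FM.p R1 c2 = 1 := by simp [FM_p, pM, R1, c2]; apply O_ext <;> simp
  have s3 : FM.p R1 c3 = 1 := by simp [FM_p, pM, R1, c3]; apply O_ext <;> simp
  have s4 : FM.p R1 d2 = 1 := by simp [FM_p, pM, R1, d2]
  have s5 : FM.p R1 d3 = 1 := by simp [FM_p, pM, R1, d3]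
  by_cases hA : 1 ≤ FM.B c R2
  · exact adj' hc R2_root h1 s1 hA
  by_cases hB : 1 ≤ FM.B c c2
  · refine trans_U2 (adj' hc q2 h1 s2 hB) (trans_U2 (adj' q2 q4 s2 s4 ?_) (adj' q4 R2_root s4 s1 ?_))
    · simp [Form.B, FM_p, pM, c2, d2]
    · simp [Form.B, FM_p, pM, R2, d2]
  · refine trans_U2 (adj' hc q3 h1 s3 (by omega)) (trans_U2 (adj' q3 q5 s3 s5 ?_) (adj' q5 R2_root s5 s1 ?_))
    · simp [Form.B, FM_p, pM, c3, d3]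
    · simp [Form.B, FM_p, pM, R2, d3]

lemma six_trans {x : M} (hx : FM.B x x = 4) : ∃ g ∈ FM.U, g x = R1 + R2 := by
  obtain ⟨a, c, ha, hc, hac, rfl⟩ := six_split hx
  obtain ⟨g, hg, rfl'⟩ := root_trans ha
  obtain ⟨g', hg', e1, e2⟩ := R2_trans (c := g c) (by rw [FM.mem_U.1 hg, hc])
    (by rw [← rfl', FM.mem_U.1 hg, hac])
  exact ⟨g' * g, mul_mem hg' hg, by rw [LinearEquiv.mul_apply, map_add, rfl', map_add, e1, e2]⟩
abbrev W : Type := M × M × O × O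

def FV : Form W where
  p v w := FM.p v.1 w.1 + FM.p v.2.1 w.2.1 + (v.2.2.1 * conj w.2.2.2 - v.2.2.2 * conj w.2.2.1)
  add_left x y z := by simp only [Prod.fst_add, Prod.snd_add, FM.add_left]; ring
  smul_left c x z := by simp only [Prod.smul_fst, Prod.smul_snd, smul_eq_mul, FM.smul_left]; ring
  skew x y := by
    simp only [map_add, map_sub, map_mul, conj_conj]
    rw [FM.skew x.1, FM.skew x.2.1]; ring

lemma FV_p (x x' : M) (a c : O) (y y' : M) (a' c' : O) : FV.p (x, x', a, c) (y, y', a', c') =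
    FM.p x y + FM.p x' y' + (a * conj c' - c * conj a') := rfl

lemma W_ext {v w : W} (h1 : v.1 = w.1) (h2 : v.2.1 = w.2.1) (h3 : v.2.2.1 = w.2.2.1)
    (h4 : v.2.2.2 = w.2.2.2) : v = w :=
  Prod.ext h1 (Prod.ext h2 (Prod.ext h3 h4))

/-- equivalence under the unitary group -/
def Eqv (v w : W) : Prop := ∃ g ∈ FV.U, g v = w
lemma Eqv.trans {u v w : W} (h : Eqv u v) (h' : Eqv v w) : Eqv u w := trans_U h h'
lemma Eqv.symm {u v : W} (h : Eqv u v) : Eqv v u := by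
  obtain ⟨g, hg, rfl⟩ := h
  exact ⟨g⁻¹, inv_mem hg, g.symm_apply_apply u⟩
lemma Eqv.p {u v : W} (h : Eqv u v) : FV.p v v = FV.p u u := by
  obtain ⟨g, hg, rfl⟩ := h
  exact hg u u

def Prim (v : W) : Prop := ∀ a : O, (∃ y : W, v = a • y) → IsUnit a
lemma Eqv.prim {u v : W} (h : Eqv u v) (hu : Prim u) : Prim v := by
  obtain ⟨g, hg, rfl⟩ := h
  rintro a ⟨y, hy⟩
  refine hu a ⟨g.symm y, ?_⟩
  rw [← map_smul, ← hy]; simp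

def blk (g h : M ≃ₗ[O] M) : W ≃ₗ[O] W := g.prodCongr (h.prodCongr (LinearEquiv.refl O _))
lemma blk_apply (g h : M ≃ₗ[O] M) (x y : M) (a c : O) : blk g h (x, y, a, c) = (g x, h y, a, c) := rfl
lemma blk_mem {g h : M ≃ₗ[O] M} (hg : g ∈ FM.U) (hh : h ∈ FM.U) : blk g h ∈ FV.U := by
  rintro ⟨x, y, a, c⟩ ⟨x', y', a', c'⟩
  rw [blk_apply, blk_apply, FV_p, FV_p, FM.mem_U.1 hg, FM.mem_U.1 hh]

def swM : W ≃ₗ[O] W where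
  toFun v := (v.2.1, v.1, v.2.2)
  invFun v := (v.2.1, v.1, v.2.2)
  map_add' _ _ := rfl
  map_smul' _ _ := rfl
  left_inv _ := rfl
  right_inv _ := rfl
lemma swM_apply (x y : M) (a c : O) : swM (x, y, a, c) = (y, x, a, c) := rfl
lemma swM_mem : swM ∈ FV.U := by
  rintro ⟨x, y, a, c⟩ ⟨x', y', a', c'⟩
  rw [swM_apply, swM_apply, FV_p, FV_p]; ring

def swH : W ≃ₗ[O] W where
  toFun v := (v.1, v.2.1, - v.2.2.2, v.2.2.1)
  invFun v := (v.1, v.2.1, v.2.2.2, - v.2.2.1)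
  map_add' v w := by apply W_ext <;> simp; ring
  map_smul' v w := by apply W_ext <;> simp
  left_inv v := by apply W_ext <;> simp
  right_inv v := by apply W_ext <;> simp
lemma swH_apply (x y : M) (a c : O) : swH (x, y, a, c) = (x, y, -c, a) := rfl
lemma swH_mem : swH ∈ FV.U := by
  rintro ⟨x, y, a, c⟩ ⟨x', y', a', c'⟩
  rw [swH_apply, swH_apply, FV_p, FV_p, map_neg]; ring

def eV : W := (0, 0, 1, 0)
lemma p_eV (v : W) : FV.p v eV = - v.2.2.2 := by
  obtain ⟨x, y, a, c⟩ := v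
  rw [eV, FV_p, FM.zero_right, FM.zero_right]; simp

lemma T_ex (w w' : M) (c : O) (hc : c - conj c = FM.p w w + FM.p w' w') :
    ∃ g ∈ FV.U, ∀ x x' a d, g (x, x', a, d) =
      (x - d • w, x' - d • w', a + FM.p x w + FM.p x' w' - d * c, d) := by
  have he : FV.p eV eV = 0 := by rw [p_eV]; simp [eV]
  have hw : FV.p eV (w, w', 0, 0) = 0 := by
    rw [eV, FV_p, FM.zero_left, FM.zero_left]; simp
  have hc' : c - conj c = FV.p (w, w', 0, 0) (w, w', 0, 0) := by
    rw [FV_p, hc]; simp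
  refine ⟨FV.trn eV (w, w', 0, 0) c he hw hc', FV.trn_mem _ _ _ _ _ _, ?_⟩
  intro x x' a d
  rw [FV.trn_apply, p_eV, FV_p]
  apply W_ext
  · simp [eV]; module
  · simp [eV]; module
  · simp [eV]; ring
  · simp [eV]

lemma T_c (w w' : M) : ∃ c : O, c - conj c = FM.p w w + FM.p w' w' := by
  obtain ⟨k, -, hk⟩ := FM.exists_self w
  obtain ⟨k', -, hk'⟩ := FM.exists_self w'
  refine ⟨((-(k + k') : ℤ) : O) * ω, ?_⟩
  rw [int_of_sub_conj, hk, hk']; push_cast; ring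

lemma T_cm {w w' : M} {c : O} (h : c - conj c = FM.p w w + FM.p w' w') (m : ℤ) :
    (c + m) - conj (c + m) = FM.p w w + FM.p w' w' := by
  rw [← h, map_add, map_intCast]; ring

lemma cov_b (x : M) {d : O} (hd : d ≠ 0) : ∃ L : M, FM.B (x - d • L) (x - d • L) ≤ nm d ∧
    (FM.B (x - d • L) (x - d • L) = nm d → ∃ z : M, (2 : O) • (x - d • L) = d • z) := by
  have hN := nm_pos hd
  obtain ⟨L, h1, h2⟩ := cover hN (conj d • x)
  have e : conj d • x - ((nm d : ℤ) : O) • L = conj d • (x - d • L) := by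
    rw [← conj_mul', smul_sub, smul_smul]
  rw [e, FM.B_smul_smul, nm_conj] at h1 h2
  have hcd : conj d ≠ 0 := fun h => hd (by rw [← conj_conj d, h, map_zero])
  refine ⟨L, by nlinarith, fun h => ?_⟩
  obtain ⟨z, hz⟩ := h2 (by rw [h]; ring)
  refine ⟨z, smul_right_injective M hcd ?_⟩
  simp only
  rw [smul_comm, hz, ← conj_mul', smul_smul]

lemma reduce (x x' : M) (a : O) {d : O} (hd : d ≠ 0) : ∃ y y' : M, ∃ c : O,
    Eqv (x, x', a, d) (y, y', c, d) ∧ FM.B y y ≤ nm d ∧ FM.B y' y' ≤ nm d ∧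
    (FM.B y y = nm d → ∃ z : M, (2 : O) • y = d • z) ∧
    (FM.B y' y' = nm d → ∃ z : M, (2 : O) • y' = d • z) ∧
    2 * re (c * conj d) + im (c * conj d) ≤ nm d ∧
    - nm d ≤ 2 * re (c * conj d) + im (c * conj d) := by
  obtain ⟨L, h1, h2⟩ := cov_b x hd
  obtain ⟨L', h1', h2'⟩ := cov_b x' hd
  obtain ⟨c, hc⟩ := T_c L L'
  have hN := nm_pos hd
  set a1 := a + FM.p x L + FM.p x' L' - d * c with ha1
  set t := 2 * re (a1 * conj d) + im (a1 * conj d) with ht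
  obtain ⟨m, hm1, hm2⟩ : ∃ m : ℤ, t - 2 * nm d * m ≤ nm d ∧ - nm d ≤ t - 2 * nm d * m := by
    refine ⟨(t + nm d) / (2 * nm d), ?_, ?_⟩
    · have := Int.lt_mul_ediv_self_add (x := t + nm d) (k := 2 * nm d) (by omega)
      linarith
    · have := Int.mul_ediv_self_le (x := t + nm d) (k := 2 * nm d) (by omega)
      linarith
  obtain ⟨g, hg, hgg⟩ := T_ex L L' (c + m) (T_cm hc m)
  refine ⟨_, _, _, ⟨g, hg, hgg x x' a d⟩, h1, h1', h2, h2', ?_⟩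
  have e : (a + FM.p x L + FM.p x' L' - d * (c + ↑m)) * conj d = a1 * conj d - ((nm d * m : ℤ) : O) := by
    push_cast
    rw [← mul_conj, ha1]; ring
  rw [e]
  simp only [re_sub, im_sub, re_intCast, im_intCast]
  constructor <;> linarith

lemma B_FV (x x' : M) (a d : O) : FV.B (x, x', a, d) (x, x', a, d) =
    FM.B x x + FM.B x' x' - 2 * im (a * conj d) := by
  simp only [Form.B, FV_p]; simp; ring
lemma nm_st (a d : O) : (2 * re (a * conj d) + im (a * conj d)) ^ 2 + 3 * im (a * conj d) ^ 2
    = 4 * (nm a * nm d) := by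
  rw [← nm_conj d, ← nm_mul, nm]; ring
lemma cert (x0 x1 x2 x3 x4 x5 x6 x7 x8 x9 y0 y1 y2 y3 y4 y5 y6 y7 y8 y9 : O) :
    FV.p ((x0, x1, x2, x3), (x4, x5, x6, x7), x8, x9) ((y0, y1, y2, y3), (y4, y5, y6, y7), y8, y9) =
    (-θ * (x0 * conj y0 + x1 * conj y1 + x2 * conj y2 + x3 * conj y3)
      + (x0 * conj y1 - x1 * conj y0) + (x1 * conj y2 - x2 * conj y1) + (x2 * conj y3 - x3 * conj y2)) +
    (-θ * (x4 * conj y4 + x5 * conj y5 + x6 * conj y6 + x7 * conj y7)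
      + (x4 * conj y5 - x5 * conj y4) + (x5 * conj y6 - x6 * conj y5) + (x6 * conj y7 - x7 * conj y6)) +
    (x8 * conj y9 - x9 * conj y8) := rfl

lemma step (ε : Bool) (r : W) {x y : W} (hr : FV.p r r = -θ) (k : O) (hk : FV.p x r = k)
    (h : x + ((if ε then -ω else 1 - ω) * k) • r = y) : Eqv x y := by
  refine ⟨FV.tr ε r hr, FV.tr_mem _ _ _, ?_⟩
  subst hk
  rw [← h]
  cases ε <;> rfl
lemma cI1 : Eqv ((E (1) (0), E (1) (0), E (0) (0), E (0) (0)), (E (1) (0), E (1) (0), E (0) (0), E (0) (0)), E (0) (2), E (2) (0))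
    ((E (1) (0), E (0) (0), E (-1) (1), E (0) (0)), (E (1) (0), E (1) (0), E (0) (0), E (0) (0)), E (-1) (2), E (2) (0)) :=
  step false ((E (0) (0), E (1) (-1), E (0) (-1), E (0) (0)), (E (0) (0), E (0) (0), E (0) (0), E (0) (0)), E (1) (-1), E (0) (0))
    (by simp only [cert]; apply O_ext <;> simp)
    (E (1) (-1)) (by simp only [cert]; apply O_ext <;> simp)
    (by apply W_ext <;> (try apply M_ext) <;> apply O_ext <;> simp)
lemma cI2 : Eqv ((E (1) (0), E (0) (0), E (-1) (1), E (0) (0)), (E (1) (0), E (1) (0), E (0) (0), E (0) (0)), E (-1) (2), E (2) (0))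
    ((E (1) (0), E (0) (0), E (-1) (1), E (0) (0)), (E (1) (0), E (-1) (0), E (0) (0), E (0) (0)), E (-1) (2), E (2) (0)) :=
  step true ((E (0) (0), E (0) (0), E (0) (0), E (0) (0)), (E (0) (0), E (1) (-1), E (0) (0), E (0) (0)), E (0) (0), E (0) (0))
    (by simp only [cert]; apply O_ext <;> simp)
    (E (2) (0)) (by simp only [cert]; apply O_ext <;> simp)
    (by apply W_ext <;> (try apply M_ext) <;> apply O_ext <;> simp)
lemma cI3 : Eqv ((E (1) (0), E (0) (0), E (-1) (1), E (0) (0)), (E (1) (0), E (-1) (0), E (0) (0), E (0) (0)), E (-1) (2), E (2) (0))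
    ((E (0) (0), E (0) (1), E (1) (0), E (0) (-1)), (E (0) (0), E (-1) (1), E (0) (0), E (0) (0)), E (0) (1), E (2) (-1)) :=
  step true ((E (1) (0), E (0) (-1), E (-2) (1), E (0) (1)), (E (1) (0), E (0) (-1), E (0) (0), E (0) (0)), E (-1) (1), E (0) (1))
    (by simp only [cert]; apply O_ext <;> simp)
    (E (1) (-1)) (by simp only [cert]; apply O_ext <;> simp)
    (by apply W_ext <;> (try apply M_ext) <;> apply O_ext <;> simp)
lemma cI4 : Eqv ((E (0) (0), E (0) (1), E (1) (0), E (0) (-1)), (E (0) (0), E (-1) (1), E (0) (0), E (0) (0)), E (0) (1), E (2) (-1))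
    ((E (0) (0), E (0) (0), E (0) (0), E (0) (0)), (E (0) (0), E (-1) (1), E (0) (0), E (0) (0)), E (0) (1), E (1) (-1)) :=
  step true ((E (0) (0), E (1) (0), E (1) (-1), E (-1) (0)), (E (0) (0), E (0) (0), E (0) (0), E (0) (0)), E (0) (0), E (1) (-1))
    (by simp only [cert]; apply O_ext <;> simp)
    (E (1) (0)) (by simp only [cert]; apply O_ext <;> simp)
    (by apply W_ext <;> (try apply M_ext) <;> apply O_ext <;> simp)
lemma cI5 : Eqv ((E (0) (0), E (0) (0), E (0) (0), E (0) (0)), (E (0) (0), E (-1) (1), E (0) (0), E (0) (0)), E (0) (1), E (1) (-1))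
    ((E (0) (0), E (0) (0), E (0) (0), E (0) (0)), (E (0) (0), E (0) (0), E (0) (0), E (0) (0)), E (1) (0), E (0) (0)) :=
  step true ((E (0) (0), E (0) (0), E (0) (0), E (0) (0)), (E (0) (0), E (0) (-1), E (0) (0), E (0) (0)), E (0) (-1), E (0) (1))
    (by simp only [cert]; apply O_ext <;> simp)
    (E (-1) (0)) (by simp only [cert]; apply O_ext <;> simp)
    (by apply W_ext <;> (try apply M_ext) <;> apply O_ext <;> simp)
lemma cS1 : Eqv ((E (1) (0), E (1) (0), E (0) (0), E (0) (0)), (E (0) (0), E (0) (0), E (0) (0), E (0) (0)), E (0) (0), E (0) (0))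
    ((E (1) (0), E (0) (0), E (0) (1), E (0) (0)), (E (0) (0), E (0) (0), E (0) (0), E (0) (0)), E (0) (0), E (0) (-1)) :=
  step true ((E (0) (0), E (0) (-1), E (-1) (1), E (0) (0)), (E (0) (0), E (0) (0), E (0) (0), E (0) (0)), E (0) (0), E (1) (-1))
    (by simp only [cert]; apply O_ext <;> simp)
    (E (0) (1)) (by simp only [cert]; apply O_ext <;> simp)
    (by apply W_ext <;> (try apply M_ext) <;> apply O_ext <;> simp)
lemma cS2 : Eqv ((E (1) (0), E (0) (0), E (0) (1), E (0) (0)), (E (0) (0), E (0) (0), E (0) (0), E (0) (0)), E (0) (0), E (0) (-1))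
    ((E (0) (0), E (0) (0), E (0) (1), E (0) (0)), (E (-1) (1), E (0) (2), E (2) (-1), E (0) (-1)), E (-1) (0), E (0) (0)) :=
  step true ((E (1) (-1), E (0) (0), E (0) (0), E (0) (0)), (E (0) (-1), E (-2) (0), E (-1) (2), E (1) (0)), E (1) (-1), E (-1) (0))
    (by simp only [cert]; apply O_ext <;> simp)
    (E (1) (0)) (by simp only [cert]; apply O_ext <;> simp)
    (by apply W_ext <;> (try apply M_ext) <;> apply O_ext <;> simp)
lemma E00 : E 0 0 = 0 := by apply O_ext <;> simp
lemma E10 : E 1 0 = 1 := by apply O_ext <;> simp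
lemma iso_cert : Eqv (R1 + R2, R1 + R2, 2 * ω, 2) eV := by
  have h := cI1.trans (cI2.trans (cI3.trans (cI4.trans cI5)))
  have e1 : (R1 + R2 : M) = (E 1 0, E 1 0, E 0 0, E 0 0) := by simp [R1, R2, E00, E10]
  have e2 : (2 * ω : O) = E 0 2 := by apply O_ext <;> simp
  have e3 : (2 : O) = E 2 0 := by apply O_ext <;> simp
  have e4 : eV = ((E 0 0, E 0 0, E 0 0, E 0 0), (E 0 0, E 0 0, E 0 0, E 0 0), E 1 0, E 0 0) := by
    simp [eV, E00, E10]; rfl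
  rw [e1, e2, e3, e4]
  exact h
lemma Eqv.B {u v : W} (h : Eqv u v) : FV.B v v = FV.B u u := by
  simp only [Form.B, h.p]

lemma six_reduce (n : ℕ) : ∀ (x x' : M) (a d : O), (nm d).toNat = n →
    FV.B (x, x', a, d) (x, x', a, d) = 4 →
    ∃ y y' c f, Eqv (x, x', a, d) (y, y', c, f) ∧ (f = 0 ∨ nm f = 1) := by
  induction n using Nat.strong_induction_on with
  | _ n ih =>
    intro x x' a d hn hv
    by_cases hd : d = 0
    · exact ⟨x, x', a, d, ⟨1, one_mem _, rfl⟩, Or.inl hd⟩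
    by_cases hd1 : nm d = 1
    · exact ⟨x, x', a, d, ⟨1, one_mem _, rfl⟩, Or.inr hd1⟩
    have hN := nm_pos hd
    have hd2 : nm d ≠ 2 := by
      intro h
      rw [nm] at h
      generalize re d = m at *
      generalize im d = k at *
      have h1 : m ≤ 2 := by nlinarith [sq_nonneg (m + 2 * k)]
      have h2 : -2 ≤ m := by nlinarith [sq_nonneg (m + 2 * k)]
      have h3 : k ≤ 2 := by nlinarith [sq_nonneg (k + 2 * m)]
      have h4 : -2 ≤ k := by nlinarith [sq_nonneg (k + 2 * m)]
      interval_cases m <;> interval_cases k <;> omega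
    obtain ⟨y, y', c, he, h1, h2, -, -, h3, h4⟩ := reduce x x' a hd
    have hB := he.B
    rw [hv, B_FV] at hB
    have hst := nm_st c d
    have p1 := FM_nonneg y
    have p2 := FM_nonneg y'
    set t := 2 * re (c * conj d) + im (c * conj d)
    have i1 : -2 ≤ im (c * conj d) := by omega
    have i2 : im (c * conj d) ≤ nm d - 2 := by omega
    have i3 : im (c * conj d) ^ 2 < nm d ^ 2 := by
      apply sq_lt_sq'  <;> omega
    have i4 : t ^ 2 ≤ nm d ^ 2 := sq_le_sq' h4 h3
    have i5 : nm c < nm d := by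
      by_contra hcon
      push Not at hcon
      have := mul_le_mul_of_nonneg_right hcon hN.le
      nlinarith
    have he2 : Eqv (x, x', a, d) (y, y', -d, c) := he.trans ⟨swH, swH_mem, swH_apply _ _ _ _⟩
    have p3 := nm_nonneg c
    obtain ⟨z, z', c', f, e, h⟩ := ih (nm c).toNat (by omega) y y' (-d) c rfl (by rw [he2.B, hv])
    exact ⟨z, z', c', f, he2.trans e, h⟩

lemma iso_stuck (x x' y y' : M) (a d : O) (hd : d ≠ 0) (hp : Prim (x, x', a, d))
    (h : (2 : O) • x = d • y) (h' : (2 : O) • x' = d • y') (hB : FM.B x x = nm d) (hB' : FM.B x' x' = nm d)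
    (hi : im (a * conj d) = nm d) (hr : re (a * conj d) = 0 ∨ re (a * conj d) = - nm d) :
    Eqv (x, x', a, d) eV := by
  have hN := nm_pos hd
  have hcd : conj d ≠ 0 := fun h => hd (by rw [← conj_conj d, h, map_zero])
  have t2 : (2 : O) ≠ 0 := fun h => by simpa using congrArg re h
  have B4 : ∀ x y : M, (2 : O) • x = d • y → FM.B x x = nm d → FM.B y y = 4 := by
    intro x y h hB
    have := FM.B_smul_smul d y
    rw [← h, FM.B_smul_smul, hB] at this
    apply mul_left_cancel₀ hN.ne'
    rw [← this]; simp [nm]; ring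
  have by4 := B4 x y h hB
  have by4' := B4 x' y' h' hB'
  -- d is divisible by two
  obtain ⟨f, hf⟩ : ∃ f, d = 2 * f := by
    by_cases hodd : nm d % 2 = 0
    · refine ⟨E (re d / 2) (im d / 2), ?_⟩
      have : re d % 2 = 0 ∧ im d % 2 = 0 := by
        rw [nm] at hodd
        generalize re d = m at *
        generalize im d = k at *
        rcases Int.emod_two_eq_zero_or_one m with e1 | e1 <;>
        rcases Int.emod_two_eq_zero_or_one k with e2 | e2 <;>
        simp [Int.add_emod, Int.mul_emod, pow_two, e1, e2] at hodd ⊢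
      apply O_ext <;> simp <;> omega
    · exfalso
      obtain ⟨k, hk⟩ : ∃ k, nm d = 2 * k + 1 := ⟨nm d / 2, by omega⟩
      have e : y = (2 : O) • (conj d • x - (k : O) • y) := by
        have e1 : ((nm d : ℤ) : O) • y = (2 : O) • conj d • x := by
          rw [← conj_mul', mul_smul, ← h, smul_comm]
        rw [hk] at e1
        push_cast at e1
        rw [smul_sub, ← e1]; module
      have := FM.B_smul_smul 2 (conj d • x - (k : O) • y)
      rw [← e, by4] at this
      obtain ⟨j, hj, -⟩ := FM.exists_self (conj d • x - (k : O) • y)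
      rw [hj] at this
      simp [nm] at this
      omega
  obtain ⟨u, hu, hau⟩ : ∃ u : O, (u = ω ∨ u = ω - 1) ∧ a = u * d := by
    rcases hr with hr | hr
    · refine ⟨ω, Or.inl rfl, mul_right_cancel₀ hcd ?_⟩
      rw [mul_assoc, mul_conj]
      apply O_ext <;> simp only [hr, hi] <;> simp
    · refine ⟨ω - 1, Or.inr rfl, mul_right_cancel₀ hcd ?_⟩
      rw [mul_assoc, mul_conj]
      apply O_ext <;> simp only [hr, hi] <;> simp
  have ex : x = f • y := by
    apply smul_right_injective M t2
    simp only
    rw [h, hf, mul_smul]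
  have ex' : x' = f • y' := by
    apply smul_right_injective M t2
    simp only
    rw [h', hf, mul_smul]
  have ev : (x, x', a, d) = f • ((y, y', 2 * u, 2) : W) := by
    apply W_ext
    · exact ex
    · exact ex'
    · simp [hau, hf]; ring
    · simp [hf]; ring
  have hfu := hp f ⟨_, ev⟩
  have hnf : nm (conj f) = 1 := by rw [nm_conj]; exact nm_of_isUnit hfu
  have s1 : Eqv (x, x', a, d) (y, y', 2 * u, 2) := by
    refine ⟨Form.sca _ hnf, FV.sca_mem _ hnf, ?_⟩
    rw [Form.sca_apply, ev, smul_smul, conj_mul', ← nm_conj, hnf]; simp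
  obtain ⟨g, hg, hgy⟩ := six_trans by4
  obtain ⟨g', hg', hgy'⟩ := six_trans by4'
  have s2 : Eqv (y, y', 2 * u, 2) (R1 + R2, R1 + R2, 2 * u, 2) :=
    ⟨blk g g', blk_mem hg hg', by rw [blk_apply, hgy, hgy']⟩
  refine s1.trans (s2.trans ?_)
  rcases hu with rfl | rfl
  · exact iso_cert
  · refine Eqv.trans ?_ iso_cert
    obtain ⟨g, hg, h⟩ := T_ex 0 0 (-1) (by simp [FM.zero_left])
    refine ⟨g, hg, ?_⟩
    rw [h, FM.zero_right]
    apply W_ext <;> simp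
    ring

lemma iso_reduce (n : ℕ) : ∀ (x x' : M) (a d : O), (nm d).toNat = n →
    Prim (x, x', a, d) → FV.B (x, x', a, d) (x, x', a, d) = 0 → Eqv (x, x', a, d) eV := by
  induction n using Nat.strong_induction_on with
  | _ n ih =>
    intro x x' a d hn hp hv
    by_cases hd : d = 0
    · subst hd
      rw [B_FV] at hv
      simp at hv
      have p1 := FM_nonneg x
      have p2 := FM_nonneg x'
      have e1 := FM_eq_zero (x := x) (by omega)
      have e2 := FM_eq_zero (x := x') (by omega)
      subst e1 e2
      have hau : IsUnit a := hp a ⟨eV, by apply W_ext <;> simp [eV]⟩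
      have hna : nm (conj a) = 1 := by rw [nm_conj]; exact nm_of_isUnit hau
      refine ⟨Form.sca _ hna, FV.sca_mem _ hna, ?_⟩
      rw [Form.sca_apply]
      apply W_ext <;> simp [eV]
      rw [conj_mul', ← nm_conj, hna]; simp
    have hN := nm_pos hd
    obtain ⟨y, y', c, he, h1, h2, q1, q2, h3, h4⟩ := reduce x x' a hd
    have hB := he.B
    rw [hv, B_FV] at hB
    have hst := nm_st c d
    have p1 := FM_nonneg y
    have p2 := FM_nonneg y'
    have p3 := nm_nonneg c
    by_cases hlt : nm c < nm d
    · have he2 : Eqv (x, x', a, d) (y, y', -d, c) := he.trans ⟨swH, swH_mem, swH_apply _ _ _ _⟩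
      exact he2.trans (ih (nm c).toNat (by omega) y y' (-d) c rfl (he2.prim hp) (by rw [he2.B, hv]))
    · push Not at hlt
      have i1 : 0 ≤ im (c * conj d) := by omega
      have i2 : im (c * conj d) ≤ nm d := by omega
      have i0 := mul_le_mul_of_nonneg_right hlt hN.le
      set t := 2 * re (c * conj d) + im (c * conj d) with ht
      have i3 : im (c * conj d) ^ 2 ≤ nm d ^ 2 := by
        apply sq_le_sq'  <;> omega
      have i4 : t ^ 2 ≤ nm d ^ 2 := sq_le_sq' h4 h3
      have i5 : im (c * conj d) ^ 2 = nm d ^ 2 := by nlinarith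
      have i6 : t ^ 2 = nm d ^ 2 := by nlinarith
      have i7 : im (c * conj d) = nm d := by
        rcases sq_eq_sq_iff_eq_or_eq_neg.1 i5 with h | h <;> omega
      have i8 := sq_eq_sq_iff_eq_or_eq_neg.1 i6
      obtain ⟨z, hz⟩ := q1 (by omega)
      obtain ⟨z', hz'⟩ := q2 (by omega)
      exact he.trans (iso_stuck y y' z z' c d hd (he.prim hp) hz hz' (by omega) (by omega) i7 (by omega))

lemma iso_eqv {v : W} (hp : Prim v) (h : FV.B v v = 0) : Eqv v eV :=
  iso_reduce _ v.1 v.2.1 v.2.2.1 v.2.2.2 rfl hp h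
def ZA : W := (R1 + R2, 0, 0, 0)
def ZB : W := (R1, R1, 0, 0)

lemma B12 : FM.B (R1 + R2) (R1 + R2) = 4 := by
  simp [Form.B, FM_p, pM, R1, R2]

lemma kill (x x' w : M) (a : O) (h : FM.p x w = 1) :
    ∃ g ∈ FV.U, g eV = eV ∧ g (x, x', a, 0) = (x, x', 0, 0) := by
  obtain ⟨c, hc⟩ := T_c ((- conj a) • w) 0
  obtain ⟨g, hg, hh⟩ := T_ex _ _ c hc
  refine ⟨g, hg, ?_, ?_⟩
  · rw [eV, hh, FM.zero_left, FM.zero_left]; simp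
  · rw [hh, FM.smul_right, h, FM.zero_right]; simp

lemma comp_e {x y z : W} (h : ∃ g ∈ FV.U, g eV = eV ∧ g x = y) (h' : ∃ g ∈ FV.U, g eV = eV ∧ g y = z) :
    ∃ g ∈ FV.U, g eV = eV ∧ g x = z := by
  obtain ⟨g, hg, h1, rfl⟩ := h
  obtain ⟨g', hg', h2, rfl⟩ := h'
  exact ⟨g' * g, mul_mem hg' hg, by rw [LinearEquiv.mul_apply, h1, h2], rfl⟩

lemma blk_e (g h : M ≃ₗ[O] M) : blk g h eV = eV := by rw [eV, blk_apply]; simp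

lemma perp_A (x : M) (a : O) (h : FM.B x x = 4) :
    ∃ g ∈ FV.U, g eV = eV ∧ g (x, 0, a, 0) = ZA := by
  obtain ⟨g, hg, h1⟩ := six_trans h
  have s : ∃ g ∈ FV.U, g eV = eV ∧ g (x, 0, a, 0) = (R1 + R2, 0, a, 0) :=
    ⟨blk g 1, blk_mem hg (one_mem _), blk_e _ _, by rw [blk_apply, h1]; simp⟩
  exact comp_e s (kill _ _ R3 a (by simp [FM_p, pM, R1, R2, R3]))

lemma perp_B (x x' : M) (a : O) (h : FM.B x x = 2) (h' : FM.B x' x' = 2) :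
    ∃ g ∈ FV.U, g eV = eV ∧ g (x, x', a, 0) = ZB := by
  obtain ⟨g, hg, h1⟩ := root_trans (root_p h)
  obtain ⟨g', hg', h1'⟩ := root_trans (root_p h')
  have s : ∃ g ∈ FV.U, g eV = eV ∧ g (x, x', a, 0) = (R1, R1, a, 0) :=
    ⟨blk g g', blk_mem hg hg', blk_e _ _, by rw [blk_apply, h1, h1']⟩
  exact comp_e s (kill _ _ R2 a (by simp [FM_p, pM, R1, R2]))

lemma perp_e (x x' : M) (a : O) (h : FV.B (x, x', a, 0) (x, x', a, 0) = 4) :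
    (∃ g ∈ FV.U, g eV = eV ∧ g (x, x', a, 0) = ZA) ∨
    (∃ g ∈ FV.U, g eV = eV ∧ g (x, x', a, 0) = ZB) := by
  rw [B_FV] at h
  simp at h
  obtain ⟨k, hk, -⟩ := FM.exists_self x
  obtain ⟨k', hk', -⟩ := FM.exists_self x'
  have p1 := FM_nonneg x
  have p2 := FM_nonneg x'
  by_cases h1 : FM.B x x = 0
  · left
    have := FM_eq_zero h1
    subst this
    have s : ∃ g ∈ FV.U, g eV = eV ∧ g (0, x', a, 0) = (x', 0, a, 0) :=
      ⟨swM, swM_mem, rfl, rfl⟩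
    exact comp_e s (perp_A _ _ (by omega))
  by_cases h2 : FM.B x x = 4
  · left
    have := FM_eq_zero (x := x') (by omega)
    subst this
    exact perp_A _ _ h2
  · right
    exact perp_B _ _ _ (by omega) (by omega)

lemma pair_class {z n : W} (hz : FV.B z z = 4) (hp : Prim n) (hn : FV.B n n = 0) (hzn : FV.p z n = 0) :
    (∃ g ∈ FV.U, g z = ZA ∧ g n = eV) ∨ (∃ g ∈ FV.U, g z = ZB ∧ g n = eV) := by
  obtain ⟨g, hg, h⟩ := iso_eqv hp hn
  have h1 : FV.p (g z) eV = 0 := by rw [← h, FV.mem_U.1 hg, hzn]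
  rw [p_eV, neg_eq_zero] at h1
  have h2 : g z = ((g z).1, (g z).2.1, (g z).2.2.1, 0) := by
    apply W_ext <;> simp [h1]
  have h3 : FV.B (g z) (g z) = 4 := by rw [FV.B_U hg, hz]
  rw [h2] at h3
  rcases perp_e _ _ _ h3 with ⟨g', hg', e1, e2⟩ | ⟨g', hg', e1, e2⟩
  · rw [← h2] at e2
    exact Or.inl ⟨g' * g, mul_mem hg' hg, e2, by rw [LinearEquiv.mul_apply, h, e1]⟩
  · rw [← h2] at e2
    exact Or.inr ⟨g' * g, mul_mem hg' hg, e2, by rw [LinearEquiv.mul_apply, h, e1]⟩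

lemma R1_ne : R1 ≠ 0 := fun h => by simpa [R1] using congrArg Prod.fst h

lemma excl {g : W ≃ₗ[O] W} (hg : g ∈ FV.U) (he : g eV = eV) (h : g ZA = ZB) : False := by
  have hsplit : ZA = (R1, 0, 0, 0) + (R2, 0, 0, 0) := by apply W_ext <;> simp [ZA]
  have key : ∀ R : M, FM.B R R = 2 → (g (R, 0, 0, 0)).2.2.2 = 0 ∧
      ((g (R, 0, 0, 0)).1 = 0 ∨ (g (R, 0, 0, 0)).2.1 = 0) := by
    intro R hR
    have h1 : FV.p (g (R, 0, 0, 0)) eV = 0 := by rw [← he, FV.mem_U.1 hg, p_eV]; simp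
    rw [p_eV, neg_eq_zero] at h1
    refine ⟨h1, ?_⟩
    have h3 : FV.B (g (R, 0, 0, 0)) (g (R, 0, 0, 0)) = 2 := by
      rw [FV.B_U hg, B_FV, hR, Form.B, FM.zero_left]; simp
    generalize g (R, 0, 0, 0) = r at h1 h3 ⊢
    obtain ⟨x, x', a, d⟩ := r
    simp only at h1
    subst h1
    rw [B_FV] at h3
    simp at h3
    obtain ⟨k, hk, -⟩ := FM.exists_self x
    obtain ⟨k', hk', -⟩ := FM.exists_self x'
    have p1 := FM_nonneg x
    have p2 := FM_nonneg x'
    by_cases h1 : FM.B x x = 0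
    · left; exact FM_eq_zero h1
    · right; exact FM_eq_zero (x := x') (by omega)
  obtain ⟨d1, q1⟩ := key R1 (p_root R1_root)
  obtain ⟨d2, q2⟩ := key R2 (p_root R2_root)
  have hp : FV.p (g (R1, 0, 0, 0)) (g (R2, 0, 0, 0)) = 1 := by
    rw [FV.mem_U.1 hg, FV_p, FM.zero_left]; simp [FM_p, pM, R1, R2]
  rw [hsplit, map_add] at h
  clear key
  generalize g (R1, 0, 0, 0) = r at *
  generalize g (R2, 0, 0, 0) = s at *
  obtain ⟨x, x', a, d⟩ := r
  obtain ⟨y, y', c, f⟩ := s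
  have e1 : x + y = R1 := congrArg Prod.fst h
  have e2 : x' + y' = R1 := congrArg (fun v => v.2.1) h
  simp only at d1 d2 q1 q2
  subst d1 d2
  rw [FV_p] at hp
  simp at hp
  rcases q1 with rfl | rfl <;> rcases q2 with rfl | rfl
  · exact R1_ne (by rw [← e1]; simp)
  · rw [FM.zero_left, FM.zero_right] at hp; simp at hp
  · rw [FM.zero_left, FM.zero_right] at hp; simp at hp
  · exact R1_ne (by rw [← e2]; simp)

lemma Prim_eV : Prim eV := by
  rintro a ⟨y, hy⟩
  have : (1 : O) = a * y.2.2.1 := congrArg (fun v : W => v.2.2.1) hy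
  exact IsUnit.of_mul_eq_one _ this.symm

lemma p_of_B {v : W} {k : ℤ} (h : FV.B v v = 2 * k) : FV.p v v = -((k : O) * θ) := FV.self_of_B h

lemma part1 {z : W} (hz : FV.B z z = 4) : ∃ n, Prim n ∧ FV.p n n = 0 ∧ FV.p z n = 0 := by
  suffices H : ∃ v, Eqv z v ∧ ∃ n, Prim n ∧ FV.p n n = 0 ∧ FV.p v n = 0 by
    obtain ⟨v, ⟨g, hg, rfl⟩, n, h1, h2, h3⟩ := H
    have he : Eqv n (g.symm n) := ⟨g⁻¹, inv_mem hg, rfl⟩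
    refine ⟨g.symm n, he.prim h1, by rw [he.p, h2], ?_⟩
    rw [← FV.mem_U.1 hg, g.apply_symm_apply, h3]
  obtain ⟨x, x', a, d, he, hd⟩ := six_reduce _ z.1 z.2.1 z.2.2.1 z.2.2.2 rfl hz
  have he : Eqv z (x, x', a, d) := he
  rcases hd with rfl | hd
  · exact ⟨_, he, eV, Prim_eV, by rw [p_eV]; simp [eV], by rw [p_eV]; simp⟩
  · obtain ⟨c, hc⟩ := T_c (conj d • x) (conj d • x')
    obtain ⟨g, hg, hh⟩ := T_ex _ _ c hc
    have hdd : d * conj d = 1 := by rw [mul_conj, hd]; simp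
    have h1 := hh x x' a d
    simp only [smul_smul, hdd, one_smul, sub_self] at h1
    generalize a + FM.p x (conj d • x) + FM.p x' (conj d • x') - d * c = a1 at h1
    have he2 : Eqv z (0, 0, a1, d) := he.trans ⟨g, hg, h1⟩
    have h2 : FV.p (0, 0, a1, d) (0, 0, a1, d) = -(2 * θ) := by
      have := p_of_B (v := (0, 0, a1, d)) (k := 2) (by rw [he2.B, hz]; norm_num)
      simpa using this
    rw [FV_p, FM.zero_left, zero_add, zero_add] at h2
    refine ⟨_, he2, (R1 + R2, 0, d * conj a1, 1), ?_, ?_, ?_⟩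
    · rintro k ⟨y, hy⟩
      have : (1 : O) = k * y.2.2.2 := congrArg (fun v : W => v.2.2.2) hy
      exact IsUnit.of_mul_eq_one _ this.symm
    · have h3 : FM.p (R1 + R2) (R1 + R2) = -(2 * θ) := by
        have := FM.self_of_B (x := R1 + R2) (k := 2) (by rw [B12]; norm_num)
        simpa using this
      rw [FV_p, FM.zero_left, h3]
      simp
      linear_combination - h2
    · rw [FV_p, FM.zero_left, FM.zero_left]
      simp
      linear_combination -a1 * hdd

lemma ZA_ZB : Eqv ZA ZB := by
  have h := cS1.trans cS2
  have e : ZA = ((E 1 0, E 1 0, E 0 0, E 0 0), (E 0 0, E 0 0, E 0 0, E 0 0), E 0 0, E 0 0) := by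
    simp [ZA, R1, R2, E00, E10]; rfl
  rw [← e] at h
  refine h.trans ?_
  rw [E00]
  obtain ⟨g, hg, -, h2⟩ := perp_B (0, 0, E 0 1, 0) (E (-1) 1, E 0 2, E 2 (-1), E 0 (-1)) (E (-1) 0)
    (by simp [Form.B, FM_p, pM]) (by simp [Form.B, FM_p, pM])
  exact ⟨g, hg, h2⟩

lemma part2 {z : W} (hz : FV.B z z = 4) : Eqv z ZB := by
  obtain ⟨n, h1, h2, h3⟩ := part1 hz
  rcases pair_class hz h1 (by simp [Form.B, h2]) h3 with ⟨g, hg, h, -⟩ | ⟨g, hg, h, -⟩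
  · exact Eqv.trans ⟨g, hg, h⟩ ZA_ZB
  · exact ⟨g, hg, h⟩

-- transport
def φ : (Fin 10 → O) ≃ₗ[O] W where
  toFun v := ((v 0, v 1, v 2, v 3), (v 4, v 5, v 6, v 7), v 8, v 9)
  invFun w := ![w.1.1, w.1.2.1, w.1.2.2.1, w.1.2.2.2, w.2.1.1, w.2.1.2.1, w.2.1.2.2.1, w.2.1.2.2.2,
    w.2.2.1, w.2.2.2]
  map_add' _ _ := rfl
  map_smul' _ _ := rfl
  left_inv v := by ext i; fin_cases i <;> rfl
  right_inv _ := rfl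

lemma psi_φ (x y : Fin 10 → O) : psi10 x y = θ * FV.p (φ x) (φ y) := by
  have hφ : ∀ v, φ v = ((v 0, v 1, v 2, v 3), (v 4, v 5, v 6, v 7), v 8, v 9) := fun _ => rfl
  rw [hφ, hφ, cert]
  have h3 : (3 : O) = - (θ * θ) := by rw [θ_mul]; ring
  simp only [psi10, Fin.sum_univ_succ, Fin.sum_univ_zero]
  simp [gram10, conj_θ, h3, Fin.ext_iff]
  ring
lemma B_of_psi6 {z : Fin 10 → O} (h : psi10 z z = 6) : FV.B (φ z) (φ z) = 4 := by
  have e : FV.p (φ z) (φ z) = -(((2 : ℤ) : O) * θ) := by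
    apply mul_left_cancel₀ θ_ne
    rw [← psi_φ, h]; push_cast; linear_combination 2 * θ_mul
  have := FV.B_of_self e
  omega
lemma p_of_psi0 {z n : Fin 10 → O} (h : psi10 z n = 0) : FV.p (φ z) (φ n) = 0 := by
  rw [psi_φ] at h
  exact (mul_eq_zero.1 h).resolve_left θ_ne
lemma prim_φ {n : Fin 10 → O} : IsPrimVec n ↔ Prim (φ n) := by
  constructor
  · rintro h a ⟨y, hy⟩
    refine h a ⟨φ.symm y, ?_⟩
    rw [← map_smul, ← hy, φ.symm_apply_apply]
  · rintro h a ⟨y, hy⟩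
    exact h a ⟨φ y, by rw [hy, map_smul]⟩
def pull (g : W ≃ₗ[O] W) : (Fin 10 → O) ≃ₗ[O] (Fin 10 → O) := φ.trans (g.trans φ.symm)
lemma φ_pull (g : W ≃ₗ[O] W) (x : Fin 10 → O) : φ (pull g x) = g (φ x) := by simp [pull]
lemma pull_mem {g : W ≃ₗ[O] W} (hg : g ∈ FV.U) : IsUnitary10 (pull g) := by
  intro x y
  rw [psi_φ, psi_φ, φ_pull, φ_pull, FV.mem_U.1 hg]
def push' (g : (Fin 10 → O) ≃ₗ[O] (Fin 10 → O)) : W ≃ₗ[O] W := φ.symm.trans (g.trans φ)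
lemma push_φ (g : (Fin 10 → O) ≃ₗ[O] (Fin 10 → O)) (x : Fin 10 → O) : push' g (φ x) = φ (g x) := by
  simp [push']
lemma push_mem {g : (Fin 10 → O) ≃ₗ[O] (Fin 10 → O)} (hg : IsUnitary10 g) : push' g ∈ FV.U := by
  intro v w
  obtain ⟨x, rfl⟩ := φ.surjective v
  obtain ⟨y, rfl⟩ := φ.surjective w
  apply mul_left_cancel₀ θ_ne
  rw [push_φ, push_φ, ← psi_φ, ← psi_φ, hg]
lemma φ_e : φ (b 8) = eV := by
  have : ∀ v, φ v = ((v 0, v 1, v 2, v 3), (v 4, v 5, v 6, v 7), v 8, v 9) := fun _ => rfl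
  rw [this]; simp [b, eV]
lemma φ_A : φ (b 0 + b 1) = ZA := by
  have : ∀ v, φ v = ((v 0, v 1, v 2, v 3), (v 4, v 5, v 6, v 7), v 8, v 9) := fun _ => rfl
  rw [this]; simp [b, ZA, R1, R2]
lemma φ_B : φ (b 0 + b 4) = ZB := by
  have : ∀ v, φ v = ((v 0, v 1, v 2, v 3), (v 4, v 5, v 6, v 7), v 8, v 9) := fun _ => rfl
  rw [this]; simp [b, ZB, R1]
lemma pull_eq {g : W ≃ₗ[O] W} {x y : Fin 10 → O} (h : g (φ x) = φ y) : pull g x = y := by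
  apply φ.injective; rw [φ_pull, h]

theorem main :
    (∀ z : Fin 10 → O, psi10 z z = 6 →
      ∃ n : Fin 10 → O, IsPrimVec n ∧ psi10 n n = 0 ∧ psi10 z n = 0) ∧
    (∀ z z' : Fin 10 → O, psi10 z z = 6 → psi10 z' z' = 6 →
      ∃ g : (Fin 10 → O) ≃ₗ[O] (Fin 10 → O), IsUnitary10 g ∧ g z = z') ∧
    (∀ z n : Fin 10 → O,
      psi10 z z = 6 → IsPrimVec n → psi10 n n = 0 → psi10 z n = 0 →
      Xor'
        (∃ g : (Fin 10 → O) ≃ₗ[O] (Fin 10 → O),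
          IsUnitary10 g ∧ g z = b 0 + b 1 ∧ g n = b 8)
        (∃ g : (Fin 10 → O) ≃ₗ[O] (Fin 10 → O),
          IsUnitary10 g ∧ g z = b 0 + b 4 ∧ g n = b 8)) := by
  refine ⟨?_, ?_, ?_⟩
  · intro z hz
    obtain ⟨n, h1, h2, h3⟩ := part1 (B_of_psi6 hz)
    obtain ⟨n, rfl⟩ := φ.surjective n
    exact ⟨n, prim_φ.2 h1, by rw [psi_φ, h2, mul_zero], by rw [psi_φ, h3, mul_zero]⟩
  · intro z z' hz hz'
    obtain ⟨g, hg, h⟩ := (part2 (B_of_psi6 hz)).trans (part2 (B_of_psi6 hz')).symm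
    exact ⟨pull g, pull_mem hg, pull_eq h⟩
  · intro z n hz hp hn hzn
    have hx : ¬ ((∃ g : (Fin 10 → O) ≃ₗ[O] (Fin 10 → O),
          IsUnitary10 g ∧ g z = b 0 + b 1 ∧ g n = b 8) ∧
        (∃ g : (Fin 10 → O) ≃ₗ[O] (Fin 10 → O),
          IsUnitary10 g ∧ g z = b 0 + b 4 ∧ g n = b 8)) := by
      rintro ⟨⟨g, hg, h1, h2⟩, ⟨g', hg', h1', h2'⟩⟩
      have m1 := push_mem hg
      have m2 := push_mem hg'
      have z1 : push' g (φ z) = ZA := by rw [push_φ, h1, φ_A]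
      have n1 : push' g (φ n) = eV := by rw [push_φ, h2, φ_e]
      have z2 : push' g' (φ z) = ZB := by rw [push_φ, h1', φ_B]
      have n2 : push' g' (φ n) = eV := by rw [push_φ, h2', φ_e]
      refine excl (g := push' g' * (push' g)⁻¹) (mul_mem m2 (inv_mem m1)) ?_ ?_
      · rw [← n1, LinearEquiv.mul_apply, n1, ← n2]
        congr 1
        rw [n2, ← n1]
        exact (push' g).symm_apply_apply _
      · rw [← z1, LinearEquiv.mul_apply, ← z2]
        congr 1
        exact (push' g).symm_apply_apply _
    rcases pair_class (B_of_psi6 hz) (prim_φ.1 hp) (by simp [Form.B, p_of_psi0 hn]) (p_of_psi0 hzn)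
      with ⟨g, hg, h1, h2⟩ | ⟨g, hg, h1, h2⟩
    · have h : ∃ g : (Fin 10 → O) ≃ₗ[O] (Fin 10 → O),
          IsUnitary10 g ∧ g z = b 0 + b 1 ∧ g n = b 8 :=
        ⟨pull g, pull_mem hg, pull_eq (by rw [h1, φ_A]), pull_eq (by rw [h2, φ_e])⟩
      exact Or.inl ⟨h, fun h' => hx ⟨h, h'⟩⟩
    · have h : ∃ g : (Fin 10 → O) ≃ₗ[O] (Fin 10 → O),
          IsUnitary10 g ∧ g z = b 0 + b 4 ∧ g n = b 8 :=
        ⟨pull g, pull_mem hg, pull_eq (by rw [h1, φ_B]), pull_eq (by rw [h2, φ_e])⟩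
      exact Or.inr ⟨h, fun h' => hx ⟨h', h⟩⟩
end S8

/-- Every 6-vector of `Λ` is perpendicular to some primitive isotropic
vector, and `U(Λ)` acts transitively on the 6-vectors.  On the pairs `(z, n)` of a
6-vector `z` and a primitive isotropic vector `n` with `ψ(z,n) = 0` there are exactly
two `U(Λ)`-orbits: every such pair is equivalent to exactly one of `(r₁′ + r₂′, e)`
(type `(θ)`) and `(r₁′ + r₁″, e)` (type `(0)`). -/
theorem statement8 :
    (∀ z : Fin 10 → O, psi10 z z = 6 →
      ∃ n : Fin 10 → O, IsPrimVec n ∧ psi10 n n = 0 ∧ psi10 z n = 0) ∧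
    (∀ z z' : Fin 10 → O, psi10 z z = 6 → psi10 z' z' = 6 →
      ∃ g : (Fin 10 → O) ≃ₗ[O] (Fin 10 → O), IsUnitary10 g ∧ g z = z') ∧
    (∀ z n : Fin 10 → O,
      psi10 z z = 6 → IsPrimVec n → psi10 n n = 0 → psi10 z n = 0 →
      Xor'
        (∃ g : (Fin 10 → O) ≃ₗ[O] (Fin 10 → O),
          IsUnitary10 g ∧ g z = b 0 + b 1 ∧ g n = b 8)
        (∃ g : (Fin 10 → O) ≃ₗ[O] (Fin 10 → O),
          IsUnitary10 g ∧ g z = b 0 + b 4 ∧ g n = b 8)) := by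
  exact S8.main

end
end
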